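/- Let N ∈ ℕ with N ≥ 2, p ∈ (2,∞), κ ∈ (0,1), and s > 0. Then Q_κ is bounded on H^s(ℝ^N) \ {0} (i.e. sup{ Q_κ(u) : u ∈ H^s(ℝ^N) \ {0} } < ∞) if and only if κ ≥ 1/2 and (N/s)(1/2 - 1/p) ≤ 1 - κ ≤ ((N+1)/2)(1/2 - 1/p). -/

import Mathlib

open MeasureTheory Filter Topology SchwartzMap

noncomputable section

abbrev Esp (N : ℕ) := EuclideanSpace ℝ (Fin N)

/-- An element of the Sobolev space `H^s(ℝ^N, ℂ)`: an `L²` function `u` together with (a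
representative of) its distributional Fourier transform `hat`, satisfying
`(1+|ξ|²)^{s/2}·hat ∈ L²`. The relation between `u` and `hat` is expressed by duality
against Schwartz functions (the multiplication formula `∫ u · 𝓕φ = ∫ û · φ`). -/
structure Hs (N : ℕ) (s : ℝ) where
  u : Esp N → ℂ
  hat : Esp N → ℂ
  u_mem : MemLp u 2 (volume : Measure (Esp N))
  hat_mem : MemLp (fun ξ => (((1 + ‖ξ‖ ^ 2) ^ (s / 2) : ℝ) : ℂ) * hat ξ) 2
    (volume : Measure (Esp N))
  fourier_spec : ∀ φ : SchwartzMap (Esp N) ℂ,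
    ∫ x, u x * (FourierTransform.fourierCLE ℂ (SchwartzMap (Esp N) ℂ) φ) x = ∫ ξ, hat ξ * φ ξ

/-- `u` does not vanish almost everywhere. -/
def Hs.Nontriv {N : ℕ} {s : ℝ} (U : Hs N s) : Prop :=
  ¬ (U.u =ᵐ[(volume : Measure (Esp N))] 0)

/-- `‖(|D|^s - 1) u‖_{L²}`: by Plancherel this is the `L²` norm of `(|ξ|^s - 1)·û`. -/
def dNorm {N : ℕ} {s : ℝ} (U : Hs N s) : ENNReal :=
  eLpNorm (fun ξ => ((‖ξ‖ ^ s - 1 : ℝ) : ℂ) * U.hat ξ) 2 (volume : Measure (Esp N))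

/-- The quotient `Q_κ(u) = ‖u‖_{L^p} / (‖u‖_{L²}^κ ‖(|D|^s - 1)u‖_{L²}^{1-κ})`,
computed in `[0,∞]`. -/
def Qquot {N : ℕ} {s : ℝ} (p κ : ℝ) (U : Hs N s) : ENNReal :=
  eLpNorm U.u (ENNReal.ofReal p) (volume : Measure (Esp N)) /
    (eLpNorm U.u 2 (volume : Measure (Esp N)) ^ κ * dNorm U ^ (1 - κ))

/-! *Sufficiency.* Split the frequencies of `u` at a fixed radius. Above it `|ξ|^s` is comparable to
`|ξ|^s - 1`, and the Sobolev inequality interpolated with `L²` suffices. Below it `||ξ|^s - 1|` is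
comparable to `||ξ|² - 1|`, and it suffices to interpolate three bounds on functions with bounded
frequencies: the trivial `L²` bound, the `L^∞` bound `‖v‖_∞² ≲ ‖(Δ + 1)v‖₂ ‖v‖₂`, which holds
because thin shells about the unit sphere have measure proportional to their width, and the same
bound at the Stein–Tomas exponent `p = 2(N + 1)/(N - 1)`.

The last one is dual to `Im ⟨(-Δ - 1 + iε)⁻¹ f, f⟩ ≲ ‖f‖²` up to sign, for the norm with the dual
exponent `2(N + 1)/(N + 3)` and uniformly in `ε`. The power `(-Δ - 1 + it)^{-(N+1)/2}` has a bounded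
kernel, because the Fourier transform of `exp (-w|x|)` is a multiple of
`(w² + 4π²|ξ|²)^{-(N+1)/2}`; integrating this power along `t > ε` recovers the resolvent, and
balancing the kernel bound for small `t` against an `L²` bound for large `t` yields a restricted
estimate. Feeding this estimate back as the `L²` bound improves it for pairs of functions of
different sizes, by enough to sum over pairs of dyadic level sets.

*Necessity.* Take `û` to be the indicator function of a set `S`. Then `|u|` is at least a multiple
of `|S|` on the set dual to `S`. Large cubes, boxes of width `δ` and length `√δ` tangent to the
unit sphere (Knapp's example), and spherical shells of width `δ` give the three conditions.
-/

/-! ### The Fourier transform on `L¹` and `L²` -/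

section Fourier
open scoped FourierTransform ComplexInnerProductSpace Convolution ComplexConjugate

variable {E : Type*} [NormedAddCommGroup E] [InnerProductSpace ℝ E] [FiniteDimensional ℝ E]
  [MeasurableSpace E] [BorelSpace E]

local notation "L²" => Lp ℂ 2 (volume : Measure E)

theorem integral_fourier_mul_eq_integral_mul_fourier {f g : E → ℂ} (hf : Integrable f)
    (hg : Integrable g) : ∫ ξ, 𝓕 f ξ * g ξ = ∫ x, f x * 𝓕 g x := by
  have h := VectorFourier.integral_fourierIntegral_smul_eq_flip (μ := (volume : Measure E))
    (ν := (volume : Measure E)) (L := innerₗ E) (e := Real.fourierChar)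
    Real.continuous_fourierChar continuous_inner hf hg
  simp only [flip_innerₗ] at h
  exact h

theorem norm_fourier_le_integral_norm (f : E → ℂ) (ξ : E) : ‖𝓕 f ξ‖ ≤ ∫ x, ‖f x‖ :=
  VectorFourier.norm_fourierIntegral_le_integral_norm _ _ _ f ξ

theorem norm_fourierInv_le_integral_norm (f : E → ℂ) (x : E) : ‖𝓕⁻ f x‖ ≤ ∫ ξ, ‖f ξ‖ := by
  rw [Real.fourierInv_eq_fourier_neg]
  exact norm_fourier_le_integral_norm f _

theorem continuous_fourier {f : E → ℂ} (hf : Integrable f) : Continuous (𝓕 f) :=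
  VectorFourier.fourierIntegral_continuous Real.continuous_fourierChar continuous_inner hf

theorem conj_fourier (g : E → ℂ) (ξ : E) : conj (𝓕 g ξ) = 𝓕 (fun y => conj (g (-y))) ξ := by
  rw [Real.fourier_eq', Real.fourier_eq', ← integral_conj, ← integral_neg_eq_self]
  congr 1 with y
  simp [← Complex.exp_conj, Complex.conj_ofNat]

theorem integral_norm_convolution_le {f g : E → ℂ} (hf : Integrable f) (hg : Integrable g) :
    ∫ x, ‖(f ⋆[ContinuousLinearMap.mul ℂ ℂ] g) x‖ ≤ (∫ x, ‖f x‖) * ∫ x, ‖g x‖ := by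
  have hconv := hf.norm.integrable_convolution (ContinuousLinearMap.mul ℝ ℝ) hg.norm
  refine (integral_mono (hf.integrable_convolution _ hg).norm hconv fun x => ?_).trans_eq
    (integral_convolution _ hf.norm hg.norm)
  simpa only [convolution_def, ContinuousLinearMap.mul_apply', norm_mul] using
    norm_integral_le_integral_norm fun t => ContinuousLinearMap.mul ℂ ℂ (f t) (g (x - t))

/-- The product `𝓕 f · conj (𝓕 g)` is the Fourier transform of a convolution, so that its integral
against `M` is that of `𝓕 M` against an integrable function. -/
theorem norm_integral_mul_fourier_mul_conj_fourier_le {M f g : E → ℂ} {C : ℝ} (hM : Integrable M)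
    (hC : ∀ x, ‖𝓕 M x‖ ≤ C) (hf : Integrable f) (hg : Integrable g) :
    ‖∫ ξ, M ξ * 𝓕 f ξ * conj (𝓕 g ξ)‖ ≤ C * ((∫ x, ‖f x‖) * ∫ x, ‖g x‖) := by
  set h : E → ℂ := fun y => conj (g (-y)) with h_def
  have hh : Integrable h := Complex.conjLIE.integrable_comp_iff.2 hg.comp_neg
  have h_norm : ∫ x, ‖h x‖ = ∫ x, ‖g x‖ := by
    simpa only [h_def, RCLike.norm_conj] using integral_neg_eq_self (fun x => ‖g x‖) volume
  have hconv := hf.integrable_convolution (ContinuousLinearMap.mul ℂ ℂ) hh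
  calc ‖∫ ξ, M ξ * 𝓕 f ξ * conj (𝓕 g ξ)‖
      = ‖∫ x, 𝓕 M x * (f ⋆[ContinuousLinearMap.mul ℂ ℂ] h) x‖ := by
        rw [integral_fourier_mul_eq_integral_mul_fourier hM hconv]
        congr 2 with ξ
        rw [Real.fourier_mul_convolution_eq hf hh, conj_fourier, mul_assoc]
    _ ≤ ∫ x, C * ‖(f ⋆[ContinuousLinearMap.mul ℂ ℂ] h) x‖ := by
        refine norm_integral_le_of_norm_le (hconv.norm.const_mul C) (ae_of_all _ fun x => ?_)
        rw [norm_mul]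
        exact mul_le_mul_of_nonneg_right (hC x) (norm_nonneg _)
    _ ≤ C * ((∫ x, ‖f x‖) * ∫ x, ‖g x‖) := by
        rw [integral_const_mul, ← h_norm]
        exact mul_le_mul_of_nonneg_left (integral_norm_convolution_le hf hh)
          ((norm_nonneg _).trans (hC 0))

theorem fourier_toLp_ae_eq_of_integral_mul_eq {u h : E → ℂ} (hu : MemLp u 2)
    (hh : LocallyIntegrable h)
    (H : ∀ φ : 𝓢(E, ℂ), ∫ x, u x * (𝓕 φ) x = ∫ ξ, h ξ * φ ξ) :
    (𝓕 (hu.toLp u) : L²) =ᵐ[volume] h := by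
  refine ae_eq_of_integral_contDiff_smul_eq ((Lp.memLp _).locallyIntegrable (by norm_num)) hh
    fun g hg hg_supp => ?_
  have hg_supp' : HasCompactSupport fun x => (g x : ℂ) :=
    hg_supp.comp_left (g := fun t : ℝ => (t : ℂ)) Complex.ofReal_zero
  let φ : 𝓢(E, ℂ) := hg_supp'.toSchwartzMap (Complex.ofRealCLM.contDiff.comp hg)
  have h_dual := congrArg (fun T : 𝓢'(E, ℂ) => T φ)
    (Lp.fourier_toTemperedDistribution_eq (hu.toLp u))
  simp only [TemperedDistribution.fourier_apply, Lp.toTemperedDistribution_apply] at h_dual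
  have h_repr : ∫ x, (𝓕 φ) x • (hu.toLp u : E → ℂ) x = ∫ x, u x * (𝓕 φ) x := by
    refine integral_congr_ae ?_
    filter_upwards [hu.coeFn_toLp] with x hx
    rw [hx, smul_eq_mul, mul_comm]
  rw [h_repr, H] at h_dual
  calc ∫ x, g x • (𝓕 (hu.toLp u) : L²) x = ∫ x, φ x • (𝓕 (hu.toLp u) : L²) x := rfl
    _ = ∫ x, h x * φ x := h_dual.symm
    _ = ∫ x, g x • h x := by
        congr 1 with x
        rw [mul_comm]
        rfl

theorem fourier_toLp_ae_eq_fourier {f : E → ℂ} (hf : Integrable f) (hf2 : MemLp f 2) :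
    (𝓕 (hf2.toLp f) : L²) =ᵐ[volume] 𝓕 f :=
  fourier_toLp_ae_eq_of_integral_mul_eq hf2 (continuous_fourier hf).locallyIntegrable fun φ =>
    (integral_fourier_mul_eq_integral_mul_fourier hf φ.integrable).symm

theorem eLpNorm_two_fourier_Lp (v : L²) :
    eLpNorm (𝓕 v : L²) 2 volume = eLpNorm v 2 volume :=
  (ENNReal.toReal_eq_toReal_iff' (Lp.eLpNorm_ne_top _) (Lp.eLpNorm_ne_top _)).1 (by
    simpa only [Lp.norm_def] using Lp.norm_fourier_eq v)

theorem memLp_two_fourier {f : E → ℂ} (hf : Integrable f) (hf2 : MemLp f 2) : MemLp (𝓕 f) 2 :=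
  (memLp_congr_ae (fourier_toLp_ae_eq_fourier hf hf2)).1 (Lp.memLp _)

theorem eLpNorm_two_fourier {f : E → ℂ} (hf : Integrable f) (hf2 : MemLp f 2) :
    eLpNorm (𝓕 f) 2 volume = eLpNorm f 2 volume := by
  rw [← eLpNorm_congr_ae (fourier_toLp_ae_eq_fourier hf hf2), eLpNorm_two_fourier_Lp,
    eLpNorm_congr_ae hf2.coeFn_toLp]

theorem integral_mul_conj_eq_integral_fourier_mul_conj_fourier (v : L²) {f : E → ℂ}
    (hf : Integrable f) (hf2 : MemLp f 2) :
    ∫ x, v x * conj (f x) = ∫ ξ, (𝓕 v : L²) ξ * conj (𝓕 f ξ) := by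
  calc ∫ x, v x * conj (f x) = inner ℂ (hf2.toLp f) v := by
        rw [L2.inner_def]
        refine integral_congr_ae ?_
        filter_upwards [hf2.coeFn_toLp] with x hx
        rw [hx, RCLike.inner_apply]
    _ = inner ℂ (𝓕 (hf2.toLp f)) (𝓕 v) := (Lp.inner_fourier_eq _ _).symm
    _ = ∫ ξ, (𝓕 v : L²) ξ * conj (𝓕 f ξ) := by
        rw [L2.inner_def]
        refine integral_congr_ae ?_
        filter_upwards [fourier_toLp_ae_eq_fourier hf hf2] with ξ hξ
        rw [hξ, RCLike.inner_apply]

theorem integral_fourierInv_mul_fourier_schwartz {g : E → ℂ} (hg : Integrable g) (φ : 𝓢(E, ℂ)) :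
    ∫ x, 𝓕⁻ g x * (𝓕 φ) x = ∫ ξ, g ξ * φ ξ := by
  calc ∫ x, 𝓕⁻ g x * (𝓕 φ) x = ∫ x, 𝓕 g x * (𝓕⁻ φ) x := by
        rw [← integral_neg_eq_self]
        congr 1 with x
        rw [Real.fourierInv_eq_fourier_neg, neg_neg, SchwartzMap.fourierInv_coe,
          Real.fourierInv_eq_fourier_neg, SchwartzMap.fourier_coe]
    _ = ∫ ξ, g ξ * 𝓕 (𝓕⁻ φ : 𝓢(E, ℂ)) ξ :=
        integral_fourier_mul_eq_integral_mul_fourier hg (𝓕⁻ φ).integrable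
    _ = ∫ ξ, g ξ * φ ξ := by
        rw [FourierTransform.fourier_fourierInv_eq]

theorem memLp_two_fourierInv {g : E → ℂ} (hg : Integrable g) (hg2 : MemLp g 2) :
    MemLp (𝓕⁻ g) 2 := by
  rw [show 𝓕⁻ g = 𝓕 g ∘ Neg.neg from funext (Real.fourierInv_eq_fourier_neg g)]
  exact (memLp_two_fourier hg hg2).comp_measurePreserving (Measure.measurePreserving_neg volume)

theorem ae_eq_fourierInv {v : L²} {g : E → ℂ} (hg : Integrable g) (hg2 : MemLp g 2)
    (hv : (𝓕 v : L²) =ᵐ[volume] g) : v =ᵐ[volume] 𝓕⁻ g := by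
  have h_mem := memLp_two_fourierInv hg hg2
  have h_hat : (𝓕 v : L²) = 𝓕 (h_mem.toLp (𝓕⁻ g)) :=
    Lp.ext (hv.trans (fourier_toLp_ae_eq_of_integral_mul_eq h_mem hg.locallyIntegrable
      (integral_fourierInv_mul_fourier_schwartz hg)).symm)
  have h_eq : v = h_mem.toLp (𝓕⁻ g) := by
    simpa only [FourierTransform.fourierInv_fourier_eq] using
      congrArg (fun w : L² => (𝓕⁻ w : L²)) h_hat
  rw [h_eq]
  exact h_mem.coeFn_toLp

theorem eLpNorm_top_le_eLpNorm_one_fourier (v : L²) :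
    eLpNorm v ⊤ volume ≤ eLpNorm (𝓕 v : L²) 1 volume := by
  rcases eq_top_or_lt_top (eLpNorm (𝓕 v : L²) 1 volume) with h_top | h_top
  · exact le_top.trans_eq h_top.symm
  have h_int : Integrable (𝓕 v : L²) :=
    memLp_one_iff_integrable.1 ⟨Lp.aestronglyMeasurable _, h_top⟩
  rw [eLpNorm_congr_ae (ae_eq_fourierInv h_int (Lp.memLp _) (ae_eq_refl _)),
    eLpNorm_one_eq_lintegral_enorm, ← ofReal_integral_norm_eq_lintegral_enorm h_int]
  exact eLpNormEssSup_le_of_ae_bound (ae_of_all _ (norm_fourierInv_le_integral_norm _))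

theorem exists_add_eq_fourier_ae_eq_indicator (v : L²) {S : Set E} (hS : MeasurableSet S) :
    ∃ v₁ v₂ : L², v₁ + v₂ = v ∧ (𝓕 v₁ : L²) =ᵐ[volume] S.indicator (𝓕 v : L²) ∧
      (𝓕 v₂ : L²) =ᵐ[volume] Sᶜ.indicator (𝓕 v : L²) := by
  have h₁ : MemLp (S.indicator (𝓕 v : L²)) 2 := (Lp.memLp _).indicator hS
  have h₂ : MemLp (Sᶜ.indicator (𝓕 v : L²)) 2 := (Lp.memLp _).indicator hS.compl
  refine ⟨𝓕⁻ (h₁.toLp _), 𝓕⁻ (h₂.toLp _), ?_, ?_, ?_⟩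
  · have h_add : h₁.toLp _ + h₂.toLp _ = (𝓕 v : L²) := by
      rw [← MemLp.toLp_add, MemLp.toLp_congr _ (Lp.memLp _) (by rw [Set.indicator_self_add_compl]),
        Lp.toLp_coeFn]
    have h_map := map_add (FourierTransform.fourierCLE ℂ L²).symm (h₁.toLp _) (h₂.toLp _)
    rw [h_add] at h_map
    exact h_map.symm.trans ((FourierTransform.fourierCLE ℂ L²).symm_apply_apply v)
  · rw [FourierTransform.fourier_fourierInv_eq]
    exact h₁.coeFn_toLp
  · rw [FourierTransform.fourier_fourierInv_eq]
    exact h₂.coeFn_toLp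

end Fourier

/-! ### The Fourier transform of `exp (-w ‖x‖)` -/

section Glasser
open Set Real

variable {c : ℝ}

theorem injOn_sub_div_Ioi (hc : 0 < c) : InjOn (fun u : ℝ => u - c / u) (Ioi 0) :=
  StrictMonoOn.injOn fun _ hx _ _ hxy => sub_lt_sub hxy (div_lt_div_of_pos_left hc hx hxy)

theorem image_sub_div_Ioi (hc : 0 < c) : (fun u : ℝ => u - c / u) '' Ioi 0 = univ := by
  refine eq_univ_of_forall fun t => ?_
  have h_sq : √(t ^ 2 + 4 * c) ^ 2 = t ^ 2 + 4 * c := sq_sqrt (by positivity)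
  have h_abs : |t| < √(t ^ 2 + 4 * c) := by
    rw [← sqrt_sq_eq_abs]
    exact sqrt_lt_sqrt (sq_nonneg _) (by linarith)
  have h_pos : 0 < t + √(t ^ 2 + 4 * c) := by linarith [neg_abs_le t]
  refine ⟨(t + √(t ^ 2 + 4 * c)) / 2, half_pos h_pos, ?_⟩
  have := h_pos.ne'
  field_simp
  linear_combination h_sq

theorem hasDerivWithinAt_sub_div {u : ℝ} (hu : u ∈ Ioi 0) :
    HasDerivWithinAt (fun u : ℝ => u - c / u) (1 + c / u ^ 2) (Ioi 0) u := by
  convert! ((hasDerivAt_id u).sub ((hasDerivAt_inv (ne_of_gt hu)).const_mul c)).hasDerivWithinAt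
    using 1
  ring

theorem integrableOn_Ioi_one_add_div_mul_comp_sub_div {f : ℝ → ℝ} (hc : 0 < c)
    (hf : Integrable f) : IntegrableOn (fun u => (1 + c / u ^ 2) * f (u - c / u)) (Ioi 0) := by
  have h := (integrableOn_image_iff_integrableOn_abs_deriv_smul measurableSet_Ioi
    (fun u => hasDerivWithinAt_sub_div) (injOn_sub_div_Ioi hc) f).1 hf.integrableOn
  refine h.congr_fun (fun u _ => ?_) measurableSet_Ioi
  simp only
  rw [abs_of_nonneg (by positivity), smul_eq_mul]

theorem integral_Ioi_one_add_div_mul_comp_sub_div (hc : 0 < c) (f : ℝ → ℝ) :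
    ∫ u in Ioi 0, (1 + c / u ^ 2) * f (u - c / u) = ∫ x, f x := by
  have h := integral_image_eq_integral_abs_deriv_smul measurableSet_Ioi
    (fun u => hasDerivWithinAt_sub_div) (injOn_sub_div_Ioi hc) f
  rw [image_sub_div_Ioi hc, setIntegral_univ] at h
  rw [h]
  refine setIntegral_congr_fun measurableSet_Ioi fun u _ => ?_
  rw [abs_of_nonneg (by positivity), smul_eq_mul]

theorem integral_Ioi_div_sq_mul_comp_div (hc : 0 < c) (f : ℝ → ℝ) :
    ∫ u in Ioi 0, c / u ^ 2 * f (c / u) = ∫ u in Ioi 0, f u := by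
  have h_deriv : ∀ u ∈ Ioi (0 : ℝ),
      HasDerivWithinAt (fun u : ℝ => c / u) (-(c / u ^ 2)) (Ioi 0) u := fun u hu => by
    convert! ((hasDerivAt_inv (ne_of_gt hu)).const_mul c).hasDerivWithinAt using 1
    ring
  have h_inj : InjOn (fun u : ℝ => c / u) (Ioi 0) := fun x _ y _ hxy => by
    simpa only [div_eq_mul_inv, mul_right_inj' hc.ne', inv_inj] using hxy
  have h_image : (fun u : ℝ => c / u) '' Ioi 0 = Ioi 0 := by
    refine Subset.antisymm (image_subset_iff.2 fun u hu => div_pos hc hu) fun u hu => ?_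
    exact ⟨c / u, div_pos hc hu, div_div_cancel₀ hc.ne'⟩
  have h := integral_image_eq_integral_abs_deriv_smul measurableSet_Ioi h_deriv h_inj f
  rw [h_image] at h
  rw [h]
  refine setIntegral_congr_fun measurableSet_Ioi fun u _ => ?_
  rw [abs_neg, abs_of_nonneg (by positivity), smul_eq_mul]

/-- The substitution `u ↦ c / u` exchanges the two summands of the weight `1 + c / u ^ 2`, whose
total contribution is the integral of `f`. -/
theorem integral_Ioi_comp_sub_div {f : ℝ → ℝ} (hc : 0 < c) (hf : Integrable f)
    (hf_even : f.Even) : ∫ u in Ioi 0, f (u - c / u) = (∫ x, f x) / 2 := by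
  have h_weighted := integrableOn_Ioi_one_add_div_mul_comp_sub_div hc hf
  have h_int : IntegrableOn (fun u => f (u - c / u)) (Ioi 0) := by
    have h_weight : ∀ u : ℝ, 1 ≤ 1 + c / u ^ 2 := fun u =>
      le_add_of_nonneg_right (by positivity)
    refine (h_weighted.bdd_mul (c := 1) (f := fun u => (1 + c / u ^ 2)⁻¹)
      (by fun_prop : Measurable _).aestronglyMeasurable (ae_of_all _ fun u => ?_)).congr
      (ae_of_all _ fun u => ?_)
    · rw [norm_of_nonneg (inv_nonneg.2 (zero_le_one.trans (h_weight u)))]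
      exact inv_le_one_of_one_le₀ (h_weight u)
    · exact inv_mul_cancel_left₀ (zero_lt_one.trans_le (h_weight u)).ne' _
  have h_swap : ∫ u in Ioi 0, c / u ^ 2 * f (u - c / u) = ∫ u in Ioi 0, f (u - c / u) := by
    rw [← integral_Ioi_div_sq_mul_comp_div hc]
    refine setIntegral_congr_fun measurableSet_Ioi fun u hu => ?_
    have := ne_of_gt (mem_Ioi.1 hu)
    rw [div_div_cancel₀ hc.ne', ← hf_even, neg_sub]
    field_simp
  have h_sum : ∫ x, f x
      = (∫ u in Ioi 0, f (u - c / u)) + ∫ u in Ioi 0, c / u ^ 2 * f (u - c / u) := by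
    rw [← integral_Ioi_one_add_div_mul_comp_sub_div hc f, ← integral_add h_int
      ((h_weighted.sub h_int).congr (ae_of_all _ fun u => by simp only [Pi.sub_apply]; ring))]
    congr 1 with u
    ring
  rw [h_sum, h_swap]
  ring

theorem integral_Ioi_exp_neg_sq_sub_div_sq (hc : 0 < c) :
    ∫ u in Ioi (0 : ℝ), exp (-u ^ 2 - c ^ 2 / u ^ 2) = √π / 2 * exp (-2 * c) := by
  have h_gauss : Integrable fun x : ℝ => exp (-x ^ 2) := by
    simpa using integrable_exp_neg_mul_sq one_pos
  calc ∫ u in Ioi (0 : ℝ), exp (-u ^ 2 - c ^ 2 / u ^ 2)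
      = ∫ u in Ioi (0 : ℝ), exp (-(u - c / u) ^ 2) * exp (-2 * c) := by
        refine setIntegral_congr_fun measurableSet_Ioi fun u hu => ?_
        have := ne_of_gt (mem_Ioi.1 hu)
        rw [← exp_add]
        congr 1
        field_simp
        ring
    _ = √π / 2 * exp (-2 * c) := by
        rw [integral_mul_const, integral_Ioi_comp_sub_div hc h_gauss fun x => by rw [neg_sq]]
        congr 2
        simpa using integral_gaussian 1

theorem integral_Ioi_exp_subordination {r w : ℝ} (hr : 0 < r) (hw : 0 < w) :
    ∫ u in Ioi (0 : ℝ), exp (-u ^ 2 - w ^ 2 / (4 * u ^ 2) * r ^ 2) = √π / 2 * exp (-w * r) := by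
  rw [show -w * r = -2 * (w * r / 2) by ring,
    ← integral_Ioi_exp_neg_sq_sub_div_sq (by positivity : 0 < w * r / 2)]
  refine setIntegral_congr_fun measurableSet_Ioi fun u _ => ?_
  congr 1
  field_simp
  ring

end Glasser

section FourierExpNorm
open Set Real
open scoped FourierTransform

/-- The constant `c_d = π^{-1/2} (4π)^{d/2} Γ((d+1)/2)` for which, in dimension `d`, the Fourier
transform of `exp (-w‖x‖)` is `c_d w (w² + 4π²‖ξ‖²)^{-(d+1)/2}`. -/
def fourierExpNormConst (d : ℝ) : ℝ := (√π)⁻¹ * (4 * π) ^ (d / 2) * Gamma ((d + 1) / 2)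

theorem fourierExpNormConst_pos {d : ℝ} (hd : 0 ≤ d) : 0 < fourierExpNormConst d := by
  have := Gamma_pos_of_pos (by positivity : 0 < (d + 1) / 2)
  unfold fourierExpNormConst
  positivity

theorem norm_cexp_neg_mul_ofReal (w : ℂ) (r : ℝ) :
    ‖Complex.exp (-w * r)‖ = exp (-w.re * r) := by
  rw [Complex.norm_exp, Complex.re_mul_ofReal, Complex.neg_re]

theorem sq_add_ofReal_mem_slitPlane {w : ℂ} (hw : 0 < w.re) {c : ℝ} (hc : 0 ≤ c) :
    w ^ 2 + (c : ℂ) ∈ Complex.slitPlane := by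
  rw [Complex.mem_slitPlane_iff, Complex.add_re, Complex.add_im, Complex.ofReal_re,
    Complex.ofReal_im, pow_two, Complex.mul_re, Complex.mul_im]
  by_cases h : w.im = 0
  · left
    rw [h, mul_zero, sub_zero]
    positivity
  · right
    rw [mul_comm w.im, ← two_mul, add_zero]
    exact mul_ne_zero two_ne_zero (mul_ne_zero hw.ne' h)

variable {E : Type*} [NormedAddCommGroup E] [InnerProductSpace ℝ E]

local notation "dimE" => (Module.finrank ℝ E : ℝ)

/-- The integrand of the Fourier integral of `exp (-w‖x‖)` at `ξ`, once `exp (-w‖x‖)` is written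
as an average of Gaussians by `integral_Ioi_exp_subordination`. -/
def subordinatedGaussian (w : ℝ) (ξ x : E) (u : ℝ) : ℂ :=
  Complex.exp (((-2 * π * inner ℝ x ξ : ℝ) : ℂ) * Complex.I) *
    ((exp (-u ^ 2 - w ^ 2 / (4 * u ^ 2) * ‖x‖ ^ 2) : ℝ) : ℂ)

theorem norm_subordinatedGaussian (w : ℝ) (ξ x : E) (u : ℝ) :
    ‖subordinatedGaussian w ξ x u‖ = exp (-u ^ 2 - w ^ 2 / (4 * u ^ 2) * ‖x‖ ^ 2) := by
  rw [subordinatedGaussian, norm_mul, Complex.norm_exp_ofReal_mul_I, one_mul, Complex.norm_real,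
    norm_of_nonneg (exp_pos _).le]

variable [FiniteDimensional ℝ E] [MeasurableSpace E] [BorelSpace E]

theorem measurable_subordinatedGaussian (w : ℝ) (ξ : E) :
    Measurable (Function.uncurry (subordinatedGaussian w ξ)) := by
  unfold subordinatedGaussian Function.uncurry
  fun_prop

theorem integral_subordinatedGaussian {w u : ℝ} (hw : 0 < w) (hu : 0 < u) (ξ : E) :
    ∫ x : E, subordinatedGaussian w ξ x u = (((4 * π) ^ (dimE / 2) * (w ^ dimE)⁻¹ *
      (u ^ dimE * exp (-(1 + 4 * π ^ 2 * ‖ξ‖ ^ 2 / w ^ 2) * u ^ (2 : ℝ))) : ℝ) : ℂ) := by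
  set b : ℝ := w ^ 2 / (4 * u ^ 2) with hb_def
  have hb : 0 < b := by positivity
  have h_gauss := fourier_gaussian_innerProductSpace (V := E) (b := (b : ℂ)) hb ξ
  rw [fourier_eq'] at h_gauss
  have h_factor : ∀ x, subordinatedGaussian w ξ x u = ((exp (-u ^ 2) : ℝ) : ℂ) *
      (Complex.exp (((-2 * π * inner ℝ x ξ : ℝ) : ℂ) * Complex.I) •
        Complex.exp (-(b : ℂ) * ‖x‖ ^ 2)) := fun x => by
    rw [subordinatedGaussian, ← hb_def, sub_eq_add_neg, exp_add, smul_eq_mul, Complex.ofReal_mul,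
      mul_left_comm]
    push_cast
    rw [neg_mul (b : ℂ)]
  have h_real : ((π : ℂ) / (b : ℂ)) ^ (Module.finrank ℝ E / 2 : ℂ) *
      Complex.exp (-(π : ℂ) ^ 2 * (‖ξ‖ : ℂ) ^ 2 / (b : ℂ)) =
      (((π / b) ^ (dimE / 2) * exp (-π ^ 2 * ‖ξ‖ ^ 2 / b) : ℝ) : ℂ) := by
    rw [Complex.ofReal_mul, Complex.ofReal_cpow (by positivity)]
    push_cast
    rfl
  have h_pow : (π / b) ^ (dimE / 2) = (4 * π) ^ (dimE / 2) * (w ^ dimE)⁻¹ * u ^ dimE := by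
    rw [show π / b = (4 * π) * (u / w) ^ (2 : ℝ) by rw [hb_def, rpow_two]; field_simp,
      mul_rpow (by positivity) (by positivity), ← rpow_mul (by positivity),
      mul_div_cancel₀ _ two_ne_zero, div_rpow hu.le hw.le]
    ring
  have h_exp : exp (-(1 + 4 * π ^ 2 * ‖ξ‖ ^ 2 / w ^ 2) * u ^ (2 : ℝ)) =
      exp (-u ^ 2) * exp (-π ^ 2 * ‖ξ‖ ^ 2 / b) := by
    rw [← exp_add, rpow_two, hb_def]
    congr 1
    field_simp
    ring
  simp_rw [h_factor]
  rw [integral_const_mul, h_gauss, h_real, ← Complex.ofReal_mul, h_pow, h_exp]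
  congr 1
  ring

section Nontrivial
variable [Nontrivial E]

theorem integrable_norm_pow_mul_exp_neg_mul_norm (m : ℕ) {w : ℝ} (hw : 0 < w) :
    Integrable fun x : E => ‖x‖ ^ m * exp (-w * ‖x‖) := by
  rw [integrable_fun_norm_addHaar volume (f := fun y => y ^ m * exp (-w * y))]
  have h_exponent : (-1 : ℝ) < (Module.finrank ℝ E - 1 + m : ℕ) :=
    neg_one_lt_zero.trans_le (Nat.cast_nonneg _)
  refine (integrableOn_rpow_mul_exp_neg_mul_rpow h_exponent one_pos hw).congr_fun
    (fun u _ => ?_) measurableSet_Ioi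
  simp only [smul_eq_mul, rpow_one, rpow_natCast]
  rw [pow_add, mul_assoc]

theorem ae_norm_pos : ∀ᵐ x : E, 0 < ‖x‖ := by
  filter_upwards [Measure.ae_ne volume (0 : E)] with x hx using norm_pos_iff.2 hx

theorem integrable_subordinatedGaussian {w : ℝ} (hw : 0 < w) (ξ : E) :
    Integrable (Function.uncurry (subordinatedGaussian w ξ))
      ((volume : Measure E).prod (volume.restrict (Ioi 0))) := by
  have h_meas := measurable_subordinatedGaussian w ξ
  refine (integrable_prod_iff h_meas.aestronglyMeasurable).2 ⟨ae_of_all _ fun x => ?_, ?_⟩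
  · have h_gauss : Integrable fun u : ℝ => exp (-u ^ 2) := by
      simpa using integrable_exp_neg_mul_sq one_pos
    refine h_gauss.restrict.mono' (h_meas.comp measurable_prodMk_left).aestronglyMeasurable
      (ae_of_all _ fun u => ?_)
    rw [Function.uncurry_apply_pair, norm_subordinatedGaussian]
    exact exp_le_exp.2 (sub_le_self _ (by positivity))
  · refine ((integrable_norm_pow_mul_exp_neg_mul_norm 0 hw).const_mul (√π / 2)).congr ?_
    filter_upwards [ae_norm_pos] with x hx
    simp only [Function.uncurry_apply_pair, norm_subordinatedGaussian, pow_zero, one_mul]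
    rw [integral_Ioi_exp_subordination hx hw]

theorem fourier_exp_neg_mul_norm_eq_integral {w : ℝ} (hw : 0 < w) (ξ : E) :
    𝓕 (fun x : E => ((exp (-w * ‖x‖) : ℝ) : ℂ)) ξ =
      ((2 / √π : ℝ) : ℂ) * ∫ u in Ioi (0 : ℝ), ∫ x : E, subordinatedGaussian w ξ x u := by
  rw [fourier_eq', ← integral_integral_swap (integrable_subordinatedGaussian hw ξ),
    ← integral_const_mul]
  refine integral_congr_ae ?_
  filter_upwards [ae_norm_pos] with x hx
  simp only [subordinatedGaussian]
  rw [integral_const_mul, integral_complex_ofReal, integral_Ioi_exp_subordination hx hw,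
    smul_eq_mul, mul_left_comm, ← Complex.ofReal_mul]
  congr 2
  field_simp

theorem fourier_exp_neg_mul_norm {w : ℝ} (hw : 0 < w) (ξ : E) :
    𝓕 (fun x : E => ((exp (-w * ‖x‖) : ℝ) : ℂ)) ξ = ((fourierExpNormConst dimE * w *
      (w ^ 2 + 4 * π ^ 2 * ‖ξ‖ ^ 2) ^ (-((dimE + 1) / 2)) : ℝ) : ℂ) := by
  set B : ℝ := 1 + 4 * π ^ 2 * ‖ξ‖ ^ 2 / w ^ 2 with hB_def
  have hB : 0 < B := by positivity
  have h_exponent : -1 < dimE := neg_one_lt_zero.trans_le (Nat.cast_nonneg _)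
  have h_radial : w ^ 2 + 4 * π ^ 2 * ‖ξ‖ ^ 2 = w ^ (2 : ℝ) * B := by
    rw [hB_def, rpow_two]
    field_simp
  have h_scale : w * (w ^ (2 : ℝ) * B) ^ (-((dimE + 1) / 2)) =
      (w ^ dimE)⁻¹ * B ^ (-((dimE + 1) / 2)) := by
    rw [mul_rpow (by positivity) hB.le, ← rpow_mul hw.le, ← mul_assoc, ← rpow_one_add' hw.le,
      ← rpow_neg hw.le]
    · ring_nf
    · rw [show 1 + 2 * -((dimE + 1) / 2) = -dimE by ring]
      simpa using Module.finrank_pos.ne'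
  rw [fourier_exp_neg_mul_norm_eq_integral hw, setIntegral_congr_fun measurableSet_Ioi fun u hu =>
      integral_subordinatedGaussian hw hu ξ, integral_complex_ofReal, integral_const_mul,
    integral_rpow_mul_exp_neg_mul_rpow two_pos h_exponent hB, ← Complex.ofReal_mul, h_radial,
    mul_assoc (fourierExpNormConst _), h_scale, fourierExpNormConst, neg_div]
  congr 1
  field_simp

theorem integrable_cexp_neg_mul_norm {w : ℂ} (hw : 0 < w.re) :
    Integrable fun x : E => Complex.exp (-w * ‖x‖) := by
  refine (integrable_norm_pow_mul_exp_neg_mul_norm 0 hw).mono'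
    (by fun_prop : Continuous _).aestronglyMeasurable (ae_of_all _ fun x => ?_)
  rw [norm_cexp_neg_mul_ofReal, pow_zero, one_mul]

theorem differentiableAt_fourier_cexp_neg_mul_norm {w : ℂ} (hw : 0 < w.re) (ξ : E) :
    DifferentiableAt ℂ (fun w : ℂ => 𝓕 (fun x : E => Complex.exp (-w * ‖x‖)) ξ) w := by
  simp_rw [fourier_eq']
  let e : E → ℂ := fun x => Complex.exp (((-2 * π * inner ℝ x ξ : ℝ) : ℂ) * Complex.I)
  have he : ∀ x, ‖e x‖ = 1 := fun x => Complex.norm_exp_ofReal_mul_I _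
  have h_nhds : {z : ℂ | w.re / 2 < z.re} ∈ 𝓝 w :=
    (isOpen_lt continuous_const Complex.continuous_re).mem_nhds (half_lt_self hw)
  have h_meas : ∀ z : ℂ, AEStronglyMeasurable (fun x => e x • Complex.exp (-z * ‖x‖)) volume :=
    fun z => (by fun_prop : Continuous _).aestronglyMeasurable
  have h_int : Integrable fun x => e x • Complex.exp (-w * ‖x‖) :=
    (integrable_cexp_neg_mul_norm hw).norm.mono' (h_meas w) (ae_of_all _ fun x => by
      rw [norm_smul, he, one_mul])
  have h_deriv : ∀ (x : E) (z : ℂ), HasDerivAt (fun z => e x • Complex.exp (-z * ‖x‖))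
      (e x • (Complex.exp (-z * ‖x‖) * (-‖x‖))) z := fun x z => by
    have h_lin : HasDerivAt (fun z : ℂ => -z * ‖x‖) (-‖x‖ : ℂ) z := by
      simpa using (hasDerivAt_id z).neg.mul_const (‖x‖ : ℂ)
    exact h_lin.cexp.const_smul (e x)
  have h_bound : ∀ (x : E), ∀ z ∈ {z : ℂ | w.re / 2 < z.re},
      ‖e x • (Complex.exp (-z * ‖x‖) * (-‖x‖))‖ ≤ ‖x‖ ^ 1 * exp (-(w.re / 2) * ‖x‖) := by
    intro x z hz
    rw [norm_smul, he, norm_mul, norm_cexp_neg_mul_ofReal, norm_neg, Complex.norm_real, norm_norm,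
      one_mul, pow_one, mul_comm]
    gcongr
    exact le_of_lt hz
  exact (hasDerivAt_integral_of_dominated_loc_of_deriv_le h_nhds (Eventually.of_forall h_meas)
    h_int (by fun_prop : Continuous _).aestronglyMeasurable (ae_of_all _ h_bound)
    (integrable_norm_pow_mul_exp_neg_mul_norm 1 (half_pos hw))
    (ae_of_all _ fun x z _ => h_deriv x z)).2.differentiableAt

theorem fourier_cexp_neg_mul_norm {w : ℂ} (hw : 0 < w.re) (ξ : E) :
    𝓕 (fun x : E => Complex.exp (-w * ‖x‖)) ξ = fourierExpNormConst dimE * w *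
      (w ^ 2 + ((4 * π ^ 2 * ‖ξ‖ ^ 2 : ℝ) : ℂ)) ^ ((-((dimE + 1) / 2) : ℝ) : ℂ) := by
  have h_open : IsOpen {z : ℂ | 0 < z.re} := isOpen_lt continuous_const Complex.continuous_re
  have h_left : AnalyticOnNhd ℂ (fun w : ℂ => 𝓕 (fun x : E => Complex.exp (-w * ‖x‖)) ξ)
      {z : ℂ | 0 < z.re} := DifferentiableOn.analyticOnNhd (fun z hz =>
    (differentiableAt_fourier_cexp_neg_mul_norm hz ξ).differentiableWithinAt) h_open
  have h_right : AnalyticOnNhd ℂ (fun w : ℂ => fourierExpNormConst dimE * w *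
      (w ^ 2 + ((4 * π ^ 2 * ‖ξ‖ ^ 2 : ℝ) : ℂ)) ^ ((-((dimE + 1) / 2) : ℝ) : ℂ))
      {z : ℂ | 0 < z.re} := DifferentiableOn.analyticOnNhd (fun z hz =>
    (DifferentiableAt.mul (by fun_prop) ((by fun_prop : DifferentiableAt ℂ (fun w : ℂ =>
      w ^ 2 + ((4 * π ^ 2 * ‖ξ‖ ^ 2 : ℝ) : ℂ)) z).cpow_const
      (sq_add_ofReal_mem_slitPlane hz (by positivity)))).differentiableWithinAt) h_open
  have h_real : ∀ r : ℝ, 0 < r → 𝓕 (fun x : E => Complex.exp (-(r : ℂ) * ‖x‖)) ξ =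
      fourierExpNormConst dimE * (r : ℂ) *
      ((r : ℂ) ^ 2 + ((4 * π ^ 2 * ‖ξ‖ ^ 2 : ℝ) : ℂ)) ^ ((-((dimE + 1) / 2) : ℝ) : ℂ) := by
    intro r hr
    have h := fourier_exp_neg_mul_norm hr ξ
    rw [Complex.ofReal_mul, Complex.ofReal_cpow (by positivity)] at h
    push_cast at h ⊢
    exact h
  have h_seq : Tendsto (fun n : ℕ => ((1 + 1 / ((n : ℝ) + 1) : ℝ) : ℂ)) atTop (𝓝[≠] 1) := by
    refine tendsto_nhdsWithin_iff.2 ⟨?_, Eventually.of_forall fun n => ?_⟩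
    · simpa [Function.comp_def] using (Complex.continuous_ofReal.tendsto _).comp
        ((tendsto_const_nhds (x := (1 : ℝ))).add tendsto_one_div_add_atTop_nhds_zero_nat)
    · have : (0 : ℝ) < 1 / ((n : ℝ) + 1) := by positivity
      simpa only [mem_compl_iff, mem_singleton_iff, Complex.ofReal_eq_one] using by linarith
  exact h_left.eqOn_of_preconnected_of_frequently_eq h_right
    (convex_halfSpace_re_gt 0).isPreconnected (z₀ := 1) (by simp)
    (h_seq.frequently (Frequently.of_forall fun n => h_real _ (by positivity))) hw

end Nontrivial

end FourierExpNorm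

/-! ### Complex powers of the Helmholtz resolvent -/

section ResolventPow
open Set
open scoped FourierTransform

theorem ofReal_add_mul_I_mem_slitPlane (x : ℝ) {t : ℝ} (ht : t ≠ 0) :
    (x : ℂ) + t * Complex.I ∈ Complex.slitPlane := by
  simp [Complex.mem_slitPlane_iff, ht]

theorem le_norm_ofReal_add_mul_I (x t : ℝ) : t ≤ ‖(x : ℂ) + t * Complex.I‖ :=
  (le_abs_self t).trans (by simpa using Complex.abs_im_le_norm ((x : ℂ) + t * Complex.I))

theorem abs_le_norm_ofReal_add_mul_I (x t : ℝ) : |x| ≤ ‖(x : ℂ) + t * Complex.I‖ := by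
  simpa using Complex.abs_re_le_norm ((x : ℂ) + t * Complex.I)

theorem norm_ofReal_add_mul_I_sq (x t : ℝ) : ‖(x : ℂ) + t * Complex.I‖ ^ 2 = x ^ 2 + t ^ 2 := by
  rw [Complex.norm_add_mul_I, Real.sq_sqrt (by positivity)]

theorem norm_ofReal_add_mul_I_pos (x : ℝ) {t : ℝ} (ht : 0 < t) :
    0 < ‖(x : ℂ) + t * Complex.I‖ :=
  ht.trans_le (le_norm_ofReal_add_mul_I x t)

theorem exists_sq_eq_of_mem_slitPlane {z : ℂ} (hz : z ∈ Complex.slitPlane) :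
    ∃ w : ℂ, 0 < w.re ∧ w ^ 2 = z := by
  refine ⟨z ^ ((2 : ℕ) : ℂ)⁻¹, ?_, Complex.cpow_nat_inv_pow z two_ne_zero⟩
  have h_im : (Complex.log z * ((2 : ℕ) : ℂ)⁻¹).im = Complex.arg z / 2 := by
    rw [← Complex.ofReal_natCast, ← Complex.ofReal_inv, Complex.im_mul_ofReal, Complex.log_im]
    norm_num [div_eq_mul_inv]
  have h_lower := Complex.neg_pi_lt_arg z
  have h_upper : Complex.arg z < Real.pi :=
    (Complex.arg_le_pi z).lt_of_ne (Complex.mem_slitPlane_iff_arg.1 hz).1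
  rw [Complex.cpow_def_of_ne_zero (Complex.slitPlane_ne_zero hz), Complex.exp_re, h_im]
  exact mul_pos (Real.exp_pos _) (Real.cos_pos_of_mem_Ioo ⟨by linarith, by linarith⟩)

variable {E : Type*} [NormedAddCommGroup E]

/-- The Fourier symbol `4π²(‖ξ‖² - 1)` of `-Δ - 4π²`, for the transform normalised with the
phase `exp (-2πi⟨x, ξ⟩)`. -/
def helmholtzSymbol (ξ : E) : ℝ := 4 * Real.pi ^ 2 * (‖ξ‖ ^ 2 - 1)

/-- The Fourier symbol of the complex power `(-Δ - 4π² + it)^{-a}` of the Helmholtz resolvent. -/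
def resolventPow (a t : ℝ) (ξ : E) : ℂ :=
  ((helmholtzSymbol ξ : ℂ) + t * Complex.I) ^ ((-a : ℝ) : ℂ)

@[fun_prop]
theorem continuous_helmholtzSymbol : Continuous (helmholtzSymbol (E := E)) := by
  unfold helmholtzSymbol
  fun_prop

theorem norm_resolventPow (a t : ℝ) (ξ : E) :
    ‖resolventPow a t ξ‖ = ‖(helmholtzSymbol ξ : ℂ) + t * Complex.I‖ ^ (-a) :=
  Complex.norm_cpow_real _ _

theorem norm_resolventPow_le {a t : ℝ} (ha : 0 ≤ a) (ht : 0 < t) (ξ : E) :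
    ‖resolventPow a t ξ‖ ≤ t ^ (-a) := by
  rw [norm_resolventPow]
  exact Real.rpow_le_rpow_of_nonpos ht (le_norm_ofReal_add_mul_I _ t) (neg_nonpos.2 ha)

theorem continuous_resolventPow (a : ℝ) {t : ℝ} (ht : t ≠ 0) :
    Continuous (resolventPow (E := E) a t) := by
  unfold resolventPow
  exact Continuous.cpow (by fun_prop) continuous_const fun ξ =>
    ofReal_add_mul_I_mem_slitPlane _ ht

theorem one_add_norm_sq_le_mul_norm_helmholtzSymbol_add {t : ℝ} (ht : 0 < t) (ξ : E) :
    1 + ‖ξ‖ ^ 2 ≤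
      (1 / (4 * Real.pi ^ 2) + 2 / t) * ‖(helmholtzSymbol ξ : ℂ) + t * Complex.I‖ := by
  calc 1 + ‖ξ‖ ^ 2 = 1 / (4 * Real.pi ^ 2) * helmholtzSymbol ξ + 2 / t * t := by
        unfold helmholtzSymbol
        field_simp
        ring
    _ ≤ _ := by
        rw [add_mul]
        gcongr
        · exact (le_abs_self _).trans (abs_le_norm_ofReal_add_mul_I _ t)
        · exact le_norm_ofReal_add_mul_I _ t

variable [InnerProductSpace ℝ E] [FiniteDimensional ℝ E] [MeasurableSpace E] [BorelSpace E]

local notation "dimE" => (Module.finrank ℝ E : ℝ)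

theorem integrable_resolventPow {a t : ℝ} (ha : dimE < 2 * a) (ht : 0 < t) :
    Integrable (resolventPow (E := E) a t) := by
  have h_bessel := integrable_rpow_neg_one_add_norm_sq (E := E) (μ := volume) ha
  set c : ℝ := 1 / (4 * Real.pi ^ 2) + 2 / t
  have hc : 0 < c := by positivity
  have ha0 : 0 ≤ a := by linarith [(Nat.cast_nonneg _ : 0 ≤ dimE)]
  refine (h_bessel.const_mul (c ^ a)).mono'
    (continuous_resolventPow a ht.ne').aestronglyMeasurable (ae_of_all _ fun ξ => ?_)
  have h := Real.rpow_le_rpow_of_nonpos (by positivity)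
    (one_add_norm_sq_le_mul_norm_helmholtzSymbol_add ht ξ) (neg_nonpos.2 ha0)
  rw [Real.mul_rpow hc.le (norm_nonneg _), Real.rpow_neg hc.le,
    inv_mul_le_iff₀ (by positivity)] at h
  rwa [norm_resolventPow, neg_div, mul_div_cancel_left₀ _ two_ne_zero]

theorem fourierInv_const_smul (c : ℂ) (f : E → ℂ) (x : E) :
    𝓕⁻ (fun ξ => c • f ξ) x = c • 𝓕⁻ f x := by
  rw [Real.fourierInv_eq, Real.fourierInv_eq, ← integral_smul]
  simp_rw [smul_comm c]

variable [Nontrivial E]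

theorem fourier_cexp_eq_smul_resolventPow {w : ℂ} {t : ℝ} (hw : 0 < w.re)
    (hw_sq : w ^ 2 = ((-(4 * Real.pi ^ 2) : ℝ) : ℂ) + t * Complex.I) :
    𝓕 (fun x : E => Complex.exp (-w * ‖x‖)) =
      fun ξ => (fourierExpNormConst dimE * w) • resolventPow ((dimE + 1) / 2) t ξ := by
  ext ξ
  rw [fourier_cexp_neg_mul_norm hw, smul_eq_mul, resolventPow, hw_sq, helmholtzSymbol]
  congr 2
  push_cast
  ring

/-- By Fourier inversion the transform of the symbol is `exp (-w‖x‖)`, up to a constant factor of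
size at least `fourierExpNormConst`, where `w² = -4π² + it` and `Re w > 0`. -/
theorem norm_fourierInv_resolventPow_le {t : ℝ} (ht : 0 < t) (x : E) :
    ‖𝓕⁻ (resolventPow (E := E) ((dimE + 1) / 2) t) x‖ ≤ (fourierExpNormConst dimE)⁻¹ := by
  obtain ⟨w, hw, hw_sq⟩ := exists_sq_eq_of_mem_slitPlane
    (ofReal_add_mul_I_mem_slitPlane (-(4 * Real.pi ^ 2)) ht.ne')
  have hw_norm : 1 ≤ ‖w‖ := by
    refine (one_le_sq_iff₀ (norm_nonneg w)).1 ?_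
    rw [← norm_pow, hw_sq]
    refine le_trans ?_ (abs_le_norm_ofReal_add_mul_I _ t)
    rw [abs_neg, abs_of_nonneg (by positivity)]
    nlinarith [Real.pi_gt_three]
  have hc : 0 < fourierExpNormConst dimE := fourierExpNormConst_pos (Nat.cast_nonneg _)
  have h_exponent : dimE < 2 * ((dimE + 1) / 2) := by linarith
  have h_fourier := fourier_cexp_eq_smul_resolventPow (E := E) hw hw_sq
  have h_int : Integrable (𝓕 fun x : E => Complex.exp (-w * ‖x‖)) := by
    rw [h_fourier]
    exact (integrable_resolventPow (E := E) h_exponent ht).smul (fourierExpNormConst dimE * w)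
  have h_inv := congrFun (Continuous.fourierInv_fourier_eq
    (f := fun x : E => Complex.exp (-w * ‖x‖)) (by fun_prop) (integrable_cexp_neg_mul_norm hw)
    h_int) x
  rw [h_fourier, fourierInv_const_smul] at h_inv
  have h_le_one : fourierExpNormConst dimE * ‖w‖ *
      ‖𝓕⁻ (resolventPow (E := E) ((dimE + 1) / 2) t) x‖ ≤ 1 := by
    rw [← Real.norm_of_nonneg hc.le, ← Complex.norm_real, ← norm_mul, ← norm_smul, h_inv,
      norm_cexp_neg_mul_ofReal, Real.exp_le_one_iff, neg_mul]
    exact neg_nonpos.2 (mul_nonneg hw.le (norm_nonneg x))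
  rw [← mul_one (fourierExpNormConst dimE)⁻¹, le_inv_mul_iff₀ hc]
  refine le_trans ?_ h_le_one
  gcongr
  exact le_mul_of_one_le_right hc.le hw_norm

theorem norm_fourier_resolventPow_le {t : ℝ} (ht : 0 < t) (x : E) :
    ‖𝓕 (resolventPow (E := E) ((dimE + 1) / 2) t) x‖ ≤ (fourierExpNormConst dimE)⁻¹ := by
  have h := norm_fourierInv_resolventPow_le ht (-x)
  rwa [Real.fourierInv_eq_fourier_neg, neg_neg] at h

end ResolventPow

/-! ### Subordination of the resolvent to its powers -/

section Subordination
open Set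

variable {b c ε : ℝ}

theorem integrableOn_Ioc_const_mul_rpow {T : ℝ} (A : ℝ) (hb : 0 < b) (hT : 0 ≤ T) :
    IntegrableOn (fun σ : ℝ => A * σ ^ (b - 1)) (Ioc 0 T) :=
  ((intervalIntegrable_iff_integrableOn_Ioc_of_le hT).1
    (intervalIntegral.intervalIntegrable_rpow' (by linarith))).const_mul A

theorem integrableOn_Ioi_const_mul_rpow {T : ℝ} (D : ℝ) (hc : 0 < c) (hT : 0 < T) :
    IntegrableOn (fun σ : ℝ => D * σ ^ (-1 - c)) (Ioi T) :=
  (integrableOn_Ioi_rpow_of_lt (by linarith) hT).const_mul D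

theorem integrable_indicator_rpow_Ioc_add_Ioi {T : ℝ} (A D : ℝ) (hb : 0 < b) (hc : 0 < c)
    (hT : 0 < T) : Integrable fun σ : ℝ => (Ioc 0 T).indicator (fun σ => A * σ ^ (b - 1)) σ +
      (Ioi T).indicator (fun σ => D * σ ^ (-1 - c)) σ :=
  ((integrableOn_Ioc_const_mul_rpow A hb hT.le).integrable_indicator measurableSet_Ioc).add
    ((integrableOn_Ioi_const_mul_rpow D hc hT).integrable_indicator measurableSet_Ioi)

theorem setIntegral_Ioi_indicator_rpow_Ioc_add_Ioi {T : ℝ} (A D : ℝ) (hb : 0 < b) (hc : 0 < c)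
    (hT : 0 < T) : ∫ σ in Ioi 0, ((Ioc 0 T).indicator (fun σ => A * σ ^ (b - 1)) σ +
      (Ioi T).indicator (fun σ => D * σ ^ (-1 - c)) σ) = A * T ^ b / b + D * T ^ (-c) / c := by
  rw [integral_add
      ((integrableOn_Ioc_const_mul_rpow A hb hT.le).integrable_indicator
        measurableSet_Ioc).integrableOn
      ((integrableOn_Ioi_const_mul_rpow D hc hT).integrable_indicator
        measurableSet_Ioi).integrableOn,
    setIntegral_indicator measurableSet_Ioc, setIntegral_indicator measurableSet_Ioi,
    inter_eq_right.2 Ioc_subset_Ioi_self, inter_eq_right.2 (Ioi_subset_Ioi hT.le),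
    integral_const_mul, integral_const_mul, ← intervalIntegral.integral_of_le hT.le,
    integral_rpow (Or.inl (by linarith)), integral_Ioi_rpow_of_lt (by linarith) hT,
    sub_add_cancel, Real.zero_rpow hb.ne', sub_zero, show -1 - c + 1 = -c by ring, neg_div_neg_eq,
    mul_div_assoc, mul_div_assoc]

theorem rpow_mul_le_indicator_rpow_Ioc_add_Ioi {T A D y σ : ℝ} (hσ : 0 < σ) (hA : y ≤ A)
    (hD : y ≤ σ ^ (-b - c) * D) :
    σ ^ (b - 1) * y ≤ (Ioc 0 T).indicator (fun σ => A * σ ^ (b - 1)) σ +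
      (Ioi T).indicator (fun σ => D * σ ^ (-1 - c)) σ := by
  by_cases h : σ ≤ T
  · rw [indicator_of_mem (show σ ∈ Ioc 0 T from ⟨hσ, h⟩), indicator_of_notMem (notMem_Ioi.2 h),
      add_zero, mul_comm]
    gcongr
  · rw [indicator_of_notMem fun h' : σ ∈ Ioc 0 T => h h'.2,
      indicator_of_mem (show σ ∈ Ioi T from lt_of_not_ge h), zero_add]
    calc σ ^ (b - 1) * y ≤ σ ^ (b - 1) * (σ ^ (-b - c) * D) := by gcongr
      _ = D * σ ^ (-1 - c) := by
        rw [← mul_assoc, ← Real.rpow_add hσ, mul_comm]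
        congr 2
        ring

theorem integrableOn_Ioi_rpow_mul_add_rpow (hb : 0 < b) (hε : 0 < ε) :
    IntegrableOn (fun σ : ℝ => σ ^ (b - 1) * (ε + σ) ^ (-(b + 1))) (Ioi 0) := by
  refine (integrable_indicator_rpow_Ioc_add_Ioi (ε ^ (-(b + 1))) 1 hb one_pos hε).restrict.mono'
    (by fun_prop : Measurable _).aestronglyMeasurable ?_
  filter_upwards [ae_restrict_mem measurableSet_Ioi] with σ (hσ : 0 < σ)
  rw [Real.norm_of_nonneg (by positivity)]
  refine rpow_mul_le_indicator_rpow_Ioc_add_Ioi hσ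
    (Real.rpow_le_rpow_of_nonpos hε (by linarith) (by linarith)) ?_
  rw [mul_one, ← neg_add']
  exact Real.rpow_le_rpow_of_nonpos hσ (by linarith) (by linarith)

/-- Splitting the integral at `T = (D / A) ^ (1 / (b + c))` balances the two bounds. -/
theorem setIntegral_Ioi_rpow_mul_le {A D : ℝ} {φ : ℝ → ℝ} (hb : 0 < b) (hc : 0 < c)
    (hφ : ∀ σ, 0 < σ → 0 ≤ φ σ) (hA : ∀ σ, 0 < σ → φ σ ≤ A)
    (hD : ∀ σ, 0 < σ → φ σ ≤ σ ^ (-b - c) * D) :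
    ∫ σ in Ioi 0, σ ^ (b - 1) * φ σ ≤
      (1 / b + 1 / c) * (A ^ (c / (b + c)) * D ^ (b / (b + c))) := by
  have hA0 : 0 ≤ A := (hφ 1 one_pos).trans (hA 1 one_pos)
  have hD0 : 0 ≤ D := (hφ 1 one_pos).trans (by simpa using hD 1 one_pos)
  rcases hA0.eq_or_lt with rfl | hA_pos
  · have h_zero : ∀ σ ∈ Ioi (0 : ℝ), σ ^ (b - 1) * φ σ = 0 := fun σ hσ => by
      rw [le_antisymm (hA σ hσ) (hφ σ hσ), mul_zero]
    rw [setIntegral_congr_fun measurableSet_Ioi h_zero, integral_zero]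
    positivity
  rcases hD0.eq_or_lt with rfl | hD_pos
  · have h_zero : ∀ σ ∈ Ioi (0 : ℝ), σ ^ (b - 1) * φ σ = 0 := fun σ hσ => by
      rw [le_antisymm ((hD σ hσ).trans_eq (mul_zero _)) (hφ σ hσ), mul_zero]
    rw [setIntegral_congr_fun measurableSet_Ioi h_zero, integral_zero]
    positivity
  set T : ℝ := (D / A) ^ (1 / (b + c)) with hT_def
  have hT : 0 < T := by positivity
  have h_low : A * T ^ b = A ^ (c / (b + c)) * D ^ (b / (b + c)) := by
    rw [hT_def, ← Real.rpow_mul (by positivity), Real.div_rpow hD0 hA0, one_div_mul_eq_div,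
      show c / (b + c) = 1 - b / (b + c) by field_simp; ring, Real.rpow_sub hA_pos, Real.rpow_one]
    ring
  have h_high : D * T ^ (-c) = A ^ (c / (b + c)) * D ^ (b / (b + c)) := by
    rw [hT_def, ← Real.rpow_mul (by positivity), Real.div_rpow hD0 hA0, one_div_mul_eq_div,
      show b / (b + c) = 1 - c / (b + c) by field_simp; ring, Real.rpow_sub hD_pos, Real.rpow_one,
      neg_div, Real.rpow_neg hA0, Real.rpow_neg hD0]
    field_simp
  calc ∫ σ in Ioi 0, σ ^ (b - 1) * φ σ ≤ A * T ^ b / b + D * T ^ (-c) / c := by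
        rw [← setIntegral_Ioi_indicator_rpow_Ioc_add_Ioi A D hb hc hT]
        refine integral_mono_of_nonneg ?_
          (integrable_indicator_rpow_Ioc_add_Ioi A D hb hc hT).restrict ?_
        · filter_upwards [ae_restrict_mem measurableSet_Ioi] with σ (hσ : 0 < σ)
          exact mul_nonneg (by positivity) (hφ σ hσ)
        · filter_upwards [ae_restrict_mem measurableSet_Ioi] with σ hσ
          exact rpow_mul_le_indicator_rpow_Ioc_add_Ioi hσ (hA σ hσ) (hD σ hσ)
    _ = (1 / b + 1 / c) * (A ^ (c / (b + c)) * D ^ (b / (b + c))) := by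
        rw [h_low, h_high]
        ring

theorem ofReal_add_ofReal_add_mul_I (x ε σ : ℝ) :
    (x : ℂ) + ((ε + σ : ℝ) : ℂ) * Complex.I = ((x : ℂ) + ε * Complex.I) + σ * Complex.I := by
  push_cast
  ring

/-- An antiderivative of `σ ^ (b - 1) (y + iσ) ^ (-(b + 1))`. -/
def subordinationPrimitive (b : ℝ) (y : ℂ) (σ : ℝ) : ℂ :=
  ((σ ^ b : ℝ) : ℂ) * (y + σ * Complex.I) ^ ((-b : ℝ) : ℂ) / (b * y)

theorem hasDerivAt_subordinationPrimitive {y : ℂ} {σ : ℝ} (hb : b ≠ 0) (hy : y ≠ 0) (hσ : 0 < σ)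
    (h_slit : y + σ * Complex.I ∈ Complex.slitPlane) :
    HasDerivAt (subordinationPrimitive b y)
      (((σ ^ (b - 1) : ℝ) : ℂ) * (y + σ * Complex.I) ^ ((-(b + 1) : ℝ) : ℂ)) σ := by
  have h_rpow : HasDerivAt (fun σ : ℝ => ((σ ^ b : ℝ) : ℂ)) ((b * σ ^ (b - 1) : ℝ) : ℂ) σ :=
    (Real.hasDerivAt_rpow_const (Or.inl hσ.ne')).ofReal_comp
  have h_line : HasDerivAt (fun σ : ℝ => y + σ * Complex.I) Complex.I σ := by
    simpa using ((hasDerivAt_id σ).ofReal_comp.mul_const Complex.I).const_add y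
  have h_cpow : HasDerivAt (fun σ : ℝ => (y + σ * Complex.I) ^ ((-b : ℝ) : ℂ))
      (((-b : ℝ) : ℂ) * (y + σ * Complex.I) ^ (((-b : ℝ) : ℂ) - 1) * Complex.I) σ := by
    refine (((hasDerivAt_id (y + σ * Complex.I)).cpow_const h_slit).comp σ h_line).congr_deriv ?_
    rw [mul_one, id_def]
  refine ((h_rpow.mul h_cpow).div_const ((b : ℂ) * y)).congr_deriv ?_
  have h_split : ((σ ^ b : ℝ) : ℂ) = ((σ ^ (b - 1) : ℝ) : ℂ) * σ := by
    rw [← Complex.ofReal_mul, ← Real.rpow_add_one hσ.ne', sub_add_cancel]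
  have h_csplit : (y + σ * Complex.I) ^ ((-b : ℝ) : ℂ) =
      (y + σ * Complex.I) ^ ((-(b + 1) : ℝ) : ℂ) * (y + σ * Complex.I) := by
    nth_rw 3 [← Complex.cpow_one (y + σ * Complex.I)]
    rw [← Complex.cpow_add _ _ (Complex.slitPlane_ne_zero h_slit)]
    congr 1
    push_cast
    ring
  rw [show ((-b : ℝ) : ℂ) - 1 = ((-(b + 1) : ℝ) : ℂ) by push_cast; ring, h_csplit, h_split,
    div_eq_iff (mul_ne_zero (Complex.ofReal_ne_zero.2 hb) hy)]
  push_cast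
  ring

theorem ofReal_mul_cpow {r : ℝ} (hr : 0 < r) {z : ℂ} (hz : z ≠ 0) (a : ℂ) :
    ((r : ℂ) * z) ^ a = (r : ℂ) ^ a * z ^ a := by
  have hr' : (r : ℂ) ≠ 0 := Complex.ofReal_ne_zero.2 hr.ne'
  rw [Complex.cpow_def_of_ne_zero (mul_ne_zero hr' hz), Complex.cpow_def_of_ne_zero hr',
    Complex.cpow_def_of_ne_zero hz, Complex.log_ofReal_mul hr hz, ← Complex.exp_add,
    Complex.ofReal_log hr.le, add_mul]

theorem tendsto_subordinationPrimitive {y : ℂ} :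
    Tendsto (subordinationPrimitive b y) atTop
      (𝓝 (Complex.I ^ ((-b : ℝ) : ℂ) / (b * y))) := by
  have h_inv : Tendsto (fun σ : ℝ => ((σ⁻¹ : ℝ) : ℂ)) atTop (𝓝 0) := by
    simpa [Function.comp_def] using
      (Complex.continuous_ofReal.tendsto 0).comp tendsto_inv_atTop_zero
  have h_base : Tendsto (fun σ : ℝ => y * ((σ⁻¹ : ℝ) : ℂ) + Complex.I) atTop (𝓝 Complex.I) := by
    simpa using (h_inv.const_mul y).add_const Complex.I
  have h_I : Complex.I ∈ Complex.slitPlane := by simp [Complex.mem_slitPlane_iff]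
  refine ((h_base.cpow tendsto_const_nhds h_I).div_const (b * y)).congr' ?_
  filter_upwards [eventually_gt_atTop 0,
    h_base.eventually_ne Complex.I_ne_zero] with σ hσ h_ne
  have h_factor : y + σ * Complex.I = (σ : ℂ) * (y * ((σ⁻¹ : ℝ) : ℂ) + Complex.I) := by
    have : (σ : ℂ) ≠ 0 := Complex.ofReal_ne_zero.2 hσ.ne'
    push_cast
    field_simp
  rw [subordinationPrimitive, h_factor, ofReal_mul_cpow hσ h_ne, ← Complex.ofReal_cpow hσ.le,
    ← mul_assoc, ← Complex.ofReal_mul, ← Real.rpow_add hσ, add_neg_cancel, Real.rpow_zero,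
    Complex.ofReal_one, one_mul]

theorem integral_Ioi_rpow_mul_resolvent_cpow (hb : 0 < b) (x : ℝ) (hε : 0 < ε) :
    ∫ σ in Ioi (0 : ℝ), ((σ ^ (b - 1) : ℝ) : ℂ) *
        ((x : ℂ) + ((ε + σ : ℝ) : ℂ) * Complex.I) ^ ((-(b + 1) : ℝ) : ℂ) =
      Complex.I ^ ((-b : ℝ) : ℂ) / (b * ((x : ℂ) + ε * Complex.I)) := by
  have h_slit : ∀ σ : ℝ, 0 ≤ σ →
      (x : ℂ) + ε * Complex.I + σ * Complex.I ∈ Complex.slitPlane := fun σ hσ => by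
    rw [← ofReal_add_ofReal_add_mul_I]
    exact ofReal_add_mul_I_mem_slitPlane x (by positivity)
  have h_ne : (x : ℂ) + ε * Complex.I ≠ 0 :=
    Complex.slitPlane_ne_zero (ofReal_add_mul_I_mem_slitPlane x hε.ne')
  have h_cont : ContinuousWithinAt (subordinationPrimitive b (x + ε * Complex.I)) (Ici 0) 0 := by
    refine ContinuousAt.continuousWithinAt (ContinuousAt.div_const (ContinuousAt.mul ?_ ?_) _)
    · exact Complex.continuous_ofReal.continuousAt.comp
        (Real.continuousAt_rpow_const _ _ (Or.inr hb.le))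
    · exact ContinuousAt.cpow (by fun_prop) (by fun_prop) (h_slit 0 le_rfl)
  have h_int : IntegrableOn (fun σ : ℝ => ((σ ^ (b - 1) : ℝ) : ℂ) *
      ((x : ℂ) + ε * Complex.I + σ * Complex.I) ^ ((-(b + 1) : ℝ) : ℂ)) (Ioi 0) := by
    refine (integrableOn_Ioi_rpow_mul_add_rpow hb hε).mono'
      (by fun_prop : Measurable _).aestronglyMeasurable ?_
    filter_upwards [ae_restrict_mem measurableSet_Ioi] with σ (hσ : 0 < σ)
    rw [norm_mul, Complex.norm_cpow_real, Complex.norm_real, Real.norm_of_nonneg (by positivity),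
      ← ofReal_add_ofReal_add_mul_I]
    gcongr ?_ * ?_
    exact Real.rpow_le_rpow_of_nonpos (by positivity) (le_norm_ofReal_add_mul_I x _) (by linarith)
  simp_rw [ofReal_add_ofReal_add_mul_I]
  rw [integral_Ioi_of_hasDerivAt_of_tendsto h_cont (fun σ hσ =>
      hasDerivAt_subordinationPrimitive hb.ne' h_ne hσ (h_slit σ (le_of_lt hσ))) h_int
    tendsto_subordinationPrimitive]
  simp [subordinationPrimitive, Real.zero_rpow hb.ne']

variable {α : Type*} [MeasurableSpace α] {μ : Measure α} {X : α → ℝ} {h : α → ℂ}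

theorem inv_eq_integral_Ioi_rpow_mul_cpow (hb : 0 < b) (x : ℝ) (hε : 0 < ε) :
    ((x : ℂ) + ε * Complex.I)⁻¹ = b * (Complex.I ^ ((-b : ℝ) : ℂ))⁻¹ *
      ∫ σ in Ioi (0 : ℝ), ((σ ^ (b - 1) : ℝ) : ℂ) *
        ((x : ℂ) + ((ε + σ : ℝ) : ℂ) * Complex.I) ^ ((-(b + 1) : ℝ) : ℂ) := by
  have h_ne : (x : ℂ) + ε * Complex.I ≠ 0 :=
    Complex.slitPlane_ne_zero (ofReal_add_mul_I_mem_slitPlane x hε.ne')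
  have hb' : (b : ℂ) ≠ 0 := Complex.ofReal_ne_zero.2 hb.ne'
  have h_I : Complex.I ^ ((-b : ℝ) : ℂ) ≠ 0 := by simp [Complex.cpow_eq_zero_iff]
  rw [integral_Ioi_rpow_mul_resolvent_cpow hb x hε]
  field_simp

theorem integrable_prod_rpow_mul_resolvent_cpow_mul (hb : 0 < b) (hε : 0 < ε) (hX : Measurable X)
    (hh : Integrable h μ) :
    Integrable (Function.uncurry fun (a : α) (σ : ℝ) => ((σ ^ (b - 1) : ℝ) : ℂ) *
      ((X a : ℂ) + ((ε + σ : ℝ) : ℂ) * Complex.I) ^ ((-(b + 1) : ℝ) : ℂ) * h a)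
      (μ.prod (volume.restrict (Ioi 0))) := by
  refine (hh.norm.mul_prod (integrableOn_Ioi_rpow_mul_add_rpow hb hε)).mono' ?_ ?_
  · exact (by fun_prop : Measurable fun z : α × ℝ => ((z.2 ^ (b - 1) : ℝ) : ℂ) *
      ((X z.1 : ℂ) + ((ε + z.2 : ℝ) : ℂ) * Complex.I) ^
        ((-(b + 1) : ℝ) : ℂ)).aestronglyMeasurable.mul hh.1.comp_fst
  · have h_mem : ∀ᵐ z : α × ℝ ∂(μ.prod (volume.restrict (Ioi 0))), z.2 ∈ Ioi (0 : ℝ) :=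
      Measure.quasiMeasurePreserving_snd.ae (ae_restrict_mem measurableSet_Ioi)
    filter_upwards [h_mem] with z (hz : 0 < z.2)
    rw [Function.uncurry_def, norm_mul, norm_mul, Complex.norm_cpow_real, Complex.norm_real,
      Real.norm_of_nonneg (by positivity), mul_comm]
    gcongr ‖h _‖ * (_ * ?_)
    exact Real.rpow_le_rpow_of_nonpos (by positivity) (le_norm_ofReal_add_mul_I _ _) (by linarith)

variable [SFinite μ]

theorem norm_integral_inv_mul_le (hb : 0 < b) (hε : 0 < ε) (hX : Measurable X)
    (hh : Integrable h μ) :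
    ‖∫ a, ((X a : ℂ) + ε * Complex.I)⁻¹ * h a ∂μ‖ ≤
      b * ∫ σ in Ioi (0 : ℝ), σ ^ (b - 1) *
        ‖∫ a, ((X a : ℂ) + ((ε + σ : ℝ) : ℂ) * Complex.I) ^ ((-(b + 1) : ℝ) : ℂ) * h a ∂μ‖ := by
  have h_I : ‖Complex.I ^ ((-b : ℝ) : ℂ)‖ = 1 := by
    rw [Complex.norm_cpow_real, Complex.norm_I, Real.one_rpow]
  simp_rw [inv_eq_integral_Ioi_rpow_mul_cpow hb _ hε, mul_assoc _ _ (h _), ← integral_mul_const]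
  rw [integral_const_mul, norm_mul, norm_mul, norm_inv, h_I, Complex.norm_real,
    Real.norm_of_nonneg hb.le, inv_one, mul_one,
    integral_integral_swap (integrable_prod_rpow_mul_resolvent_cpow_mul hb hε hX hh)]
  gcongr
  refine (norm_integral_le_integral_norm _).trans_eq (setIntegral_congr_fun measurableSet_Ioi ?_)
  intro σ (hσ : 0 < σ)
  simp_rw [mul_assoc]
  rw [integral_const_mul, norm_mul, Complex.norm_real, Real.norm_of_nonneg (by positivity)]

theorem norm_integral_inv_mul_le_of_cpow_le {A D : ℝ} (hb : 0 < b) (hc : 0 < c) (hε : 0 < ε)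
    (hX : Measurable X) (hh : Integrable h μ)
    (hA : ∀ t : ℝ, 0 < t →
      ‖∫ a, ((X a : ℂ) + t * Complex.I) ^ ((-(b + 1) : ℝ) : ℂ) * h a ∂μ‖ ≤ A)
    (hD : ∀ t : ℝ, 0 < t →
      ‖∫ a, ((X a : ℂ) + t * Complex.I) ^ ((-(b + 1) : ℝ) : ℂ) * h a ∂μ‖ ≤ t ^ (-b - c) * D) :
    ‖∫ a, ((X a : ℂ) + ε * Complex.I)⁻¹ * h a ∂μ‖ ≤
      (1 + b / c) * (A ^ (c / (b + c)) * D ^ (b / (b + c))) := by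
  have hD0 : 0 ≤ D := (norm_nonneg _).trans (by simpa using hD 1 one_pos)
  have h_split := setIntegral_Ioi_rpow_mul_le hb hc (A := A) (D := D)
    (φ := fun σ => ‖∫ a, ((X a : ℂ) + ((ε + σ : ℝ) : ℂ) * Complex.I) ^
      ((-(b + 1) : ℝ) : ℂ) * h a ∂μ‖)
    (fun _ _ => norm_nonneg _) (fun σ hσ => hA (ε + σ) (by positivity))
    (fun σ hσ => (hD (ε + σ) (by positivity)).trans (by
      gcongr ?_ * D
      exact Real.rpow_le_rpow_of_nonpos hσ (by linarith) (by linarith)))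
  calc _ ≤ b * ((1 / b + 1 / c) * (A ^ (c / (b + c)) * D ^ (b / (b + c)))) :=
        (norm_integral_inv_mul_le hb hε hX hh).trans (by gcongr)
    _ = (1 + b / c) * (A ^ (c / (b + c)) * D ^ (b / (b + c))) := by field_simp

end Subordination

/-! ### Resolvent forms -/

section ResolventForm
open scoped FourierTransform ComplexConjugate

theorem integral_mul_le_sqrt_mul_sqrt {α : Type*} [MeasurableSpace α] {μ : Measure α}
    {φ ψ : α → ℝ} (hφ0 : ∀ x, 0 ≤ φ x) (hψ0 : ∀ x, 0 ≤ ψ x) (hφ : MemLp φ 2 μ)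
    (hψ : MemLp ψ 2 μ) : ∫ x, φ x * ψ x ∂μ ≤ √(∫ x, φ x ^ 2 ∂μ) * √(∫ x, ψ x ^ 2 ∂μ) := by
  simpa [Real.sqrt_eq_rpow] using integral_mul_le_Lp_mul_Lq_of_nonneg
    Real.HolderConjugate.two_two (ae_of_all _ hφ0) (ae_of_all _ hψ0) (by simpa using hφ)
    (by simpa using hψ)

theorem integral_norm_sq_eq_toReal_eLpNorm_sq {α F : Type*} [MeasurableSpace α]
    [NormedAddCommGroup F] {μ : Measure α} {f : α → F} (hf : MemLp f 2 μ) :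
    ∫ x, ‖f x‖ ^ 2 ∂μ = (eLpNorm f 2 μ).toReal ^ 2 := by
  have h_nonneg : 0 ≤ ∫ x, ‖f x‖ ^ 2 ∂μ := by positivity
  simpa [toReal_eLpNorm hf.1, lpNorm_eq_integral_norm_rpow_toReal two_ne_zero
    ENNReal.ofNat_ne_top hf.1] using (Real.rpow_inv_natCast_pow h_nonneg two_ne_zero).symm

theorem memLp_conj {α : Type*} [MeasurableSpace α] {μ : Measure α} {g : α → ℂ} {p : ENNReal}
    (hg : MemLp g p μ) : MemLp (fun x => conj (g x)) p μ :=
  hg.of_le (Complex.continuous_conj.comp_aestronglyMeasurable hg.1)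
    (ae_of_all _ fun x => (RCLike.norm_conj (g x)).le)

theorem im_inv_ofReal_add_mul_I (x t : ℝ) :
    (((x : ℂ) + t * Complex.I)⁻¹).im = -(t / (x ^ 2 + t ^ 2)) := by
  rw [Complex.inv_im, ← Complex.sq_norm, norm_ofReal_add_mul_I_sq, neg_div]
  simp

variable {E : Type*} [NormedAddCommGroup E] {f g : E → ℂ} {ε t : ℝ}

theorem norm_resolventPow_le_mul_sqrt {b : ℝ} (hb : 0 ≤ b) (ht : 0 < t) (ξ : E) :
    ‖resolventPow (b + 1) t ξ‖ ≤
      t ^ (-b - 1 / 2) * √(t / (helmholtzSymbol ξ ^ 2 + t ^ 2)) := by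
  have hz := norm_ofReal_add_mul_I_pos (helmholtzSymbol ξ) ht
  rw [norm_resolventPow, ← norm_ofReal_add_mul_I_sq, Real.sqrt_div ht.le, Real.sqrt_sq hz.le,
    Real.sqrt_eq_rpow, neg_add', Real.rpow_sub_one hz.ne', ← mul_div_assoc, ← Real.rpow_add ht,
    show -b - 1 / 2 + 1 / 2 = -b by ring]
  gcongr ?_ / _
  exact Real.rpow_le_rpow_of_nonpos ht (le_norm_ofReal_add_mul_I _ t) (by linarith)

variable [InnerProductSpace ℝ E] [FiniteDimensional ℝ E] [MeasurableSpace E] [BorelSpace E]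

local notation "dimE" => (Module.finrank ℝ E : ℝ)

/-- The sesquilinear form `⟨(-Δ - 4π² + iε)⁻¹ f, g⟩`, written on the Fourier side. -/
def resolventForm (ε : ℝ) (f g : E → ℂ) : ℂ :=
  ∫ ξ, ((helmholtzSymbol ξ : ℂ) + ε * Complex.I)⁻¹ * (𝓕 f ξ * conj (𝓕 g ξ))

/-- The imaginary part of `-⟨(-Δ - 4π² + iε)⁻¹ f, f⟩`: the squared `L²` norm of `𝓕 f` smoothed
about the unit sphere by a Poisson kernel. -/
def poissonForm (ε : ℝ) (f : E → ℂ) : ℝ :=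
  ∫ ξ, ε / (helmholtzSymbol ξ ^ 2 + ε ^ 2) * ‖𝓕 f ξ‖ ^ 2

theorem integral_norm_sq_fourier (hf : Integrable f) (hf2 : MemLp f 2) :
    ∫ ξ, ‖𝓕 f ξ‖ ^ 2 = ∫ x, ‖f x‖ ^ 2 := by
  rw [integral_norm_sq_eq_toReal_eLpNorm_sq hf2,
    integral_norm_sq_eq_toReal_eLpNorm_sq (memLp_two_fourier hf hf2), eLpNorm_two_fourier hf hf2]

theorem integrable_fourier_mul_conj_fourier (hf : Integrable f) (hf2 : MemLp f 2)
    (hg : Integrable g) (hg2 : MemLp g 2) : Integrable fun ξ => 𝓕 f ξ * conj (𝓕 g ξ) :=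
  (memLp_two_fourier hf hf2).integrable_mul (memLp_conj (memLp_two_fourier hg hg2))

theorem integrable_resolvent_mul (hε : 0 < ε) {h : E → ℂ} (hh : Integrable h) :
    Integrable fun ξ => ((helmholtzSymbol ξ : ℂ) + ε * Complex.I)⁻¹ * h ξ := by
  refine hh.bdd_mul (c := ε⁻¹)
    (by fun_prop : Measurable fun ξ : E => _).aestronglyMeasurable (ae_of_all _ fun ξ => ?_)
  rw [norm_inv]
  exact inv_anti₀ hε (le_norm_ofReal_add_mul_I _ ε)

theorem poissonForm_le_norm_resolventForm (hε : 0 < ε) (hf : Integrable f) (hf2 : MemLp f 2) :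
    poissonForm ε f ≤ ‖resolventForm ε f f‖ := by
  have h_im := Complex.imCLM.integral_comp_comm
    (integrable_resolvent_mul hε (integrable_fourier_mul_conj_fourier hf hf2 hf hf2))
  calc poissonForm ε f = -(resolventForm ε f f).im := by
        rw [resolventForm, ← Complex.imCLM_apply, ← h_im, ← integral_neg, poissonForm]
        congr 1 with ξ
        rw [Complex.imCLM_apply, Complex.mul_conj, Complex.im_mul_ofReal, im_inv_ofReal_add_mul_I,
          Complex.normSq_eq_norm_sq]
        ring
    _ ≤ ‖resolventForm ε f f‖ := (neg_le_abs _).trans (Complex.abs_im_le_norm _)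

theorem resolventForm_swap (ε : ℝ) (f g : E → ℂ) :
    resolventForm ε g f = resolventForm ε (fun x => conj (f (-x))) fun x => conj (g (-x)) := by
  unfold resolventForm
  congr 1 with ξ
  rw [← conj_fourier, ← conj_fourier, Complex.conj_conj, mul_comm (𝓕 g ξ)]

theorem norm_integral_mul_fourier_mul_conj_fourier_le_of_norm_le {M : E → ℂ} {w : E → ℝ} {K : ℝ}
    (hK : 0 ≤ K) (hw0 : ∀ ξ, 0 ≤ w ξ) (hM : ∀ ξ, ‖M ξ‖ ≤ K * w ξ)
    (hwf : MemLp (fun ξ => w ξ * ‖𝓕 f ξ‖) 2) (hg : Integrable g) (hg2 : MemLp g 2) :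
    ‖∫ ξ, M ξ * (𝓕 f ξ * conj (𝓕 g ξ))‖ ≤
      K * (√(∫ ξ, (w ξ * ‖𝓕 f ξ‖) ^ 2) * √(∫ x, ‖g x‖ ^ 2)) := by
  have hg_norm := (memLp_two_fourier hg hg2).norm
  calc ‖∫ ξ, M ξ * (𝓕 f ξ * conj (𝓕 g ξ))‖ ≤ ∫ ξ, K * (w ξ * ‖𝓕 f ξ‖ * ‖𝓕 g ξ‖) := by
        refine norm_integral_le_of_norm_le ((hwf.integrable_mul hg_norm).const_mul K)
          (ae_of_all _ fun ξ => ?_)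
        rw [norm_mul, norm_mul, RCLike.norm_conj, mul_assoc (w ξ), ← mul_assoc K]
        gcongr
        exact hM ξ
    _ ≤ K * (√(∫ ξ, (w ξ * ‖𝓕 f ξ‖) ^ 2) * √(∫ x, ‖g x‖ ^ 2)) := by
        rw [integral_const_mul, ← integral_norm_sq_fourier hg hg2]
        gcongr
        exact integral_mul_le_sqrt_mul_sqrt (fun ξ => mul_nonneg (hw0 ξ) (norm_nonneg _))
          (fun _ => norm_nonneg _) hwf hg_norm

theorem norm_integral_resolventPow_mul_le_L2 {b : ℝ} (hb : 0 ≤ b + 1) (ht : 0 < t)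
    (hf : Integrable f) (hf2 : MemLp f 2) (hg : Integrable g) (hg2 : MemLp g 2) :
    ‖∫ ξ, resolventPow (b + 1) t ξ * (𝓕 f ξ * conj (𝓕 g ξ))‖ ≤
      t ^ (-b - 1) * (√(∫ x, ‖f x‖ ^ 2) * √(∫ x, ‖g x‖ ^ 2)) := by
  have h := norm_integral_mul_fourier_mul_conj_fourier_le_of_norm_le (f := f) (w := fun _ => 1)
    (Real.rpow_nonneg ht.le (-b - 1)) (fun _ => zero_le_one)
    (fun ξ => by rw [mul_one, ← neg_add']; exact norm_resolventPow_le hb ht ξ)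
    (by simpa using (memLp_two_fourier hf hf2).norm) hg hg2
  simpa [integral_norm_sq_fourier hf hf2] using h

theorem norm_integral_resolventPow_mul_le_poissonForm {b : ℝ} (hb : 0 ≤ b) (ht : 0 < t)
    (hf : Integrable f) (hf2 : MemLp f 2) (hg : Integrable g) (hg2 : MemLp g 2) :
    ‖∫ ξ, resolventPow (b + 1) t ξ * (𝓕 f ξ * conj (𝓕 g ξ))‖ ≤
      t ^ (-b - 1 / 2) * (√(poissonForm t f) * √(∫ x, ‖g x‖ ^ 2)) := by
  have hf_norm := (memLp_two_fourier hf hf2).norm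
  have hwf : MemLp (fun ξ => √(t / (helmholtzSymbol ξ ^ 2 + t ^ 2)) * ‖𝓕 f ξ‖) 2 := by
    refine hf_norm.of_le_mul (c := √(t / t ^ 2))
      ((by fun_prop : Measurable fun ξ : E => _).aestronglyMeasurable.mul hf_norm.1)
      (ae_of_all _ fun ξ => ?_)
    rw [norm_mul, Real.norm_of_nonneg (Real.sqrt_nonneg _)]
    gcongr
    exact le_add_of_nonneg_left (sq_nonneg _)
  have h := norm_integral_mul_fourier_mul_conj_fourier_le_of_norm_le
    (Real.rpow_nonneg ht.le (-b - 1 / 2)) (fun _ => Real.sqrt_nonneg _)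
    (norm_resolventPow_le_mul_sqrt hb ht) hwf hg hg2
  rwa [show ∫ ξ, (√(t / (helmholtzSymbol ξ ^ 2 + t ^ 2)) * ‖𝓕 f ξ‖) ^ 2 = poissonForm t f by
    unfold poissonForm
    congr 1 with ξ
    rw [mul_pow, Real.sq_sqrt (by positivity)]] at h

theorem norm_integral_resolventPow_mul_le_L1 [Nontrivial E] (ht : 0 < t) (hf : Integrable f)
    (hg : Integrable g) :
    ‖∫ ξ, resolventPow ((dimE + 1) / 2) t ξ * (𝓕 f ξ * conj (𝓕 g ξ))‖ ≤
      (fourierExpNormConst dimE)⁻¹ * ((∫ x, ‖f x‖) * ∫ x, ‖g x‖) := by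
  simp_rw [← mul_assoc]
  rw [mul_assoc]
  exact norm_integral_mul_fourier_mul_conj_fourier_le
    (integrable_resolventPow (by linarith) ht) (norm_fourier_resolventPow_le ht) hf hg

theorem norm_resolventForm_le_of_resolventPow_le {c D : ℝ} (hE : 1 < Module.finrank ℝ E)
    (hc : 0 < c) (hε : 0 < ε) (hf : Integrable f) (hf2 : MemLp f 2) (hg : Integrable g)
    (hg2 : MemLp g 2)
    (hD : ∀ t, 0 < t → ‖∫ ξ, resolventPow ((dimE + 1) / 2) t ξ * (𝓕 f ξ * conj (𝓕 g ξ))‖ ≤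
      t ^ (-((dimE - 1) / 2) - c) * D) :
    ‖resolventForm ε f g‖ ≤ (1 + (dimE - 1) / 2 / c) *
      (((fourierExpNormConst dimE)⁻¹ * ((∫ x, ‖f x‖) * ∫ x, ‖g x‖)) ^
        (c / ((dimE - 1) / 2 + c)) * D ^ ((dimE - 1) / 2 / ((dimE - 1) / 2 + c))) := by
  have : Nontrivial E := Module.nontrivial_of_finrank_pos (zero_lt_one.trans hE)
  have hb : 0 < (dimE - 1) / 2 := by
    have : (1 : ℝ) < dimE := by exact_mod_cast hE
    linarith
  have h_exponent : (dimE - 1) / 2 + 1 = (dimE + 1) / 2 := by ring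
  refine norm_integral_inv_mul_le_of_cpow_le hb hc hε continuous_helmholtzSymbol.measurable
    (integrable_fourier_mul_conj_fourier hf hf2 hg hg2) (fun t ht => ?_) (fun t ht => ?_)
  · rw [h_exponent]
    exact norm_integral_resolventPow_mul_le_L1 ht hf hg
  · rw [h_exponent]
    exact hD t ht

theorem exists_poissonForm_le (hE : 1 < Module.finrank ℝ E) :
    ∃ C : ℝ, 0 < C ∧ ∀ (ε : ℝ) (f : E → ℂ), 0 < ε → Integrable f → MemLp f 2 →
      poissonForm ε f ≤ C * ((∫ x, ‖f x‖) ^ (4 / (dimE + 1)) *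
        (∫ x, ‖f x‖ ^ 2) ^ ((dimE - 1) / (dimE + 1))) := by
  have h_dim : (1 : ℝ) < dimE := by exact_mod_cast hE
  have hc := inv_pos.2 (fourierExpNormConst_pos (Nat.cast_nonneg (Module.finrank ℝ E)))
  refine ⟨(1 + (dimE - 1) / 2) * (fourierExpNormConst dimE)⁻¹ ^ (2 / (dimE + 1)),
    by have := sub_pos.2 h_dim; positivity, fun ε f hε hf hf2 => ?_⟩
  have h := norm_resolventForm_le_of_resolventPow_le hE one_pos hε hf hf2 hf hf2 fun t ht => by
    simpa only [show (dimE - 1) / 2 + 1 = (dimE + 1) / 2 by ring] using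
      norm_integral_resolventPow_mul_le_L2 (b := (dimE - 1) / 2) (by linarith) ht hf hf2 hf hf2
  have h_nonneg : 0 ≤ ∫ x, ‖f x‖ := by positivity
  rw [div_one, show (dimE - 1) / 2 + 1 = (dimE + 1) / 2 by ring, one_div_div,
    div_div_div_cancel_right₀ two_ne_zero,
    Real.mul_self_sqrt (by positivity), Real.mul_rpow hc.le (by positivity), ← sq,
    ← Real.rpow_natCast, ← Real.rpow_mul h_nonneg,
    show ((2 : ℕ) : ℝ) * (2 / (dimE + 1)) = 4 / (dimE + 1) by push_cast; ring] at h
  refine ((poissonForm_le_norm_resolventForm hε hf hf2).trans h).trans_eq ?_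
  ring

/-- The form is controlled asymmetrically: `f` enters through its Poisson form, which is already
bounded, and `g` only through its `L¹` and `L²` norms. -/
theorem exists_norm_resolventForm_le (hE : 1 < Module.finrank ℝ E) :
    ∃ C : ℝ, 0 < C ∧ ∀ (ε : ℝ) (f g : E → ℂ), 0 < ε → Integrable f → MemLp f 2 →
      Integrable g → MemLp g 2 → ‖resolventForm ε f g‖ ≤
        C * (((∫ x, ‖f x‖) * ∫ x, ‖g x‖) ^ (1 / dimE) *
          (√((∫ x, ‖f x‖) ^ (4 / (dimE + 1)) * (∫ x, ‖f x‖ ^ 2) ^ ((dimE - 1) / (dimE + 1))) *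
            √(∫ x, ‖g x‖ ^ 2)) ^ (1 - 1 / dimE)) := by
  obtain ⟨C, hC, h_poisson⟩ := exists_poissonForm_le hE
  have h_dim : (1 : ℝ) < dimE := by exact_mod_cast hE
  have hc := inv_pos.2 (fourierExpNormConst_pos (Nat.cast_nonneg (Module.finrank ℝ E)))
  refine ⟨(1 + (dimE - 1) / 2 / (1 / 2)) *
    ((fourierExpNormConst dimE)⁻¹ ^ (1 / dimE) * √C ^ (1 - 1 / dimE)),
    by have := sub_pos.2 h_dim; positivity, fun ε f g hε hf hf2 hg hg2 => ?_⟩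
  have h := norm_resolventForm_le_of_resolventPow_le hE one_half_pos hε hf hf2 hg hg2
    (D := √C * (√((∫ x, ‖f x‖) ^ (4 / (dimE + 1)) *
      (∫ x, ‖f x‖ ^ 2) ^ ((dimE - 1) / (dimE + 1))) * √(∫ x, ‖g x‖ ^ 2))) fun t ht => by
    rw [show (dimE + 1) / 2 = (dimE - 1) / 2 + 1 by ring, ← mul_assoc √C, ← Real.sqrt_mul hC.le]
    refine (norm_integral_resolventPow_mul_le_poissonForm (by linarith) ht hf hf2 hg hg2).trans ?_
    gcongr
    exact h_poisson t f ht hf hf2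
  rw [show (dimE - 1) / 2 + 1 / 2 = dimE / 2 by ring,
    show (1 : ℝ) / 2 / (dimE / 2) = 1 / dimE by field_simp,
    show (dimE - 1) / 2 / (dimE / 2) = 1 - 1 / dimE by field_simp,
    Real.mul_rpow hc.le (by positivity), Real.mul_rpow (Real.sqrt_nonneg C) (by positivity)] at h
  refine h.trans_eq ?_
  ring

end ResolventForm

/-! ### The dual estimate on dyadic level sets -/

section DyadicSums

theorem summable_pow_natAbs {ρ : ℝ} (h0 : 0 ≤ ρ) (h1 : ρ < 1) :
    Summable fun j : ℤ => ρ ^ j.natAbs :=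
  Summable.of_nat_of_neg (by simpa using summable_geometric_of_lt_one h0 h1)
    (by simpa using summable_geometric_of_lt_one h0 h1)

theorem sum_sum_pow_natAbs_mul_sqrt_le {ρ : ℝ} (h0 : 0 ≤ ρ) (h1 : ρ < 1) (S : Finset ℤ)
    {e : ℤ → ℝ} (he : ∀ k, 0 ≤ e k) :
    ∑ k ∈ S, ∑ l ∈ S, ρ ^ (k - l).natAbs * √(e k * e l) ≤
      (∑' j : ℤ, ρ ^ j.natAbs) * ∑ k ∈ S, e k := by
  have h_row (k : ℤ) : ∑ l ∈ S, ρ ^ (k - l).natAbs ≤ ∑' j : ℤ, ρ ^ j.natAbs := by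
    rw [← Finset.sum_image (s := S) (g := fun l => k - l) (f := fun j : ℤ => ρ ^ j.natAbs)
      (fun _ _ _ _ h => by simpa using h)]
    exact (summable_pow_natAbs h0 h1).sum_le_tsum _ fun _ _ => by positivity
  have h_left : ∑ k ∈ S, ∑ l ∈ S, ρ ^ (k - l).natAbs * e k ≤
      (∑' j : ℤ, ρ ^ j.natAbs) * ∑ k ∈ S, e k := by
    simp_rw [Finset.mul_sum, ← Finset.sum_mul]
    exact Finset.sum_le_sum fun k _ => mul_le_mul_of_nonneg_right (h_row k) (he k)
  have h_symm : ∑ k ∈ S, ∑ l ∈ S, ρ ^ (k - l).natAbs * e l =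
      ∑ k ∈ S, ∑ l ∈ S, ρ ^ (k - l).natAbs * e k := by
    rw [Finset.sum_comm]
    refine Finset.sum_congr rfl fun k _ => Finset.sum_congr rfl fun l _ => ?_
    rw [← Int.natAbs_neg, neg_sub]
  have h_am_gm (k l : ℤ) : √(e k * e l) ≤ (e k + e l) / 2 :=
    Real.sqrt_le_iff.2 ⟨by linarith [he k, he l], by nlinarith [sq_nonneg (e k - e l)]⟩
  calc ∑ k ∈ S, ∑ l ∈ S, ρ ^ (k - l).natAbs * √(e k * e l)
      ≤ ∑ k ∈ S, ∑ l ∈ S, (ρ ^ (k - l).natAbs * e k + ρ ^ (k - l).natAbs * e l) / 2 := by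
        gcongr with k _ l _
        rw [← mul_add, mul_div_assoc]
        gcongr
        exact h_am_gm k l
    _ = ∑ k ∈ S, ∑ l ∈ S, ρ ^ (k - l).natAbs * e k := by
        simp_rw [← Finset.sum_div, Finset.sum_add_distrib, h_symm, add_self_div_two]
    _ ≤ _ := h_left

theorem rpow_mul_rpow_le_sqrt_mul_rpow {x y J α β : ℝ} (hx : 0 ≤ x) (hy : 0 ≤ y) (hxJ : x ≤ J)
    (hyJ : y ≤ J) (hα : 1 / 2 ≤ α) (hβ : 1 / 2 ≤ β) :
    x ^ α * y ^ β ≤ √(x * y) * J ^ (α + β - 1) := by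
  have h_le {z γ : ℝ} (hz : 0 ≤ z) (hzJ : z ≤ J) (hγ : 1 / 2 ≤ γ) :
      z ^ γ ≤ √z * J ^ (γ - 1 / 2) := by
    calc z ^ γ = √z * z ^ (γ - 1 / 2) := by
          rw [Real.sqrt_eq_rpow, ← Real.rpow_add_of_nonneg hz (by norm_num) (by linarith),
            add_sub_cancel]
      _ ≤ √z * J ^ (γ - 1 / 2) := by
          gcongr
  have hJ : 0 ≤ J := hx.trans hxJ
  calc x ^ α * y ^ β ≤ √x * J ^ (α - 1 / 2) * (√y * J ^ (β - 1 / 2)) := by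
        gcongr
        exacts [h_le hx hxJ hα, h_le hy hyJ hβ]
    _ = √(x * y) * J ^ (α + β - 1) := by
        rw [Real.sqrt_mul hx, show α + β - 1 = α - 1 / 2 + (β - 1 / 2) by ring,
          Real.rpow_add_of_nonneg hJ (by linarith) (by linarith)]
        ring

theorem mul_mul_rpow_mul_rpow_eq {u v m n q α β : ℝ} (hu : 0 < u) (hv : 0 < v) (hm : 0 ≤ m)
    (hn : 0 ≤ n) (hq : q * (α + β) = 2) :
    u * v * (m ^ α * n ^ β) =
      (u / v) ^ (1 - q * α) * ((u ^ q * m) ^ α * (v ^ q * n) ^ β) := by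
  have h_u : u ^ (1 - q * α) * u ^ (q * α) = u := by
    rw [← Real.rpow_add hu, sub_add_cancel, Real.rpow_one]
  have h_v : v ^ (q * β) = v * v ^ (1 - q * α) := by
    rw [show q * β = 1 + (1 - q * α) by linarith, Real.rpow_add hv, Real.rpow_one]
  rw [Real.div_rpow hu.le hv.le, Real.mul_rpow (by positivity) hm, Real.mul_rpow (by positivity) hn,
    ← Real.rpow_mul hu.le, ← Real.rpow_mul hv.le, h_v]
  have h_v0 : v ^ (1 - q * α) ≠ 0 := by positivity
  field_simp
  linear_combination (-(m ^ α * n ^ β)) * h_u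

theorem exists_sum_sum_le_of_dyadic {q α β : ℝ} (hα : 1 / 2 ≤ α) (hβ : 1 / 2 ≤ β)
    (hq : q * (α + β) = 2) (hqα : 1 < q * α) :
    ∃ G, 0 < G ∧ ∀ (S : Finset ℤ) (m : ℤ → ℝ) (a : ℤ → ℤ → ℝ), (∀ k, 0 ≤ m k) →
      (∀ k l, l ≤ k → a k l ≤ 2 ^ k * 2 ^ l * (m k ^ α * m l ^ β) ∧
        a l k ≤ 2 ^ k * 2 ^ l * (m k ^ α * m l ^ β)) →
      ∑ k ∈ S, ∑ l ∈ S, a k l ≤ G * (∑ k ∈ S, ((2 : ℝ) ^ k) ^ q * m k) ^ (α + β) := by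
  set ρ : ℝ := 2 ^ (1 - q * α)
  have h0 : 0 ≤ ρ := by positivity
  have h1 : ρ < 1 := Real.rpow_lt_one_of_one_lt_of_neg one_lt_two (by linarith)
  refine ⟨∑' j : ℤ, ρ ^ j.natAbs,
    (summable_pow_natAbs h0 h1).tsum_pos (fun _ => by positivity) 0 (by simp), ?_⟩
  intro S m a hm ha
  set e : ℤ → ℝ := fun k => ((2 : ℝ) ^ k) ^ q * m k
  have he (k : ℤ) : 0 ≤ e k := mul_nonneg (by positivity) (hm k)
  set J := ∑ k ∈ S, e k
  have heJ {k : ℤ} (hk : k ∈ S) : e k ≤ J := Finset.single_le_sum (fun l _ => he l) hk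
  have h_decay {k l : ℤ} (hlk : l ≤ k) (hk : k ∈ S) (hl : l ∈ S) :
      2 ^ k * 2 ^ l * (m k ^ α * m l ^ β) ≤
        ρ ^ (k - l).natAbs * √(e k * e l) * J ^ (α + β - 1) := by
    have h_ratio : ((2 : ℝ) ^ k / 2 ^ l) ^ (1 - q * α) = ρ ^ (k - l).natAbs := by
      rw [← zpow_sub₀ two_ne_zero, ← Real.rpow_intCast, ← Real.rpow_natCast, ← Real.rpow_mul
        two_pos.le, ← Real.rpow_mul two_pos.le, Nat.cast_natAbs, abs_of_nonneg (by linarith),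
        mul_comm]
    rw [mul_mul_rpow_mul_rpow_eq (by positivity) (by positivity) (hm k) (hm l) hq, h_ratio,
      mul_assoc]
    refine mul_le_mul_of_nonneg_left ?_ (by positivity)
    exact rpow_mul_rpow_le_sqrt_mul_rpow (he k) (he l) (heJ hk) (heJ hl) hα hβ
  have h_entry {k l : ℤ} (hk : k ∈ S) (hl : l ∈ S) :
      a k l ≤ ρ ^ (k - l).natAbs * √(e k * e l) * J ^ (α + β - 1) := by
    rcases le_total l k with hlk | hkl
    · exact (ha k l hlk).1.trans (h_decay hlk hk hl)
    · rw [← Int.natAbs_neg, neg_sub, mul_comm (e k)]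
      exact (ha l k hkl).2.trans (h_decay hkl hl hk)
  have hJ : 0 ≤ J := Finset.sum_nonneg fun k _ => he k
  calc ∑ k ∈ S, ∑ l ∈ S, a k l
      ≤ (∑ k ∈ S, ∑ l ∈ S, ρ ^ (k - l).natAbs * √(e k * e l)) * J ^ (α + β - 1) := by
        simp_rw [Finset.sum_mul]
        exact Finset.sum_le_sum fun k hk => Finset.sum_le_sum fun l hl => h_entry hk hl
    _ ≤ (∑' j : ℤ, ρ ^ j.natAbs) * J * J ^ (α + β - 1) := by
        gcongr
        exact sum_sum_pow_natAbs_mul_sqrt_le h0 h1 S he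
    _ = (∑' j : ℤ, ρ ^ j.natAbs) * J ^ (α + β) := by
        rw [mul_assoc, ← Real.rpow_one_add' hJ (by linarith), add_sub_cancel]

end DyadicSums

section DyadicLevel
variable {X : Type*} {F : Type*} [NormedAddCommGroup F]

/-- The set where `2 ^ k ≤ ‖f‖ < 2 ^ (k + 1)`. -/
def dyadicLevel (f : X → F) (k : ℤ) : Set X :=
  {x | (2 : ℝ) ^ k ≤ ‖f x‖ ∧ ‖f x‖ < 2 ^ (k + 1)}

theorem norm_indicator_dyadicLevel_le (f : X → F) (k : ℤ) (x : X) :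
    ‖(dyadicLevel f k).indicator f x‖ ≤ (dyadicLevel f k).indicator (fun _ => 2 ^ (k + 1)) x := by
  by_cases hx : x ∈ dyadicLevel f k
  · simpa [hx] using hx.2.le
  · simp [hx]

theorem dyadicLevel_eq_preimage_log (f : X → F) (k : ℤ) :
    dyadicLevel f k = {x | f x ≠ 0} ∩ (fun x => Int.log 2 ‖f x‖) ⁻¹' {k} := by
  ext x
  constructor
  · rintro ⟨hk, hk'⟩
    have hx : 0 < ‖f x‖ := lt_of_lt_of_le (by positivity) hk
    refine ⟨norm_pos_iff.1 hx, le_antisymm ?_ ?_⟩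
    · exact Int.lt_add_one_iff.1 ((Int.lt_zpow_iff_log_lt one_lt_two hx).1 (by exact_mod_cast hk'))
    · exact (Int.zpow_le_iff_le_log one_lt_two hx).1 (by exact_mod_cast hk)
  · rintro ⟨hx, rfl⟩
    exact ⟨by exact_mod_cast Int.zpow_log_le_self one_lt_two (norm_pos_iff.2 hx),
      by exact_mod_cast Int.lt_zpow_succ_log_self one_lt_two ‖f x‖⟩

theorem pairwise_disjoint_dyadicLevel (f : X → F) :
    Pairwise (Function.onFun Disjoint (dyadicLevel f)) := fun k l hkl => by
  simp_rw [Function.onFun, dyadicLevel_eq_preimage_log]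
  exact ((Set.disjoint_singleton.2 hkl).preimage _).mono Set.inter_subset_right
    Set.inter_subset_right

theorem sum_indicator_dyadicLevel {f : X → F} {S : Finset ℤ}
    (hS : ∀ x, f x ≠ 0 → Int.log 2 ‖f x‖ ∈ S) :
    ∑ k ∈ S, (dyadicLevel f k).indicator f = f := by
  ext x
  rw [Finset.sum_apply]
  by_cases hx : f x = 0
  · rw [hx]
    exact Finset.sum_eq_zero fun k _ => Set.indicator_apply_eq_zero.2 fun _ => hx
  · rw [Finset.sum_eq_single_of_mem _ (hS x hx) fun l _ hl => ?_]
    · simp [dyadicLevel_eq_preimage_log, hx]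
    · simp [dyadicLevel_eq_preimage_log, hl.symm]

variable [MeasurableSpace X] {μ : Measure X} {f : X → F}

theorem measure_dyadicLevel_lt_top (hμ : μ {x | f x ≠ 0} < ⊤) (k : ℤ) :
    μ (dyadicLevel f k) < ⊤ :=
  (measure_mono <| (dyadicLevel_eq_preimage_log f k).trans_subset Set.inter_subset_left).trans_lt hμ

variable [MeasurableSpace F] [BorelSpace F]

theorem measurableSet_dyadicLevel (hf : Measurable f) (k : ℤ) : MeasurableSet (dyadicLevel f k) :=
  (measurableSet_le measurable_const hf.norm).inter (measurableSet_lt hf.norm measurable_const)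

theorem sum_zpow_rpow_mul_measureReal_dyadicLevel_le {q : ℝ} (hf : Measurable f)
    (hμ : μ {x | f x ≠ 0} < ⊤) (hq : 0 ≤ q) (hfq : Integrable (fun x => ‖f x‖ ^ q) μ)
    (S : Finset ℤ) :
    ∑ k ∈ S, ((2 : ℝ) ^ k) ^ q * μ.real (dyadicLevel f k) ≤ ∫ x, ‖f x‖ ^ q ∂μ := by
  have h_level (k : ℤ) :
      ((2 : ℝ) ^ k) ^ q * μ.real (dyadicLevel f k) ≤ ∫ x in dyadicLevel f k, ‖f x‖ ^ q ∂μ := by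
    refine setIntegral_ge_of_const_le_real (measurableSet_dyadicLevel hf k)
      (measure_dyadicLevel_lt_top hμ k).ne (fun x hx => ?_) hfq.integrableOn
    exact Real.rpow_le_rpow (by positivity) hx.1 hq
  calc ∑ k ∈ S, ((2 : ℝ) ^ k) ^ q * μ.real (dyadicLevel f k)
      ≤ ∑ k ∈ S, ∫ x in dyadicLevel f k, ‖f x‖ ^ q ∂μ := Finset.sum_le_sum fun k _ => h_level k
    _ = ∫ x in ⋃ k ∈ S, dyadicLevel f k, ‖f x‖ ^ q ∂μ :=
        (integral_biUnion_finset S (fun k _ => measurableSet_dyadicLevel hf k)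
          (fun k _ l _ hkl => pairwise_disjoint_dyadicLevel f hkl)
          fun k _ => hfq.integrableOn).symm
    _ ≤ ∫ x, ‖f x‖ ^ q ∂μ :=
        setIntegral_le_integral hfq (ae_of_all _ fun x => by positivity)

end DyadicLevel

section RestrictedBound
open scoped FourierTransform ComplexConjugate

theorem sqrt_mul_rpow_mul_rpow_eq {u m θ : ℝ} (hu : 0 < u) (hm : 0 ≤ m) (hθ0 : 0 ≤ θ)
    (hθ1 : θ ≤ 1) :
    √((u * m) ^ (2 * θ) * (u ^ 2 * m) ^ (1 - θ)) = u * m ^ ((1 + θ) / 2) := by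
  rw [Real.sqrt_eq_iff_mul_self_eq (by positivity) (by positivity)]
  have h_u : u ^ (2 * θ) * (u ^ 2) ^ (1 - θ) = u ^ 2 := by
    rw [Real.rpow_mul hu.le, Real.rpow_two, ← Real.rpow_add (by positivity), add_sub_cancel,
      Real.rpow_one]
  have h_m : m ^ (2 * θ) * m ^ (1 - θ) = m ^ ((1 + θ) / 2) * m ^ ((1 + θ) / 2) := by
    rw [← Real.rpow_add_of_nonneg hm (by positivity) (by linarith),
      ← Real.rpow_add_of_nonneg hm (by positivity) (by positivity)]
    congr 1
    ring
  rw [Real.mul_rpow hu.le hm, Real.mul_rpow (by positivity) hm]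
  linear_combination (m ^ (2 * θ) * m ^ (1 - θ)) * h_u + u ^ 2 * h_m

theorem mul_rpow_mul_mul_rpow_eq {u v m n a τ : ℝ} (hu : 0 < u) (hv : 0 < v) (hm : 0 ≤ m)
    (hn : 0 ≤ n) (ha : 0 ≤ a) (hτ0 : 0 ≤ τ) (hτ1 : τ ≤ 1) :
    (u * m * (v * n)) ^ τ * (u * m ^ a * (v * √n)) ^ (1 - τ) =
      u * v * (m ^ (τ + (1 - τ) * a) * n ^ (τ + (1 - τ) / 2)) := by
  have h_uv : (u * v) ^ τ * (u * v) ^ (1 - τ) = u * v := by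
    rw [← Real.rpow_add (by positivity), add_sub_cancel, Real.rpow_one]
  have h_sqrt : √n ^ (1 - τ) = n ^ ((1 - τ) / 2) := by
    rw [Real.sqrt_eq_rpow, ← Real.rpow_mul hn, one_div_mul_eq_div]
  rw [mul_mul_mul_comm u m, mul_mul_mul_comm u _ v, Real.mul_rpow (x := u * v) (by positivity)
    (by positivity), Real.mul_rpow (x := u * v) (by positivity) (by positivity),
    Real.mul_rpow hm hn, Real.mul_rpow (x := m ^ a) (by positivity) (by positivity), h_sqrt,
    ← Real.rpow_mul hm, mul_comm a,
    Real.rpow_add_of_nonneg hm hτ0 (mul_nonneg (sub_nonneg.2 hτ1) ha),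
    Real.rpow_add_of_nonneg hn hτ0 (by linarith)]
  linear_combination (m ^ τ * n ^ τ * m ^ ((1 - τ) * a) * n ^ ((1 - τ) / 2)) * h_uv

/-- `f` obeys the `L¹` and `L²` bounds of a function that is at most `u` on a set of measure `m`
and vanishes elsewhere, the building blocks of a restricted-type estimate. -/
structure RestrictedBound {X : Type*} [MeasurableSpace X] (μ : Measure X) (f : X → ℂ) (u m : ℝ) :
    Prop where
  integrable : Integrable f μ
  memLp_two : MemLp f 2 μ
  integral_norm_le : ∫ x, ‖f x‖ ∂μ ≤ u * m
  integral_norm_sq_le : ∫ x, ‖f x‖ ^ 2 ∂μ ≤ u ^ 2 * m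

theorem memLp_of_norm_le_indicator {X F : Type*} [MeasurableSpace X] [NormedAddCommGroup F]
    {μ : Measure X} {f : X → F} {A : Set X} {u : ℝ} (hf : AEStronglyMeasurable f μ)
    (hA : MeasurableSet A) (hμ : μ A < ⊤) (h : ∀ x, ‖f x‖ ≤ A.indicator (fun _ => u) x)
    (p : ENNReal) : MemLp f p μ :=
  (memLp_indicator_const p hA u (Or.inr hμ.ne)).mono' hf (ae_of_all _ h)

theorem restrictedBound_of_norm_le_indicator {X : Type*} [MeasurableSpace X] {μ : Measure X}
    {f : X → ℂ} {A : Set X} {u : ℝ} (hf : AEStronglyMeasurable f μ) (hA : MeasurableSet A)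
    (hμ : μ A < ⊤) (h : ∀ x, ‖f x‖ ≤ A.indicator (fun _ => u) x) :
    RestrictedBound μ f u (μ.real A) := by
  have h_memLp := memLp_of_norm_le_indicator hf hA hμ h
  have h_int (w : ℝ) : Integrable (A.indicator fun _ => w) μ :=
    (integrable_indicator_iff hA).2 (integrableOn_const hμ.ne)
  have h_val (w : ℝ) : ∫ x, A.indicator (fun _ => w) x ∂μ = w * μ.real A := by
    rw [integral_indicator_const w hA, smul_eq_mul, mul_comm]
  refine ⟨memLp_one_iff_integrable.1 (h_memLp 1), h_memLp 2, ?_, ?_⟩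
  · rw [← h_val]
    exact integral_mono_of_nonneg (ae_of_all _ fun _ => norm_nonneg _) (h_int u) (ae_of_all _ h)
  · rw [← h_val]
    refine integral_mono_of_nonneg (ae_of_all _ fun _ => by positivity) (h_int _)
      (ae_of_all _ fun x => ?_)
    by_cases hx : x ∈ A
    · simpa [hx] using pow_le_pow_left₀ (norm_nonneg _) (h x) 2
    · have := h x
      simp_all

variable {E : Type*} [NormedAddCommGroup E] [InnerProductSpace ℝ E] [FiniteDimensional ℝ E]
  [MeasurableSpace E] [BorelSpace E] {f g : E → ℂ} {u v m n ε : ℝ}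

local notation "dimE" => (Module.finrank ℝ E : ℝ)

theorem RestrictedBound.conj_comp_neg (hf : RestrictedBound volume f u m) :
    RestrictedBound volume (fun x => conj (f (-x))) u m where
  integrable := Complex.conjLIE.integrable_comp_iff.2 hf.integrable.comp_neg
  memLp_two := memLp_conj (hf.memLp_two.comp_measurePreserving (Measure.measurePreserving_neg _))
  integral_norm_le := by
    simpa only [RCLike.norm_conj, integral_neg_eq_self (fun x => ‖f x‖)] using hf.integral_norm_le
  integral_norm_sq_le := by
    simpa only [RCLike.norm_conj, integral_neg_eq_self (fun x => ‖f x‖ ^ 2)]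
      using hf.integral_norm_sq_le

theorem exists_norm_resolventForm_le_of_restrictedBound (hE : 1 < Module.finrank ℝ E) :
    ∃ C, 0 < C ∧ ∀ (ε u v m n : ℝ) (f g : E → ℂ), 0 < ε → 0 < u → 0 < v → 0 ≤ m → 0 ≤ n →
      RestrictedBound volume f u m → RestrictedBound volume g v n →
      ‖resolventForm ε f g‖ ≤ C * (u * v *
        (m ^ (1 / 2 + (3 * dimE - 1) / (2 * dimE * (dimE + 1))) *
          n ^ (1 / 2 + 1 / (2 * dimE)))) := by
  obtain ⟨C, hC, h_bound⟩ := exists_norm_resolventForm_le hE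
  refine ⟨C, hC, fun ε u v m n f g hε hu hv hm hn hf hg => ?_⟩
  have hd : 1 < dimE := by exact_mod_cast hE
  have h_inv : 1 / dimE ≤ 1 := (div_le_one (by linarith)).2 hd.le
  have h_θ : 2 / (dimE + 1) ≤ 1 := (div_le_one (by linarith)).2 (by linarith)
  have h_θ' : (dimE - 1) / (dimE + 1) = 1 - 2 / (dimE + 1) := by
    field_simp
    ring
  have h_α : 1 / 2 + (3 * dimE - 1) / (2 * dimE * (dimE + 1)) =
      1 / dimE + (1 - 1 / dimE) * ((1 + 2 / (dimE + 1)) / 2) := by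
    field_simp
    ring
  have h_β : 1 / 2 + 1 / (2 * dimE) = 1 / dimE + (1 - 1 / dimE) / 2 := by
    field_simp
    ring
  rw [h_α, h_β, ← mul_rpow_mul_mul_rpow_eq hu hv hm hn (by positivity) (by positivity) h_inv,
    ← sqrt_mul_rpow_mul_rpow_eq hu hm (by positivity) h_θ, ← h_θ', ← mul_div_assoc,
    show (2 : ℝ) * 2 = 4 by norm_num]
  have h_sqrt : √(∫ x, ‖g x‖ ^ 2) ≤ v * √n :=
    (Real.sqrt_le_sqrt hg.integral_norm_sq_le).trans_eq
      (by rw [Real.sqrt_mul (by positivity), Real.sqrt_sq hv.le])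
  refine (h_bound ε f g hε hf.integrable hf.memLp_two hg.integrable hg.memLp_two).trans ?_
  gcongr
  exacts [hf.integral_norm_le, hg.integral_norm_le, hf.integral_norm_le,
    hf.integral_norm_sq_le]

theorem resolventForm_sum_sum (hε : 0 < ε) (S : Finset ℤ) {F : ℤ → E → ℂ}
    (hF : ∀ k, Integrable (F k)) (hF2 : ∀ k, MemLp (F k) 2) :
    resolventForm ε (∑ k ∈ S, F k) (∑ k ∈ S, F k) =
      ∑ k ∈ S, ∑ l ∈ S, resolventForm ε (F k) (F l) := by
  have h_fourier (ξ : E) : 𝓕 (∑ k ∈ S, F k) ξ = ∑ k ∈ S, 𝓕 (F k) ξ := by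
    simp_rw [Real.fourier_eq, Finset.sum_apply, Finset.smul_sum]
    exact integral_finsetSum _ fun k _ => (Real.fourierIntegral_convergent_iff ξ).2 (hF k)
  have h_int (k l : ℤ) : Integrable fun ξ =>
      ((helmholtzSymbol ξ : ℂ) + ε * Complex.I)⁻¹ * (𝓕 (F k) ξ * conj (𝓕 (F l) ξ)) :=
    integrable_resolvent_mul hε (integrable_fourier_mul_conj_fourier (hF k) (hF2 k) (hF l) (hF2 l))
  simp_rw [resolventForm, h_fourier, map_sum, Finset.sum_mul_sum, Finset.mul_sum]
  rw [integral_finsetSum _ fun k _ => integrable_finsetSum _ fun l _ => h_int k l]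
  exact Finset.sum_congr rfl fun k _ => integral_finsetSum _ fun l _ => h_int k l

theorem exists_norm_resolventForm_indicator_dyadicLevel_le (hE : 1 < Module.finrank ℝ E) :
    ∃ C, 0 < C ∧ ∀ (ε : ℝ) (f : E → ℂ) (k l : ℤ), 0 < ε → Measurable f →
      volume {x | f x ≠ 0} < ⊤ →
      max ‖resolventForm ε ((dyadicLevel f k).indicator f) ((dyadicLevel f l).indicator f)‖
        ‖resolventForm ε ((dyadicLevel f l).indicator f) ((dyadicLevel f k).indicator f)‖ ≤
      C * (2 ^ k * 2 ^ l *
        (volume.real (dyadicLevel f k) ^ (1 / 2 + (3 * dimE - 1) / (2 * dimE * (dimE + 1))) *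
          volume.real (dyadicLevel f l) ^ (1 / 2 + 1 / (2 * dimE)))) := by
  obtain ⟨C, hC, h_pair⟩ := exists_norm_resolventForm_le_of_restrictedBound hE
  refine ⟨C * 4, by positivity, fun ε f k l hε hf hμ => ?_⟩
  have hF (k : ℤ) : RestrictedBound volume ((dyadicLevel f k).indicator f) (2 ^ (k + 1))
      (volume.real (dyadicLevel f k)) :=
    restrictedBound_of_norm_le_indicator
      (hf.indicator (measurableSet_dyadicLevel hf k)).aestronglyMeasurable
      (measurableSet_dyadicLevel hf k) (measure_dyadicLevel_lt_top hμ k)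
      (norm_indicator_dyadicLevel_le f k)
  have h_pow : (2 : ℝ) ^ (k + 1) * 2 ^ (l + 1) = 4 * (2 ^ k * 2 ^ l) := by
    rw [zpow_add_one₀ two_ne_zero, zpow_add_one₀ two_ne_zero]
    ring
  rw [mul_assoc C, ← mul_assoc 4, ← h_pow,
    resolventForm_swap ε ((dyadicLevel f k).indicator f) ((dyadicLevel f l).indicator f)]
  exact max_le
    (h_pair ε _ _ _ _ _ _ hε (by positivity) (by positivity) measureReal_nonneg
      measureReal_nonneg (hF k) (hF l))
    (h_pair ε _ _ _ _ _ _ hε (by positivity) (by positivity) measureReal_nonneg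
      measureReal_nonneg (hF k).conj_comp_neg (hF l).conj_comp_neg)

theorem exists_sum_resolventForm_indicator_dyadicLevel_le (hE : 1 < Module.finrank ℝ E) :
    ∃ C, 0 < C ∧ ∀ (ε : ℝ) (f : E → ℂ) (S : Finset ℤ), 0 < ε → Measurable f →
      volume {x | f x ≠ 0} < ⊤ →
      ∑ k ∈ S, ∑ l ∈ S, ‖resolventForm ε ((dyadicLevel f k).indicator f)
        ((dyadicLevel f l).indicator f)‖ ≤
      C * (∑ k ∈ S, ((2 : ℝ) ^ k) ^ (2 * (dimE + 1) / (dimE + 3)) *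
        volume.real (dyadicLevel f k)) ^ ((dimE + 3) / (dimE + 1)) := by
  have hd : 1 < dimE := by exact_mod_cast hE
  set q := 2 * (dimE + 1) / (dimE + 3) with hq_def
  obtain ⟨C, hC, h_pair⟩ := exists_norm_resolventForm_indicator_dyadicLevel_le hE
  set α := 1 / 2 + (3 * dimE - 1) / (2 * dimE * (dimE + 1)) with hα_def
  set β := 1 / 2 + 1 / (2 * dimE) with hβ_def
  have hαβ : α + β = (dimE + 3) / (dimE + 1) := by
    rw [hα_def, hβ_def]
    field_simp
    ring
  have hq : q * (α + β) = 2 := by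
    rw [hαβ, hq_def]
    field_simp
  have hβα : β < α := by
    rw [hα_def, hβ_def, add_lt_add_iff_left,
      div_lt_div_iff₀ (by positivity) (by positivity)]
    nlinarith
  have hβ : 1 / 2 ≤ β := le_add_of_nonneg_right (by positivity)
  have hq0 : 0 < q := by positivity
  obtain ⟨G, hG, h_sum⟩ :=
    exists_sum_sum_le_of_dyadic (hβ.trans hβα.le) hβ hq (by nlinarith)
  refine ⟨C * G, by positivity, fun ε f S hε hf hμ => ?_⟩
  have h_total := h_sum S (fun k => volume.real (dyadicLevel f k))
    (fun k l => ‖resolventForm ε ((dyadicLevel f k).indicator f)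
      ((dyadicLevel f l).indicator f)‖ / C)
    (fun _ => measureReal_nonneg) fun k l _ => by
      rw [div_le_iff₀' hC, div_le_iff₀' hC]
      exact max_le_iff.1 (h_pair ε f k l hε hf hμ)
  simp_rw [← Finset.sum_div] at h_total
  rwa [div_le_iff₀' hC, hαβ, ← mul_assoc] at h_total

theorem exists_poissonForm_le_rpow_integral_rpow (hE : 1 < Module.finrank ℝ E) :
    ∃ C, 0 < C ∧ ∀ (ε a b : ℝ) (f : E → ℂ), 0 < ε → 0 < a → Measurable f →
      volume {x | f x ≠ 0} < ⊤ → (∀ x, f x ≠ 0 → a ≤ ‖f x‖ ∧ ‖f x‖ ≤ b) →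
      poissonForm ε f ≤
        C * (∫ x, ‖f x‖ ^ (2 * (dimE + 1) / (dimE + 3))) ^ ((dimE + 3) / (dimE + 1)) := by
  obtain ⟨C, hC, h_sum⟩ := exists_sum_resolventForm_indicator_dyadicLevel_le hE
  refine ⟨C, hC, fun ε a b f hε ha hf hμ hab => ?_⟩
  set S := Finset.Icc (Int.log 2 a) (Int.log 2 b)
  have hS (x : E) (hx : f x ≠ 0) : Int.log 2 ‖f x‖ ∈ S :=
    Finset.mem_Icc.2 ⟨Int.log_mono_right ha (hab x hx).1,
      Int.log_mono_right (norm_pos_iff.2 hx) (hab x hx).2⟩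
  have h_memLp (k : ℤ) (p : ENNReal) : MemLp ((dyadicLevel f k).indicator f) p :=
    memLp_of_norm_le_indicator (hf.indicator (measurableSet_dyadicLevel hf k)).aestronglyMeasurable
      (measurableSet_dyadicLevel hf k) (measure_dyadicLevel_lt_top hμ k)
      (norm_indicator_dyadicLevel_le f k) p
  have hf_memLp (p : ENNReal) : MemLp f p := by
    rw [← sum_indicator_dyadicLevel hS]
    exact memLp_finsetSum' _ fun k _ => h_memLp k p
  have hq : 0 < 2 * (dimE + 1) / (dimE + 3) := by positivity
  have hfq : Integrable fun x => ‖f x‖ ^ (2 * (dimE + 1) / (dimE + 3)) := by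
    simpa [hq.le] using (hf_memLp (ENNReal.ofReal (2 * (dimE + 1) / (dimE + 3))))
      |>.integrable_norm_rpow (by simpa using hq) ENNReal.ofReal_ne_top
  calc poissonForm ε f ≤ ‖resolventForm ε f f‖ :=
        poissonForm_le_norm_resolventForm hε (memLp_one_iff_integrable.1 (hf_memLp 1)) (hf_memLp 2)
    _ = ‖∑ k ∈ S, ∑ l ∈ S, resolventForm ε ((dyadicLevel f k).indicator f)
          ((dyadicLevel f l).indicator f)‖ := by
        rw [← resolventForm_sum_sum hε S (fun k => memLp_one_iff_integrable.1 (h_memLp k 1))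
          (fun k => h_memLp k 2), sum_indicator_dyadicLevel hS]
    _ ≤ ∑ k ∈ S, ∑ l ∈ S, ‖resolventForm ε ((dyadicLevel f k).indicator f)
          ((dyadicLevel f l).indicator f)‖ :=
        (norm_sum_le _ _).trans (Finset.sum_le_sum fun k _ => norm_sum_le _ _)
    _ ≤ _ := h_sum ε f S hε hf hμ
    _ ≤ _ := by
        gcongr
        exact sum_zpow_rpow_mul_measureReal_dyadicLevel_le hf hμ hq.le hfq S

end RestrictedBound

/-! ### The endpoint estimate by duality -/

section Duality
open scoped FourierTransform ComplexConjugate NNReal ENNReal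

theorem norm_integral_mul_conj_le_of_weight {X : Type*} [MeasurableSpace X] {μ : Measure X}
    {φ : X → ℝ} {g h : X → ℂ} (hφ0 : ∀ x, 0 < φ x) (hφ : Measurable φ)
    (hg : AEStronglyMeasurable g μ) (hh : AEStronglyMeasurable h μ)
    (hφg : Integrable (fun x => (φ x)⁻¹ * ‖g x‖ ^ 2) μ)
    (hφh : Integrable (fun x => φ x * ‖h x‖ ^ 2) μ) :
    ‖∫ x, h x * conj (g x) ∂μ‖ ≤
      √(∫ x, φ x * ‖h x‖ ^ 2 ∂μ) * √(∫ x, (φ x)⁻¹ * ‖g x‖ ^ 2 ∂μ) := by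
  have h_sq_h (x : X) : (√(φ x) * ‖h x‖) ^ 2 = φ x * ‖h x‖ ^ 2 := by
    rw [mul_pow, Real.sq_sqrt (hφ0 x).le]
  have h_sq_g (x : X) : (√(φ x)⁻¹ * ‖g x‖) ^ 2 = (φ x)⁻¹ * ‖g x‖ ^ 2 := by
    rw [mul_pow, Real.sq_sqrt (inv_nonneg.2 (hφ0 x).le)]
  have h_memLp_h : MemLp (fun x => √(φ x) * ‖h x‖) 2 μ :=
    (memLp_two_iff_integrable_sq (hφ.sqrt.aestronglyMeasurable.mul hh.norm)).2
      (hφh.congr (ae_of_all _ fun x => (h_sq_h x).symm))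
  have h_memLp_g : MemLp (fun x => √(φ x)⁻¹ * ‖g x‖) 2 μ :=
    (memLp_two_iff_integrable_sq (hφ.inv.sqrt.aestronglyMeasurable.mul hg.norm)).2
      (hφg.congr (ae_of_all _ fun x => (h_sq_g x).symm))
  have h_cauchy_schwarz := integral_mul_le_sqrt_mul_sqrt (fun _ => by positivity)
    (fun _ => by positivity) h_memLp_h h_memLp_g
  simp_rw [h_sq_h, h_sq_g] at h_cauchy_schwarz
  refine (norm_integral_le_integral_norm _).trans (Eq.trans_le ?_ h_cauchy_schwarz)
  congr with x
  rw [norm_mul, RCLike.norm_conj, mul_mul_mul_comm, ← Real.sqrt_mul (hφ0 x).le,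
    mul_inv_cancel₀ (hφ0 x).ne', Real.sqrt_one, one_mul]

theorem norm_integral_mul_conj_le_sqrt_mul_sqrt {X : Type*} [MeasurableSpace X] {μ : Measure X}
    {w : X → ℝ} {g h : X → ℂ} {ε : ℝ} (hε : 0 < ε) (hw : Measurable w) (hg : MemLp g 2 μ)
    (hh : MemLp h 2 μ) (hwh : MemLp (fun x => (w x : ℂ) * h x) 2 μ) :
    ‖∫ x, h x * conj (g x) ∂μ‖ ≤
      √((∫ x, ‖(w x : ℂ) * h x‖ ^ 2 ∂μ) / ε + ε * ∫ x, ‖h x‖ ^ 2 ∂μ) *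
        √(∫ x, ε / (w x ^ 2 + ε ^ 2) * ‖g x‖ ^ 2 ∂μ) := by
  have h_pos (x : X) : 0 < w x ^ 2 + ε ^ 2 := by positivity
  have h_split (x : X) : (w x ^ 2 + ε ^ 2) / ε * ‖h x‖ ^ 2 =
      ‖(w x : ℂ) * h x‖ ^ 2 / ε + ε * ‖h x‖ ^ 2 := by
    rw [norm_mul, mul_pow, Complex.norm_real, Real.norm_eq_abs, sq_abs]
    field_simp
  have h_int_wh : Integrable (fun x => ‖(w x : ℂ) * h x‖ ^ 2 / ε) μ :=
    (hwh.integrable_norm_pow two_ne_zero).div_const ε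
  have h_int_h : Integrable (fun x => ε * ‖h x‖ ^ 2) μ :=
    (hh.integrable_norm_pow two_ne_zero).const_mul ε
  have h_int_g : Integrable (fun x => ε / (w x ^ 2 + ε ^ 2) * ‖g x‖ ^ 2) μ := by
    refine (hg.integrable_norm_pow two_ne_zero).bdd_mul (c := ε⁻¹)
      (by fun_prop : Measurable fun x => _).aestronglyMeasurable (ae_of_all _ fun x => ?_)
    rw [Real.norm_of_nonneg (by positivity), div_le_iff₀ (h_pos x), ← div_eq_inv_mul,
      le_div_iff₀ hε]
    nlinarith [sq_nonneg (w x)]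
  have h_weight := norm_integral_mul_conj_le_of_weight (φ := fun x => (w x ^ 2 + ε ^ 2) / ε)
    (fun x => div_pos (h_pos x) hε) (by fun_prop) hg.1 hh.1 (by simpa only [inv_div] using h_int_g)
    ((h_int_wh.add h_int_h).congr (ae_of_all _ fun x => (h_split x).symm))
  simp_rw [h_split, inv_div] at h_weight
  rwa [integral_add h_int_wh h_int_h, integral_div, integral_const_mul] at h_weight

theorem rpow_one_sub_le_of_le_sqrt_mul_sqrt {I C P θ : ℝ} (hI : 0 ≤ I) (hC : 0 ≤ C) (hP : 0 ≤ P)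
    (hθ : θ < 1) (h : I ≤ √P * √(C * I ^ (1 + θ))) : I ^ (1 - θ) ≤ C * P := by
  rcases hI.eq_or_lt with rfl | hI'
  · rw [Real.zero_rpow (sub_pos.2 hθ).ne']
    positivity
  · have h_split : I ^ (1 - θ) * I ^ (1 + θ) = I ^ 2 := by
      rw [← Real.rpow_add hI', ← Real.rpow_natCast]
      norm_num
    refine le_of_mul_le_mul_right ?_ (Real.rpow_pos_of_pos hI' (1 + θ))
    calc I ^ (1 - θ) * I ^ (1 + θ) ≤ (√P * √(C * I ^ (1 + θ))) ^ 2 := by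
          rw [h_split]
          gcongr
      _ = C * P * I ^ (1 + θ) := by
          rw [mul_pow, Real.sq_sqrt hP, Real.sq_sqrt (by positivity)]
          ring

theorem le_two_mul_sqrt_of_forall_le_div_add_mul {X a d : ℝ} (ha : 0 ≤ a) (hd : 0 ≤ d)
    (h : ∀ ε, 0 < ε → X ≤ d / ε + ε * a) : X ≤ 2 * √(d * a) := by
  rcases le_total X 0 with hX | hX
  · exact hX.trans (by positivity)
  have h_quadratic (ε : ℝ) : 0 ≤ a * (ε * ε) + -X * ε + d := by
    rcases le_or_gt ε 0 with hε | hε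
    · nlinarith [mul_nonneg ha (mul_self_nonneg ε), mul_nonneg hX (neg_nonneg.2 hε)]
    · have := mul_le_mul_of_nonneg_right (h ε hε) hε.le
      rw [add_mul, div_mul_cancel₀ d hε.ne'] at this
      linarith
  have h_discrim := discrim_le_zero h_quadratic
  rw [discrim, neg_sq] at h_discrim
  calc X ≤ √(2 ^ 2 * (d * a)) := Real.le_sqrt_of_sq_le (by linarith)
    _ = 2 * √(d * a) := by rw [Real.sqrt_mul (by positivity), Real.sqrt_sq zero_le_two]

theorem le_coe_mul_rpow_mul_of_ne_top {C : ℝ≥0} {X a b : ℝ≥0∞} {r : ℝ} (hC : C ≠ 0) (hr : 0 < r)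
    (hX : b = 0 → X = 0) (h : a ≠ ⊤ → X ≤ C * (a * b) ^ r) : X ≤ C * (a * b) ^ r := by
  rcases eq_or_ne b 0 with hb | hb
  · exact (hX hb).trans_le zero_le
  rcases eq_or_ne a ⊤ with ha | ha
  · rw [ha, ENNReal.top_mul hb, ENNReal.top_rpow_of_pos hr, ENNReal.mul_top (by simpa using hC)]
    exact le_top
  · exact h ha

section Truncation
variable {X : Type*}

/-- The set where `(n + 1)⁻¹ ≤ ‖v‖ ≤ n + 1`; these sets exhaust `{v ≠ 0}`. -/
def truncationSet {F : Type*} [Norm F] (v : X → F) (n : ℕ) : Set X :=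
  {x | ((n : ℝ) + 1)⁻¹ ≤ ‖v x‖ ∧ ‖v x‖ ≤ n + 1}

/-- The truncation of `‖v‖ ^ (p - 2) * v`, the function dual to `v` in `L^p`. -/
def truncatedDual (p : ℝ) (v : X → ℂ) (n : ℕ) : X → ℂ :=
  (truncationSet v n).indicator fun x => ((‖v x‖ ^ (p - 2) : ℝ) : ℂ) * v x

section Norm
variable {F : Type*} [NormedAddCommGroup F] {v : X → F} {n : ℕ}

theorem norm_pos_of_mem_truncationSet {x : X} (hx : x ∈ truncationSet v n) : 0 < ‖v x‖ :=
  lt_of_lt_of_le (by positivity) hx.1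

theorem monotone_truncationSet (v : X → F) : Monotone (truncationSet v) := fun m n hmn x hx => by
  have h_le : (m : ℝ) ≤ n := by exact_mod_cast hmn
  exact ⟨(inv_anti₀ (by positivity) (by linarith)).trans hx.1, hx.2.trans (by linarith)⟩

theorem iUnion_truncationSet (v : X → F) : ⋃ n, truncationSet v n = {x | v x ≠ 0} := by
  ext x
  refine ⟨fun hx => ?_, fun (hx : v x ≠ 0) => ?_⟩
  · obtain ⟨n, hn⟩ := Set.mem_iUnion.1 hx
    exact norm_pos_iff.1 (norm_pos_of_mem_truncationSet hn)
  · obtain ⟨n, hn⟩ := exists_nat_ge (max ‖v x‖ ‖v x‖⁻¹)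
    obtain ⟨hn1, hn2⟩ := max_le_iff.1 hn
    exact Set.mem_iUnion.2 ⟨n, inv_le_of_inv_le₀ (norm_pos_iff.2 hx) (by linarith), by linarith⟩

variable [MeasurableSpace X] {μ : Measure X}

theorem measure_truncationSet_lt_top {p : ℝ≥0∞} (hp : p ≠ 0) (hp' : p ≠ ⊤) (hv : MemLp v p μ)
    (n : ℕ) : μ (truncationSet v n) < ⊤ := by
  refine (measure_mono fun x hx => ?_).trans_lt (hv.meas_ge_lt_top'_enorm hp hp'
    (ε := ENNReal.ofReal ((n : ℝ) + 1)⁻¹) (by simpa using by positivity) (by simp))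
  rw [Set.mem_ofPred_eq, ← ofReal_norm]
  exact ENNReal.ofReal_le_ofReal hx.1

theorem eLpNorm_le_of_forall_setLIntegral_truncationSet_le {p : ℝ} (hp : 0 < p) {K : ℝ≥0∞}
    (h : ∀ n, ∫⁻ x in truncationSet v n, ‖v x‖ₑ ^ p ∂μ ≤ K) :
    eLpNorm v (ENNReal.ofReal p) μ ≤ K ^ (1 / p) := by
  have h_support : ∫⁻ x, ‖v x‖ₑ ^ p ∂μ = ∫⁻ x in ⋃ n, truncationSet v n, ‖v x‖ₑ ^ p ∂μ := by
    rw [iUnion_truncationSet, setLIntegral_eq_of_support_subset]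
    intro x hx h0
    simp [h0, hp] at hx
  rw [eLpNorm_eq_lintegral_rpow_enorm_toReal (by simpa using hp) ENNReal.ofReal_ne_top,
    ENNReal.toReal_ofReal hp.le, h_support,
    setLIntegral_iUnion_of_directed _ (monotone_truncationSet v).directed_le]
  gcongr
  exact iSup_le h

variable [MeasurableSpace F] [BorelSpace F]

theorem measurableSet_truncationSet (hv : Measurable v) (n : ℕ) :
    MeasurableSet (truncationSet v n) :=
  (measurableSet_le measurable_const hv.norm).inter (measurableSet_le hv.norm measurable_const)

end Norm

variable {v : X → ℂ} {n : ℕ} {p q : ℝ}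

theorem norm_truncatedDual_of_mem {x : X} (hx : x ∈ truncationSet v n) :
    ‖truncatedDual p v n x‖ = ‖v x‖ ^ (p - 1) := by
  have hpos := norm_pos_of_mem_truncationSet hx
  rw [truncatedDual, Set.indicator_of_mem hx, norm_mul, Complex.norm_real,
    Real.norm_of_nonneg (by positivity), ← Real.rpow_add_one hpos.ne']
  ring_nf

theorem truncatedDual_of_notMem {x : X} (hx : x ∉ truncationSet v n) :
    truncatedDual p v n x = 0 :=
  Set.indicator_of_notMem hx _

theorem mem_truncationSet_of_truncatedDual_ne_zero {x : X} (hx : truncatedDual p v n x ≠ 0) :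
    x ∈ truncationSet v n :=
  Set.mem_of_indicator_ne_zero hx

theorem norm_truncatedDual_bounds (hp : 1 ≤ p) {x : X} (hx : truncatedDual p v n x ≠ 0) :
    ((n : ℝ) + 1)⁻¹ ^ (p - 1) ≤ ‖truncatedDual p v n x‖ ∧
      ‖truncatedDual p v n x‖ ≤ ((n : ℝ) + 1) ^ (p - 1) := by
  have hx := mem_truncationSet_of_truncatedDual_ne_zero hx
  rw [norm_truncatedDual_of_mem hx]
  exact ⟨Real.rpow_le_rpow (by positivity) hx.1 (by linarith),
    Real.rpow_le_rpow (by positivity) hx.2 (by linarith)⟩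

theorem norm_truncatedDual_rpow (hq : q ≠ 0) (hpq : (p - 1) * q = p) (x : X) :
    ‖truncatedDual p v n x‖ ^ q = (truncationSet v n).indicator (fun x => ‖v x‖ ^ p) x := by
  by_cases hx : x ∈ truncationSet v n
  · rw [norm_truncatedDual_of_mem hx, ← Real.rpow_mul (norm_nonneg _), hpq,
      Set.indicator_of_mem hx]
  · rw [truncatedDual_of_notMem hx, norm_zero, Real.zero_rpow hq, Set.indicator_of_notMem hx]

theorem mul_conj_truncatedDual (x : X) :
    v x * conj (truncatedDual p v n x) =
      ((truncationSet v n).indicator (fun x => ‖v x‖ ^ p) x : ℝ) := by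
  by_cases hx : x ∈ truncationSet v n
  · rw [truncatedDual, Set.indicator_of_mem hx, Set.indicator_of_mem hx, map_mul,
      Complex.conj_ofReal, mul_left_comm, Complex.mul_conj, ← Complex.ofReal_mul,
      Complex.normSq_eq_norm_sq, ← Real.rpow_two,
      ← Real.rpow_add (norm_pos_of_mem_truncationSet hx), sub_add_cancel]
  · rw [truncatedDual_of_notMem hx, Set.indicator_of_notMem hx, map_zero, mul_zero,
      Complex.ofReal_zero]

variable [MeasurableSpace X] {μ : Measure X}

theorem measurable_truncatedDual (hv : Measurable v) : Measurable (truncatedDual p v n) :=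
  Measurable.indicator (by fun_prop) (measurableSet_truncationSet hv n)

theorem memLp_truncatedDual {r : ℝ≥0∞} (hr : r ≠ 0) (hr' : r ≠ ⊤) (hv : Measurable v)
    (hvr : MemLp v r μ) (hp : 1 ≤ p) (s : ℝ≥0∞) : MemLp (truncatedDual p v n) s μ := by
  refine memLp_of_norm_le_indicator (u := ((n : ℝ) + 1) ^ (p - 1))
    (measurable_truncatedDual hv).aestronglyMeasurable (measurableSet_truncationSet hv n)
    (measure_truncationSet_lt_top hr hr' hvr n) (fun x => ?_) s
  by_cases hx : truncatedDual p v n x = 0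
  · rw [hx, norm_zero]
    exact Set.indicator_nonneg (fun _ _ => by positivity) x
  · rw [Set.indicator_of_mem (mem_truncationSet_of_truncatedDual_ne_zero hx)]
    exact (norm_truncatedDual_bounds hp hx).2

theorem integral_norm_truncatedDual_rpow (hv : Measurable v) (hq : q ≠ 0)
    (hpq : (p - 1) * q = p) :
    ∫ x, ‖truncatedDual p v n x‖ ^ q ∂μ = ∫ x in truncationSet v n, ‖v x‖ ^ p ∂μ := by
  simp_rw [norm_truncatedDual_rpow hq hpq]
  exact integral_indicator (measurableSet_truncationSet hv n)

theorem integral_mul_conj_truncatedDual (hv : Measurable v) :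
    ∫ x, v x * conj (truncatedDual p v n x) ∂μ =
      (∫ x in truncationSet v n, ‖v x‖ ^ p ∂μ : ℝ) := by
  simp_rw [mul_conj_truncatedDual]
  rw [integral_complex_ofReal, integral_indicator (measurableSet_truncationSet hv n)]

theorem lintegral_truncationSet_rpow {r : ℝ≥0∞} (hr : r ≠ 0) (hr' : r ≠ ⊤) (hv : Measurable v)
    (hvr : MemLp v r μ) (hp : 0 ≤ p) :
    ∫⁻ x in truncationSet v n, ‖v x‖ₑ ^ p ∂μ =
      ENNReal.ofReal (∫ x in truncationSet v n, ‖v x‖ ^ p ∂μ) := by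
  have h_int : IntegrableOn (fun x => ‖v x‖ ^ p) (truncationSet v n) μ :=
    Measure.integrableOn_of_bounded (M := ((n : ℝ) + 1) ^ p)
      (measure_truncationSet_lt_top hr hr' hvr n).ne (by fun_prop)
      ((ae_restrict_iff' (measurableSet_truncationSet hv n)).2 <| ae_of_all _ fun x hx => by
        rw [Real.norm_of_nonneg (by positivity)]
        exact Real.rpow_le_rpow (norm_nonneg _) hx.2 hp)
  rw [ofReal_integral_eq_lintegral_ofReal h_int (ae_of_all _ fun x => by positivity)]
  simp_rw [← ENNReal.ofReal_rpow_of_nonneg (norm_nonneg _) hp, ofReal_norm]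

end Truncation

variable {E : Type*} [NormedAddCommGroup E] [InnerProductSpace ℝ E] [FiniteDimensional ℝ E]
  [MeasurableSpace E] [BorelSpace E]

local notation "dimE" => (Module.finrank ℝ E : ℝ)
local notation "L²" => Lp ℂ 2 (volume : Measure E)

/-- Pairing `v` with its truncated dual function, and using the Poisson kernel of width `ε` as the
weight in the Cauchy–Schwarz inequality, makes the Poisson form of the dual function appear. -/
theorem exists_setIntegral_truncationSet_le (hE : 1 < Module.finrank ℝ E) {p : ℝ}
    (hp : p = 2 * (dimE + 1) / (dimE - 1)) :
    ∃ C, 0 < C ∧ ∀ (v : L²) (n : ℕ) (ε : ℝ), 0 < ε →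
      MemLp (fun ξ => (helmholtzSymbol ξ : ℂ) * (𝓕 v : L²) ξ) 2 →
      ∫ x in truncationSet v n, ‖v x‖ ^ p ≤
        √((∫ ξ, ‖(helmholtzSymbol ξ : ℂ) * (𝓕 v : L²) ξ‖ ^ 2) / ε +
            ε * ∫ ξ, ‖(𝓕 v : L²) ξ‖ ^ 2) *
          √(C * (∫ x in truncationSet v n, ‖v x‖ ^ p) ^ ((dimE + 3) / (dimE + 1))) := by
  have hd : 0 < dimE - 1 := sub_pos.2 (by exact_mod_cast hE)
  have hp1 : 1 ≤ p := by
    rw [hp, one_le_div hd]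
    linarith
  have hpq : (p - 1) * (2 * (dimE + 1) / (dimE + 3)) = p := by
    rw [hp]
    field_simp
    ring
  obtain ⟨C, hC, h_poisson⟩ := exists_poissonForm_le_rpow_integral_rpow hE
  refine ⟨C, hC, fun v n ε hε hv => ?_⟩
  have hvm : Measurable v := (Lp.stronglyMeasurable v).measurable
  have hf (r : ℝ≥0∞) : MemLp (truncatedDual p v n) r :=
    memLp_truncatedDual two_ne_zero ENNReal.ofNat_ne_top hvm (Lp.memLp v) hp1 r
  calc ∫ x in truncationSet v n, ‖v x‖ ^ p
      = ‖∫ ξ, (𝓕 v : L²) ξ * conj (𝓕 (truncatedDual p v n) ξ)‖ := by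
        rw [← integral_mul_conj_eq_integral_fourier_mul_conj_fourier v
          (memLp_one_iff_integrable.1 (hf 1)) (hf 2), integral_mul_conj_truncatedDual hvm,
          Complex.norm_real, Real.norm_of_nonneg (by positivity)]
    _ ≤ _ := norm_integral_mul_conj_le_sqrt_mul_sqrt hε (by fun_prop)
        (memLp_two_fourier (memLp_one_iff_integrable.1 (hf 1)) (hf 2)) (Lp.memLp _) hv
    _ ≤ _ := by
        gcongr
        exact (h_poisson ε _ _ _ hε (by positivity) (measurable_truncatedDual hvm)
          ((measure_mono fun x => mem_truncationSet_of_truncatedDual_ne_zero).trans_lt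
            (measure_truncationSet_lt_top two_ne_zero ENNReal.ofNat_ne_top (Lp.memLp v) n))
          fun x => norm_truncatedDual_bounds hp1).trans_eq
            (by rw [integral_norm_truncatedDual_rpow hvm (by positivity) hpq])

theorem exists_rpow_setIntegral_truncationSet_le (hE : 1 < Module.finrank ℝ E) {p : ℝ}
    (hp : p = 2 * (dimE + 1) / (dimE - 1)) :
    ∃ C, 0 < C ∧ ∀ (v : L²) (n : ℕ),
      MemLp (fun ξ => (helmholtzSymbol ξ : ℂ) * (𝓕 v : L²) ξ) 2 →
      (∫ x in truncationSet v n, ‖v x‖ ^ p) ^ (2 / p) ≤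
        C * √((∫ ξ, ‖(helmholtzSymbol ξ : ℂ) * (𝓕 v : L²) ξ‖ ^ 2) *
          ∫ ξ, ‖(𝓕 v : L²) ξ‖ ^ 2) := by
  have hd : 0 < dimE - 1 := sub_pos.2 (by exact_mod_cast hE)
  have h_exp : (dimE + 3) / (dimE + 1) = 1 + 2 / (dimE + 1) := by
    field_simp
    ring
  have h_exp' : 2 / p = 1 - 2 / (dimE + 1) := by
    rw [hp]
    field_simp
    ring
  obtain ⟨C, hC, h_bound⟩ := exists_setIntegral_truncationSet_le hE hp
  refine ⟨C * 2, by positivity, fun v n hv => ?_⟩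
  rw [mul_assoc, ← div_le_iff₀' hC]
  refine le_two_mul_sqrt_of_forall_le_div_add_mul (by positivity) (by positivity) fun ε hε => ?_
  rw [div_le_iff₀' hC, h_exp']
  refine rpow_one_sub_le_of_le_sqrt_mul_sqrt (by positivity) hC.le (by positivity)
    ((div_lt_one (by linarith)).2 (by linarith)) ?_
  rw [← h_exp]
  exact h_bound v n ε hε hv

theorem exists_eLpNorm_le_rpow_eLpNorm_helmholtzSymbol_mul (hE : 1 < Module.finrank ℝ E) :
    ∃ C : ℝ≥0, ∀ v : L², eLpNorm v (ENNReal.ofReal (2 * (dimE + 1) / (dimE - 1))) volume ≤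
      C * (eLpNorm (fun ξ => (helmholtzSymbol ξ : ℂ) * (𝓕 v : L²) ξ) 2 volume *
        eLpNorm (𝓕 v : L²) 2 volume) ^ (1 / 2 : ℝ) := by
  obtain ⟨p, hp⟩ : ∃ p, p = 2 * (dimE + 1) / (dimE - 1) := ⟨_, rfl⟩
  obtain ⟨C, hC, h_trunc⟩ := exists_rpow_setIntegral_truncationSet_le hE hp
  have hd : 0 < dimE - 1 := sub_pos.2 (by exact_mod_cast hE)
  have hp0 : 0 < p := by
    rw [hp]
    positivity
  lift C to ℝ≥0 using hC.le
  refine ⟨C ^ (1 / 2 : ℝ), fun v => ?_⟩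
  rw [← hp]
  set a := eLpNorm (fun ξ => (helmholtzSymbol ξ : ℂ) * (𝓕 v : L²) ξ) 2 volume
  set b := eLpNorm (𝓕 v : L²) 2 volume with hb_def
  refine le_coe_mul_rpow_mul_of_ne_top (NNReal.rpow_pos hC).ne' one_half_pos (fun hb => ?_)
    fun ha => ?_
  · rw [hb_def, eLpNorm_two_fourier_Lp, eLpNorm_eq_zero_iff (Lp.aestronglyMeasurable v)
      two_ne_zero] at hb
    rw [eLpNorm_congr_ae hb, eLpNorm_zero]
  have h_memLp : MemLp (fun ξ => (helmholtzSymbol ξ : ℂ) * (𝓕 v : L²) ξ) 2 :=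
    ⟨(continuous_helmholtzSymbol.measurable.complex_ofReal.aestronglyMeasurable).mul
      (Lp.aestronglyMeasurable _), ha.lt_top⟩
  have h_ab : √((∫ ξ, ‖(helmholtzSymbol ξ : ℂ) * (𝓕 v : L²) ξ‖ ^ 2) *
      ∫ ξ, ‖(𝓕 v : L²) ξ‖ ^ 2) = (a * b).toReal := by
    rw [integral_norm_sq_eq_toReal_eLpNorm_sq h_memLp,
      integral_norm_sq_eq_toReal_eLpNorm_sq (Lp.memLp _), ← mul_pow, ENNReal.toReal_mul,
      Real.sqrt_sq (by positivity)]
  have hab : a * b ≠ ⊤ := ENNReal.mul_ne_top ha (Lp.eLpNorm_ne_top _)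
  refine (eLpNorm_le_of_forall_setLIntegral_truncationSet_le (K := (C * (a * b)) ^ (p / 2)) hp0
    fun n => ?_).trans_eq ?_
  · rw [lintegral_truncationSet_rpow two_ne_zero ENNReal.ofNat_ne_top
      (Lp.stronglyMeasurable v).measurable (Lp.memLp v) hp0.le,
      ENNReal.ofReal_le_iff_le_toReal (by finiteness), ← ENNReal.toReal_rpow,
      ENNReal.toReal_mul, ENNReal.coe_toReal, ← h_ab, ← inv_div,
      Real.le_rpow_inv_iff_of_pos (by positivity) (by positivity) (by positivity)]
    exact h_trunc v n h_memLp
  · rw [← ENNReal.rpow_mul, show p / 2 * (1 / p) = 1 / 2 by field_simp,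
      ENNReal.mul_rpow_of_nonneg _ _ (by positivity), ENNReal.coe_rpow_of_nonneg _ (by positivity)]

end Duality

/-! ### Frequencies near the unit sphere -/

section BoundedSupport
open scoped NNReal ENNReal

theorem integrable_poisson {ε : ℝ} (hε : ε ≠ 0) (c : ℝ) :
    Integrable fun y : ℝ => ε / ((y - c) ^ 2 + ε ^ 2) := by
  have h_scale (y : ℝ) : ε / ((y - c) ^ 2 + ε ^ 2) = ε⁻¹ * (1 + ((y - c) / ε) ^ 2)⁻¹ := by
    field_simp
    ring
  simp_rw [h_scale]
  exact ((integrable_inv_one_add_sq.comp_div hε).comp_sub_right c).const_mul _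

theorem integral_poisson {ε : ℝ} (hε : 0 < ε) (c : ℝ) :
    ∫ y : ℝ, ε / ((y - c) ^ 2 + ε ^ 2) = Real.pi := by
  have h_scale (y : ℝ) : ε / ((y - c) ^ 2 + ε ^ 2) = ε⁻¹ * (1 + ((y - c) / ε) ^ 2)⁻¹ := by
    field_simp
    ring
  simp_rw [h_scale]
  rw [integral_const_mul, integral_sub_right_eq_self (fun y : ℝ => (1 + (y / ε) ^ 2)⁻¹) c,
    Measure.integral_comp_div (fun y : ℝ => (1 + y ^ 2)⁻¹) ε, integral_univ_inv_one_add_sq,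
    abs_of_pos hε, smul_eq_mul, inv_mul_cancel_left₀ hε.ne']

theorem sq_sub_one_le_sq_helmholtz {y : ℝ} (hy : 0 ≤ y) :
    (y - 1) ^ 2 ≤ (4 * Real.pi ^ 2 * (y ^ 2 - 1)) ^ 2 := by
  have h_one_le : 1 ≤ 4 * Real.pi ^ 2 * (y + 1) := by nlinarith [Real.pi_gt_three]
  calc (y - 1) ^ 2 ≤ (4 * Real.pi ^ 2 * (y + 1)) ^ 2 * (y - 1) ^ 2 :=
        le_mul_of_one_le_left (sq_nonneg _) (one_le_pow₀ h_one_le)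
    _ = (4 * Real.pi ^ 2 * (y ^ 2 - 1)) ^ 2 := by ring

theorem setIntegral_Ioc_pow_mul_poisson_helmholtz_le {ε : ℝ} (hε : 0 < ε) (m : ℕ) (R : ℝ) :
    ∫ y in Set.Ioc 0 R, y ^ m * (ε / ((4 * Real.pi ^ 2 * (y ^ 2 - 1)) ^ 2 + ε ^ 2)) ≤
      |R| ^ m * Real.pi := by
  calc ∫ y in Set.Ioc 0 R, y ^ m * (ε / ((4 * Real.pi ^ 2 * (y ^ 2 - 1)) ^ 2 + ε ^ 2))
      ≤ ∫ y in Set.Ioc 0 R, |R| ^ m * (ε / ((y - 1) ^ 2 + ε ^ 2)) := by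
        refine integral_mono_of_nonneg ?_
          ((integrable_poisson hε.ne' 1).const_mul _).integrableOn ?_
        · filter_upwards [ae_restrict_mem measurableSet_Ioc] with y hy
          have := hy.1
          positivity
        · filter_upwards [ae_restrict_mem measurableSet_Ioc] with y hy
          have hy0 := hy.1.le
          gcongr ?_ ^ m * (ε / (?_ + _))
          · exact hy.2.trans (le_abs_self R)
          · exact sq_sub_one_le_sq_helmholtz hy0
    _ ≤ ∫ y, |R| ^ m * (ε / ((y - 1) ^ 2 + ε ^ 2)) :=
        setIntegral_le_integral ((integrable_poisson hε.ne' 1).const_mul _)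
          (ae_of_all _ fun y => by positivity)
    _ = |R| ^ m * Real.pi := by rw [integral_const_mul, integral_poisson hε]

variable {E : Type*} [NormedAddCommGroup E] [InnerProductSpace ℝ E] [FiniteDimensional ℝ E]
  [MeasurableSpace E] [BorelSpace E]

theorem integrable_of_support_subset_closedBall {g : E → ℂ} {R : ℝ} (hg : MemLp g 2)
    (hgR : Function.support g ⊆ Metric.closedBall 0 R) : Integrable g := by
  have : IsFiniteMeasure (volume.restrict (Metric.closedBall (0 : E) R)) :=
    ⟨by simpa using measure_closedBall_lt_top⟩
  exact (integrableOn_iff_integrable_of_support_subset hgR).1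
    ((hg.restrict _).integrable one_le_two)

variable [Nontrivial E]

theorem exists_setIntegral_closedBall_poisson_le (R : ℝ) : ∃ C, 0 < C ∧ ∀ ε : ℝ, 0 < ε →
    ∫ ξ in Metric.closedBall (0 : E) R, ε / (helmholtzSymbol ξ ^ 2 + ε ^ 2) ≤ C := by
  refine ⟨Module.finrank ℝ E * (volume.real (Metric.ball (0 : E) 1) *
    (|R| ^ (Module.finrank ℝ E - 1) * Real.pi)) + 1, by positivity,
    fun ε hε => le_add_of_le_of_nonneg ?_ zero_le_one⟩
  set φ : ℝ → ℝ := fun r => ε / ((4 * Real.pi ^ 2 * (r ^ 2 - 1)) ^ 2 + ε ^ 2)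
  have h_radial (ξ : E) : (Metric.closedBall (0 : E) R).indicator
      (fun ξ => ε / (helmholtzSymbol ξ ^ 2 + ε ^ 2)) ξ = (Set.Iic R).indicator φ ‖ξ‖ := by
    simp [Set.indicator, φ, helmholtzSymbol]
  rw [← integral_indicator measurableSet_closedBall]
  simp_rw [h_radial]
  rw [integral_fun_norm_addHaar volume ((Set.Iic R).indicator φ), nsmul_eq_mul, smul_eq_mul]
  gcongr
  have h_indicator (r : ℝ) : r ^ (Module.finrank ℝ E - 1) • (Set.Iic R).indicator φ r =
      (Set.Iic R).indicator (fun r => r ^ (Module.finrank ℝ E - 1) * φ r) r := by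
    by_cases hr : r ∈ Set.Iic R <;> simp [hr]
  simp_rw [h_indicator]
  rw [setIntegral_indicator measurableSet_Iic, Set.Ioi_inter_Iic]
  exact setIntegral_Ioc_pow_mul_poisson_helmholtz_le hε _ R

theorem exists_integral_norm_sq_le_of_support_subset (R : ℝ) :
    ∃ C, 0 < C ∧ ∀ g : E → ℂ, MemLp g 2 → Function.support g ⊆ Metric.closedBall 0 R →
      MemLp (fun ξ => (helmholtzSymbol ξ : ℂ) * g ξ) 2 →
      (∫ ξ, ‖g ξ‖) ^ 2 ≤
        C * √((∫ ξ, ‖(helmholtzSymbol ξ : ℂ) * g ξ‖ ^ 2) * ∫ ξ, ‖g ξ‖ ^ 2) := by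
  obtain ⟨C, hC, h_poisson⟩ := exists_setIntegral_closedBall_poisson_le (E := E) R
  refine ⟨C * 2, by positivity, fun g hg hgR hxg => ?_⟩
  set χ : E → ℂ := (Metric.closedBall 0 R).indicator fun _ => 1
  have hχ : MemLp χ 2 :=
    memLp_indicator_const 2 measurableSet_closedBall _ (Or.inr measure_closedBall_lt_top.ne)
  have h_norm : MemLp (fun ξ => (‖g ξ‖ : ℂ)) 2 := hg.norm.ofReal
  have h_mul_norm : MemLp (fun ξ => (helmholtzSymbol ξ : ℂ) * (‖g ξ‖ : ℂ)) 2 :=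
    hxg.of_le ((by fun_prop : Measurable fun ξ : E =>
      (helmholtzSymbol ξ : ℂ)).aestronglyMeasurable.mul h_norm.1) (ae_of_all _ fun ξ => by simp)
  have h_pairing : ∫ ξ, (‖g ξ‖ : ℂ) * (starRingEnd ℂ) (χ ξ) = (∫ ξ, ‖g ξ‖ : ℝ) := by
    rw [← integral_complex_ofReal]
    congr with ξ
    by_cases hξ : g ξ = 0
    · simp [hξ]
    · simp [χ, hgR hξ]
  have h_mass (ε : ℝ) (hε : 0 < ε) :
      ∫ ξ, ε / (helmholtzSymbol ξ ^ 2 + ε ^ 2) * ‖χ ξ‖ ^ 2 ≤ C := by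
    refine Eq.trans_le ?_ (h_poisson ε hε)
    rw [← integral_indicator measurableSet_closedBall]
    congr with ξ
    by_cases hξ : ξ ∈ Metric.closedBall 0 R <;> simp [χ, hξ]
  rw [mul_assoc, ← div_le_iff₀' hC]
  refine le_two_mul_sqrt_of_forall_le_div_add_mul (by positivity) (by positivity) fun ε hε => ?_
  have h_weight := norm_integral_mul_conj_le_sqrt_mul_sqrt hε (by fun_prop) hχ h_norm h_mul_norm
  rw [h_pairing, Complex.norm_real, Real.norm_of_nonneg (by positivity)] at h_weight
  simp only [norm_mul, Complex.norm_real, norm_norm] at h_weight ⊢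
  rw [div_le_iff₀' hC]
  refine (pow_le_pow_left₀ (by positivity) h_weight 2).trans ?_
  rw [mul_pow, Real.sq_sqrt (by positivity), Real.sq_sqrt (by positivity), mul_comm]
  gcongr
  exact h_mass ε hε

theorem exists_eLpNorm_one_le_rpow_eLpNorm_helmholtzSymbol_mul (R : ℝ) :
    ∃ C : ℝ≥0, ∀ g : E → ℂ, MemLp g 2 → Function.support g ⊆ Metric.closedBall 0 R →
      eLpNorm g 1 volume ≤ C * (eLpNorm (fun ξ => (helmholtzSymbol ξ : ℂ) * g ξ) 2 volume *
        eLpNorm g 2 volume) ^ (1 / 2 : ℝ) := by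
  obtain ⟨C, hC, h_bound⟩ := exists_integral_norm_sq_le_of_support_subset (E := E) R
  lift C to ℝ≥0 using hC.le
  refine ⟨C ^ (1 / 2 : ℝ), fun g hg hgR => ?_⟩
  refine le_coe_mul_rpow_mul_of_ne_top (NNReal.rpow_pos hC).ne' one_half_pos (fun hb => ?_)
    fun ha => ?_
  · rw [eLpNorm_eq_zero_iff hg.1 two_ne_zero] at hb
    rw [eLpNorm_congr_ae hb, eLpNorm_zero]
  have h_memLp : MemLp (fun ξ => (helmholtzSymbol ξ : ℂ) * g ξ) 2 :=
    ⟨(continuous_helmholtzSymbol.measurable.complex_ofReal.aestronglyMeasurable).mul hg.1,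
      ha.lt_top⟩
  have h_sq := h_bound g hg hgR h_memLp
  rw [integral_norm_sq_eq_toReal_eLpNorm_sq h_memLp, integral_norm_sq_eq_toReal_eLpNorm_sq hg,
    ← mul_pow, Real.sqrt_sq (by positivity), ← ENNReal.toReal_mul] at h_sq
  rw [eLpNorm_one_eq_lintegral_enorm, ← ofReal_integral_norm_eq_lintegral_enorm
    (integrable_of_support_subset_closedBall hg hgR), ENNReal.coe_rpow_of_nonneg _ (by positivity),
    ← ENNReal.mul_rpow_of_nonneg _ _ (by positivity), one_div, ENNReal.le_rpow_inv_iff two_pos,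
    ENNReal.rpow_two, ← ENNReal.ofReal_pow (by positivity)]
  refine ENNReal.ofReal_le_of_le_toReal (h_sq.trans_eq ?_)
  rw [ENNReal.toReal_mul (a := C), ENNReal.coe_toReal]

end BoundedSupport

/-! ### The Sobolev inequality at the critical exponent -/

section Sobolev
open scoped FourierTransform NNReal ENNReal Pointwise

theorem lintegral_rpow_le_of_measure_lt_le {α β : Type*} [MeasurableSpace α] [MeasurableSpace β]
    {μ : Measure α} {ν : Measure β} {f : α → ℝ} {A : β → ℝ} (hf0 : ∀ x, 0 ≤ f x)
    (hf : AEMeasurable f μ) (hA0 : ∀ y, 0 ≤ A y) (hA : AEMeasurable A ν) {p q : ℝ} (hp : 0 < p)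
    (hqp : q < p) (h : ∀ t, 0 < t → μ {x | t < f x} ≤ ENNReal.ofReal (t ^ (-q)) * ν {y | t ≤ A y}) :
    ENNReal.ofReal (p - q) * ∫⁻ x, ENNReal.ofReal (f x ^ p) ∂μ ≤
      ENNReal.ofReal p * ∫⁻ y, ENNReal.ofReal (A y ^ (p - q)) ∂ν := by
  rw [lintegral_rpow_eq_lintegral_meas_lt_mul μ (ae_of_all _ hf0) hf hp,
    lintegral_rpow_eq_lintegral_meas_le_mul ν (ae_of_all _ hA0) hA (sub_pos.2 hqp), mul_left_comm]
  gcongr _ * (_ * ?_)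
  refine setLIntegral_mono' measurableSet_Ioi fun t (ht : 0 < t) => ?_
  calc μ {x | t < f x} * ENNReal.ofReal (t ^ (p - 1))
      ≤ ENNReal.ofReal (t ^ (-q)) * ν {y | t ≤ A y} * ENNReal.ofReal (t ^ (p - 1)) := by
        gcongr
        exact h t ht
    _ = ν {y | t ≤ A y} * ENNReal.ofReal (t ^ (p - q - 1)) := by
        rw [mul_comm (ENNReal.ofReal _), mul_assoc, ← ENNReal.ofReal_mul (by positivity),
          ← Real.rpow_add ht, show -q + (p - 1) = p - q - 1 by ring]

theorem lintegral_enorm_sq_eq_eLpNorm_sq {α F : Type*} [MeasurableSpace α] [NormedAddCommGroup F]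
    {μ : Measure α} (f : α → F) : ∫⁻ x, ‖f x‖ₑ ^ 2 ∂μ = eLpNorm f 2 μ ^ 2 := by
  simpa using (eLpNorm_nnreal_pow_eq_lintegral (μ := μ) (f := f) (p := 2) two_ne_zero).symm

variable {E : Type*} [NormedAddCommGroup E] [InnerProductSpace ℝ E] [FiniteDimensional ℝ E]
  [MeasurableSpace E] [BorelSpace E]

local notation "dimE" => (Module.finrank ℝ E : ℝ)
local notation "L²" => Lp ℂ 2 (volume : Measure E)

theorem setIntegral_ball_norm_rpow {R : ℝ} (hR : 0 < R) (r : ℝ) :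
    ∫ ξ in Metric.ball (0 : E) R, ‖ξ‖ ^ r =
      R ^ (dimE + r) * ∫ ξ in Metric.ball (0 : E) 1, ‖ξ‖ ^ r := by
  have h_scale := Measure.setIntegral_comp_smul_of_pos volume (fun ξ : E => ‖ξ‖ ^ r)
    (Metric.ball 0 1) hR
  rw [smul_unitBall_of_pos hR, eq_inv_smul_iff₀ (by positivity), smul_eq_mul] at h_scale
  rw [← h_scale, Real.rpow_add hR, Real.rpow_natCast, mul_assoc]
  simp_rw [norm_smul, Real.norm_of_nonneg hR.le, Real.mul_rpow hR.le (norm_nonneg _),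
    integral_const_mul]

/-- The measures of `{|v| > α}` are controlled by splitting the frequencies of `v` into `S`, which
contribute at most `α / 2` pointwise, and the rest, to which Chebyshev's inequality applies. -/
theorem measure_lt_norm_le_of_eLpNorm_one_fourier_restrict_le {α : ℝ} (hα : 0 < α) (v : L²)
    {S : Set E} (hS : MeasurableSet S)
    (h : eLpNorm (𝓕 v : L²) 1 (volume.restrict S) ≤ ENNReal.ofReal (α / 2)) :
    volume {x | α < ‖v x‖} ≤
      ENNReal.ofReal (α ^ (-2 : ℝ)) * (4 * ∫⁻ ξ in Sᶜ, ‖(𝓕 v : L²) ξ‖ₑ ^ 2) := by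
  obtain ⟨v₁, v₂, rfl, h_fourier₁, h_fourier₂⟩ := exists_add_eq_fourier_ae_eq_indicator v hS
  have h_sup : ∀ᵐ x, ‖v₁ x‖ ≤ α / 2 := by
    have h_top : eLpNorm v₁ ⊤ volume ≤ ENNReal.ofReal (α / 2) := by
      refine (eLpNorm_top_le_eLpNorm_one_fourier v₁).trans ?_
      rwa [eLpNorm_congr_ae h_fourier₁, eLpNorm_indicator_eq_eLpNorm_restrict hS]
    filter_upwards [enorm_ae_le_eLpNormEssSup v₁ volume] with x hx
    rw [← ENNReal.ofReal_le_ofReal_iff (by positivity), ofReal_norm]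
    exact hx.trans (by simpa using h_top)
  have h_subset : {x | α < ‖(v₁ + v₂) x‖} ≤ᵐ[volume] {x | ENNReal.ofReal (α / 2) ≤ ‖v₂ x‖ₑ} := by
    filter_upwards [h_sup, Lp.coeFn_add v₁ v₂] with x h₁ h_add (hx : α < ‖(v₁ + v₂) x‖)
    change ENNReal.ofReal (α / 2) ≤ ‖v₂ x‖ₑ
    rw [← ofReal_norm]
    rw [h_add, Pi.add_apply] at hx
    gcongr
    linarith [norm_add_le (v₁ x) (v₂ x)]
  calc volume {x | α < ‖(v₁ + v₂) x‖}
      ≤ (ENNReal.ofReal (α / 2))⁻¹ ^ 2 * eLpNorm v₂ 2 volume ^ 2 := by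
        simpa using (measure_mono_ae h_subset).trans (meas_ge_le_mul_pow_eLpNorm_enorm volume
          two_ne_zero ENNReal.ofNat_ne_top (Lp.aestronglyMeasurable v₂)
          (by simpa using hα) (by simp))
    _ = ENNReal.ofReal (α ^ (-2 : ℝ) * 4) * ∫⁻ ξ in Sᶜ, ‖(𝓕 (v₁ + v₂) : L²) ξ‖ₑ ^ 2 := by
        congr 1
        · rw [← ENNReal.ofReal_inv_of_pos (by positivity), ← ENNReal.ofReal_pow (by positivity),
            Real.rpow_neg hα.le, Real.rpow_two]
          congr 1
          field_simp
          norm_num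
        · rw [← eLpNorm_two_fourier_Lp, eLpNorm_congr_ae h_fourier₂,
            eLpNorm_indicator_eq_eLpNorm_restrict hS.compl, lintegral_enorm_sq_eq_eLpNorm_sq]
    _ = _ := by rw [ENNReal.ofReal_mul (by positivity), ENNReal.ofReal_ofNat, mul_assoc]

theorem lintegral_ofReal_rpow_mul_enorm_sq {k p σ : ℝ} (hk : 0 ≤ k) (hp : 0 < p)
    (hσ : σ = dimE * (1 / 2 - 1 / p)) {g : E → ℂ} :
    ∫⁻ ξ, ENNReal.ofReal ((k * ‖ξ‖ ^ (dimE / p)) ^ (p - 2)) * ‖g ξ‖ₑ ^ 2 =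
      ENNReal.ofReal (k ^ (p - 2)) *
        eLpNorm (fun ξ => ((‖ξ‖ ^ σ : ℝ) : ℂ) * g ξ) 2 volume ^ 2 := by
  rw [← lintegral_enorm_sq_eq_eLpNorm_sq, ← lintegral_const_mul' _ _ ENNReal.ofReal_ne_top]
  congr with ξ
  have h_exp : dimE / p * (p - 2) = σ * 2 := by
    rw [hσ]
    field_simp
  rw [enorm_mul, mul_pow, ← mul_assoc, ← ofReal_norm ((‖ξ‖ ^ σ : ℝ) : ℂ), Complex.norm_real,
    Real.norm_of_nonneg (by positivity), ← ENNReal.ofReal_pow (by positivity),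
    ← ENNReal.ofReal_mul (by positivity), Real.mul_rpow hk (by positivity),
    ← Real.rpow_mul (norm_nonneg _), h_exp, ← Real.rpow_two, ← Real.rpow_mul (norm_nonneg _)]

variable [Nontrivial E]

theorem integrableOn_ball_norm_rpow {r : ℝ} (hr : -dimE < r) (R : ℝ) :
    IntegrableOn (fun ξ : E => ‖ξ‖ ^ r) (Metric.ball 0 R) := by
  have hd : ((Module.finrank ℝ E - 1 : ℕ) : ℝ) = dimE - 1 := by
    rw [Nat.cast_sub Module.finrank_pos, Nat.cast_one]
  have h_radial : Set.EqOn (fun y : ℝ => y ^ (Module.finrank ℝ E - 1) • y ^ r)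
      (fun y => y ^ (dimE - 1 + r)) (Set.Ioo 0 R) := fun y hy => by
    simp only [Real.rpow_add hy.1, ← hd, Real.rpow_natCast, smul_eq_mul]
  rw [integrableOn_fun_norm_addHaar volume (f := fun y => y ^ r),
    integrableOn_congr_fun h_radial measurableSet_Ioo]
  exact (intervalIntegral.intervalIntegrable_rpow' (by linarith)).1.mono_set
    Set.Ioo_subset_Ioc_self

theorem eLpNorm_two_norm_rpow_restrict_ball {r : ℝ} (hr : -(dimE / 2) < r) {R : ℝ} (hR : 0 < R) :
    eLpNorm (fun ξ : E => ‖ξ‖ ^ r) 2 (volume.restrict (Metric.ball 0 R)) =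
      ENNReal.ofReal (R ^ (dimE / 2 + r) * √(∫ ξ in Metric.ball (0 : E) 1, ‖ξ‖ ^ (2 * r))) := by
  have h_sq (ξ : E) : ‖‖ξ‖ ^ r‖ ^ 2 = ‖ξ‖ ^ (2 * r) := by
    rw [Real.norm_of_nonneg (by positivity), ← Real.rpow_mul_natCast (norm_nonneg _), mul_comm]
    norm_num
  have h_memLp : MemLp (fun ξ : E => ‖ξ‖ ^ r) 2 (volume.restrict (Metric.ball 0 R)) := by
    refine (memLp_two_iff_integrable_sq_norm
      (by fun_prop : Measurable fun ξ : E => ‖ξ‖ ^ r).aestronglyMeasurable).2 ?_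
    simp_rw [h_sq]
    exact integrableOn_ball_norm_rpow (by linarith) R
  have h_eLpNorm := integral_norm_sq_eq_toReal_eLpNorm_sq h_memLp
  simp_rw [h_sq] at h_eLpNorm
  rw [← ENNReal.ofReal_toReal h_memLp.eLpNorm_ne_top, ← Real.sqrt_sq ENNReal.toReal_nonneg,
    ← h_eLpNorm, setIntegral_ball_norm_rpow hR, Real.sqrt_mul (by positivity),
    Real.sqrt_eq_rpow (R ^ _), ← Real.rpow_mul hR.le]
  congr 4
  ring

theorem exists_eLpNorm_one_restrict_ball_le {σ : ℝ} (hσ : σ < dimE / 2) :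
    ∃ C : ℝ, 0 < C ∧ ∀ (R : ℝ) (g : E → ℂ), 0 < R → AEStronglyMeasurable g →
      eLpNorm g 1 (volume.restrict (Metric.ball 0 R)) ≤
        ENNReal.ofReal (C * R ^ (dimE / 2 - σ)) *
          eLpNorm (fun ξ => ((‖ξ‖ ^ σ : ℝ) : ℂ) * g ξ) 2 volume := by
  refine ⟨√(∫ ξ in Metric.ball (0 : E) 1, ‖ξ‖ ^ (2 * -σ)) + 1, by positivity,
    fun R g hR hg => ?_⟩
  set B := volume.restrict (Metric.ball (0 : E) R)
  have h_weight : AEStronglyMeasurable (fun ξ => ((‖ξ‖ ^ σ : ℝ) : ℂ) * g ξ) :=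
    (by fun_prop : Measurable fun ξ : E => ((‖ξ‖ ^ σ : ℝ) : ℂ)).aestronglyMeasurable.mul hg
  have h_split : g =ᵐ[B] (fun ξ : E => ‖ξ‖ ^ (-σ)) • fun ξ => ((‖ξ‖ ^ σ : ℝ) : ℂ) * g ξ := by
    filter_upwards [ae_restrict_of_ae (Measure.ae_ne volume (0 : E))] with ξ (hξ : ξ ≠ 0)
    rw [Pi.smul_apply', Complex.real_smul, ← mul_assoc, ← Complex.ofReal_mul,
      ← Real.rpow_add (norm_pos_iff.2 hξ), neg_add_cancel, Real.rpow_zero,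
      Complex.ofReal_one, one_mul]
  calc eLpNorm g 1 B
      ≤ eLpNorm (fun ξ : E => ‖ξ‖ ^ (-σ)) 2 B *
          eLpNorm (fun ξ => ((‖ξ‖ ^ σ : ℝ) : ℂ) * g ξ) 2 B := by
        rw [eLpNorm_congr_ae h_split]
        exact eLpNorm_smul_le_mul_eLpNorm h_weight.restrict
          (by fun_prop : Measurable fun ξ : E => ‖ξ‖ ^ (-σ)).aestronglyMeasurable
    _ ≤ _ := by
        rw [eLpNorm_two_norm_rpow_restrict_ball (by linarith) hR, mul_comm (R ^ _),
          ← sub_eq_add_neg]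
        gcongr
        · linarith
        · exact Measure.restrict_le_self

theorem exists_measure_lt_norm_le {p σ : ℝ} (hp : 0 < p) (hσ : σ = dimE * (1 / 2 - 1 / p)) :
    ∃ k, 0 < k ∧ ∀ (v : L²) (b α : ℝ), 0 < b → 0 < α →
      eLpNorm (fun ξ => ((‖ξ‖ ^ σ : ℝ) : ℂ) * (𝓕 v : L²) ξ) 2 volume = ENNReal.ofReal b →
      volume {x | α < ‖v x‖} ≤ ENNReal.ofReal (α ^ (-2 : ℝ)) *
        (4 * ∫⁻ ξ in {ξ | α ≤ k * b * ‖ξ‖ ^ (dimE / p)}, ‖(𝓕 v : L²) ξ‖ₑ ^ 2) := by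
  have h_exp : dimE / 2 - σ = dimE / p := by
    rw [hσ]
    ring
  have hdp : 0 < dimE / p := div_pos (Nat.cast_pos.2 Module.finrank_pos) hp
  obtain ⟨C, hC, h_ball⟩ := exists_eLpNorm_one_restrict_ball_le (E := E)
    (sub_pos.1 (h_exp ▸ hdp))
  refine ⟨2 * C, by positivity, fun v b α hb hα h_eq => ?_⟩
  set R := (α / (2 * C * b)) ^ (dimE / p)⁻¹ with hR
  have h_compl : {ξ : E | α ≤ 2 * C * b * ‖ξ‖ ^ (dimE / p)} = (Metric.ball 0 R)ᶜ := by
    ext ξ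
    rw [Set.mem_compl_iff, mem_ball_zero_iff, not_lt, hR,
      Real.rpow_inv_le_iff_of_pos (by positivity) (norm_nonneg _) hdp, div_le_iff₀' (by positivity)]
    rfl
  rw [h_compl]
  refine measure_lt_norm_le_of_eLpNorm_one_fourier_restrict_le hα v measurableSet_ball
    ((h_ball R _ (by positivity) (Lp.aestronglyMeasurable _)).trans_eq ?_)
  rw [h_eq, ← ENNReal.ofReal_mul (by positivity), h_exp, hR, Real.rpow_inv_rpow (by positivity)
    hdp.ne']
  congr 1
  field_simp

theorem exists_lintegral_enorm_rpow_le {p σ : ℝ} (hp : 2 < p)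
    (hσ : σ = dimE * (1 / 2 - 1 / p)) :
    ∃ C : ℝ, 0 < C ∧ ∀ (v : L²) (b : ℝ), 0 < b →
      eLpNorm (fun ξ => ((‖ξ‖ ^ σ : ℝ) : ℂ) * (𝓕 v : L²) ξ) 2 volume = ENNReal.ofReal b →
      ∫⁻ x, ‖v x‖ₑ ^ p ≤ ENNReal.ofReal (C * b ^ p) := by
  have hp2 : 0 < p - 2 := sub_pos.2 hp
  have hp0 : 0 < p := by linarith
  obtain ⟨k, hk, h_level⟩ := exists_measure_lt_norm_le (E := E) hp0 hσ
  refine ⟨p * (4 * k ^ (p - 2)) / (p - 2), by positivity, fun v b hb h_eq => ?_⟩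
  have : Measurable (𝓕 v : L²) := (Lp.stronglyMeasurable _).measurable
  set A : E → ℝ := fun ξ => k * b * ‖ξ‖ ^ (dimE / p)
  have hA : Measurable A := by fun_prop
  set ν := (volume : Measure E).withDensity fun ξ => 4 * ‖(𝓕 v : L²) ξ‖ₑ ^ 2
  have h_density : Measurable fun ξ => 4 * ‖(𝓕 v : L²) ξ‖ₑ ^ 2 := by fun_prop
  have h_nu : ∫⁻ ξ, ENNReal.ofReal (A ξ ^ (p - 2)) ∂ν =
      ENNReal.ofReal (4 * k ^ (p - 2) * b ^ p) := by
    rw [lintegral_withDensity_eq_lintegral_mul _ h_density (by fun_prop)]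
    simp_rw [Pi.mul_apply, mul_assoc (4 : ℝ≥0∞), mul_comm (‖_‖ₑ ^ 2)]
    rw [lintegral_const_mul _ (by fun_prop), lintegral_ofReal_rpow_mul_enorm_sq (by positivity) hp0
      hσ, h_eq, ← ENNReal.ofReal_pow hb.le, ← ENNReal.ofReal_mul (by positivity),
      ← ENNReal.ofReal_ofNat, ← ENNReal.ofReal_mul (by positivity), Real.mul_rpow hk.le hb.le,
      mul_assoc (k ^ _), ← Real.rpow_two b, ← Real.rpow_add hb, sub_add_cancel, mul_assoc]
  have h_layer := lintegral_rpow_le_of_measure_lt_le (μ := volume) (ν := ν)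
    (fun x => norm_nonneg (v x)) (Lp.aestronglyMeasurable v).norm.aemeasurable
    (fun _ => by positivity) hA.aemeasurable hp0 hp fun α hα => by
      rw [withDensity_apply _ (measurableSet_le measurable_const hA),
        lintegral_const_mul _ (by fun_prop)]
      exact h_level v b α hb hα h_eq
  rw [h_nu, ← ENNReal.ofReal_mul hp0.le, mul_comm, ← ENNReal.le_div_iff_mul_le
    (Or.inl (by simpa using hp)) (Or.inl ENNReal.ofReal_ne_top), ← ENNReal.ofReal_div_of_pos hp2]
    at h_layer
  simp_rw [← ofReal_norm, ENNReal.ofReal_rpow_of_nonneg (norm_nonneg _) hp0.le]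
  refine h_layer.trans_eq ?_
  congr 1
  ring

theorem exists_eLpNorm_le_eLpNorm_norm_rpow_mul {p σ : ℝ} (hp : 2 < p)
    (hσ : σ = dimE * (1 / 2 - 1 / p)) :
    ∃ C : ℝ≥0, ∀ v : L², eLpNorm v (ENNReal.ofReal p) volume ≤
      C * eLpNorm (fun ξ => ((‖ξ‖ ^ σ : ℝ) : ℂ) * (𝓕 v : L²) ξ) 2 volume := by
  have hp0 : 0 < p := by linarith
  obtain ⟨C, hC, h_bound⟩ := exists_lintegral_enorm_rpow_le (E := E) hp hσ
  lift C to ℝ≥0 using hC.le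
  have hC' : C ^ (1 / p) ≠ 0 := (NNReal.rpow_pos hC).ne'
  refine ⟨C ^ (1 / p), fun v => ?_⟩
  set B := eLpNorm (fun ξ => ((‖ξ‖ ^ σ : ℝ) : ℂ) * (𝓕 v : L²) ξ) 2 volume with hB
  rcases eq_or_ne B ⊤ with h_top | h_top
  · rw [h_top, ENNReal.mul_top (by exact_mod_cast hC')]
    exact le_top
  rcases eq_or_ne B 0 with h_zero | h_zero
  · rw [hB, eLpNorm_eq_zero_iff (by fun_prop) two_ne_zero] at h_zero
    have h_hat : (𝓕 v : L²) =ᵐ[volume] 0 := by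
      filter_upwards [h_zero, Measure.ae_ne volume (0 : E)] with ξ hξ (hξ0 : ξ ≠ 0)
      have := norm_pos_iff.2 hξ0
      simpa [(Real.rpow_pos_of_pos this σ).ne'] using hξ
    have hv : eLpNorm v 2 volume = 0 := by
      rw [← eLpNorm_two_fourier_Lp, eLpNorm_congr_ae h_hat, eLpNorm_zero]
    rw [eLpNorm_eq_zero_iff (Lp.aestronglyMeasurable v) two_ne_zero] at hv
    rw [eLpNorm_congr_ae hv, eLpNorm_zero]
    exact zero_le
  have h_int := h_bound v B.toReal (ENNReal.toReal_pos h_zero h_top)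
    (ENNReal.ofReal_toReal h_top).symm
  rw [eLpNorm_eq_lintegral_rpow_enorm_toReal (by simpa using hp0) ENNReal.ofReal_ne_top,
    ENNReal.toReal_ofReal hp0.le, one_div, ENNReal.rpow_inv_le_iff hp0,
    ENNReal.mul_rpow_of_nonneg _ _ hp0.le]
  refine h_int.trans_eq ?_
  rw [ENNReal.ofReal_mul (NNReal.coe_nonneg C), ENNReal.ofReal_coe_nnreal,
    ← ENNReal.ofReal_rpow_of_nonneg ENNReal.toReal_nonneg hp0.le, ENNReal.ofReal_toReal h_top,
    ← ENNReal.coe_rpow_of_nonneg _ hp0.le, NNReal.rpow_inv_rpow hp0.ne']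

end Sobolev

/-! ### Interpolation between the Lebesgue norms -/

section Interpolation
open scoped ENNReal

theorem eLpNorm_le_rpow_mul_rpow {α F G H : Type*} [MeasurableSpace α] {μ : Measure α}
    [NormedAddCommGroup F] [NormedAddCommGroup G] [NormedAddCommGroup H] {f : α → F} {g : α → G}
    {h : α → H} {p q r : ℝ≥0∞} {θ : ℝ} (hθ : θ ∈ Set.Icc 0 1) (hf : AEStronglyMeasurable f μ)
    (hg : AEStronglyMeasurable g μ)
    (hpqr : r⁻¹ = ENNReal.ofReal θ * p⁻¹ + ENNReal.ofReal (1 - θ) * q⁻¹)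
    (h_le : ∀ᵐ x ∂μ, ‖h x‖ ≤ ‖f x‖ ^ θ * ‖g x‖ ^ (1 - θ)) :
    eLpNorm h r μ ≤ eLpNorm f p μ ^ θ * eLpNorm g q μ ^ (1 - θ) := by
  rcases hθ.1.eq_or_lt with rfl | hθ0
  · obtain rfl : r = q := by simpa using hpqr
    simpa using eLpNorm_mono_ae (by simpa using h_le)
  rcases hθ.2.eq_or_lt with rfl | hθ1
  · obtain rfl : r = p := by simpa using hpqr
    simpa using eLpNorm_mono_ae (by simpa using h_le)
  have hθ1' : 0 < 1 - θ := sub_pos.2 hθ1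
  have : ENNReal.HolderTriple (p / ENNReal.ofReal θ) (q / ENNReal.ofReal (1 - θ)) r := by
    refine ⟨?_⟩
    rw [ENNReal.inv_div (by simp) (by simp [hθ0]), ENNReal.inv_div (by simp) (by simp [hθ1]),
      hpqr, div_eq_mul_inv, div_eq_mul_inv]
  have hp : p / ENNReal.ofReal θ * ENNReal.ofReal θ = p :=
    ENNReal.div_mul_cancel (by simp [hθ0]) (by simp)
  have hq : q / ENNReal.ofReal (1 - θ) * ENNReal.ofReal (1 - θ) = q :=
    ENNReal.div_mul_cancel (by simp [hθ1]) (by simp)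
  calc eLpNorm h r μ ≤ eLpNorm ((fun x => ‖f x‖ ^ θ) • fun x => ‖g x‖ ^ (1 - θ)) r μ :=
        eLpNorm_mono_ae (h_le.mono fun x hx => hx.trans (Real.le_norm_self _))
    _ ≤ eLpNorm (fun x => ‖f x‖ ^ θ) (p / ENNReal.ofReal θ) μ *
          eLpNorm (fun x => ‖g x‖ ^ (1 - θ)) (q / ENNReal.ofReal (1 - θ)) μ :=
        eLpNorm_smul_le_mul_eLpNorm (hg.norm.aemeasurable.pow_const _).aestronglyMeasurable
          (hf.norm.aemeasurable.pow_const _).aestronglyMeasurable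
    _ = eLpNorm f p μ ^ θ * eLpNorm g q μ ^ (1 - θ) := by
        rw [eLpNorm_norm_rpow f hθ0, eLpNorm_norm_rpow g hθ1', hp, hq]

theorem eLpNorm_le_eLpNorm_rpow_mul_eLpNorm_rpow {α F : Type*} [MeasurableSpace α] {μ : Measure α}
    [NormedAddCommGroup F] {f : α → F} {p q r : ℝ≥0∞} {θ : ℝ} (hθ : θ ∈ Set.Icc 0 1)
    (hf : AEStronglyMeasurable f μ)
    (hpqr : r⁻¹ = ENNReal.ofReal θ * p⁻¹ + ENNReal.ofReal (1 - θ) * q⁻¹) :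
    eLpNorm f r μ ≤ eLpNorm f p μ ^ θ * eLpNorm f q μ ^ (1 - θ) :=
  eLpNorm_le_rpow_mul_rpow hθ hf hf hpqr <| ae_of_all _ fun x => by
    rw [← Real.rpow_add_of_nonneg (norm_nonneg _) hθ.1 (sub_nonneg.2 hθ.2), add_sub_cancel,
      Real.rpow_one]

theorem eLpNorm_mul_le_rpow_mul_rpow {α : Type*} [MeasurableSpace α] {μ : Measure α}
    {f m w : α → ℂ} {p : ℝ≥0∞} {θ : ℝ} (hθ : θ ∈ Set.Icc 0 1) (hf : AEStronglyMeasurable f μ)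
    (hm : AEStronglyMeasurable m μ) (hw : ∀ᵐ x ∂μ, f x ≠ 0 → ‖w x‖ ≤ ‖m x‖ ^ θ) :
    eLpNorm (fun x => w x * f x) p μ ≤
      eLpNorm (fun x => m x * f x) p μ ^ θ * eLpNorm f p μ ^ (1 - θ) := by
  refine eLpNorm_le_rpow_mul_rpow hθ (hm.mul hf) hf ?_ ?_
  · rw [← add_mul, ← ENNReal.ofReal_add hθ.1 (sub_nonneg.2 hθ.2)]
    simp
  filter_upwards [hw] with x hx
  by_cases h : f x = 0
  · rw [h, mul_zero, norm_zero]
    positivity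
  · rw [norm_mul, norm_mul, Real.mul_rpow (norm_nonneg _) (norm_nonneg _), mul_assoc,
      ← Real.rpow_add_of_nonneg (norm_nonneg _) hθ.1 (sub_nonneg.2 hθ.2), add_sub_cancel,
      Real.rpow_one]
    gcongr
    exact hx h

end Interpolation

/-! ### Boundedness of the quotient -/

section SymbolComparison

theorem mul_one_sub_le_one_sub_rpow {r s m : ℝ} (hr : 0 ≤ r) (hr1 : r ≤ 1) (hm : 0 < m)
    (hm1 : m ≤ 1) (hms : m ≤ s) : m * (1 - r) ≤ 1 - r ^ s := by
  have h_mono : r ^ s ≤ r ^ m := by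
    rcases hr.eq_or_lt with rfl | hr
    · rw [Real.zero_rpow (hm.trans_le hms).ne', Real.zero_rpow hm.ne']
    · exact Real.rpow_le_rpow_of_exponent_ge hr hr1 hms
  have h_bernoulli : r ^ m ≤ 1 + m * (r - 1) := by
    simpa using rpow_one_add_le_one_add_mul_self (s := r - 1) (by linarith) hm.le hm1
  linarith

theorem one_sub_inv_le_sub_one {t : ℝ} (ht : 1 ≤ t) : 1 - t⁻¹ ≤ t - 1 := by
  have h := mul_nonneg (sub_nonneg.2 ht) (sub_nonneg.2 (inv_le_one_of_one_le₀ ht))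
  have h_eq : (t - 1) * (1 - t⁻¹) = t - 1 - (1 - t⁻¹) := by field_simp
  linarith

theorem mul_sub_one_le_mul_rpow_sub_one {r R s m : ℝ} (hr : 1 ≤ r) (hrR : r ≤ R) (hm : 0 < m)
    (hm1 : m ≤ 1) (hms : m ≤ s) : m * (r - 1) ≤ R * (r ^ s - 1) := by
  have hr0 : 0 < r := one_pos.trans_le hr
  have h_inv : m * (1 - r⁻¹) ≤ 1 - (r ^ s)⁻¹ := by
    rw [← Real.inv_rpow hr0.le]
    exact mul_one_sub_le_one_sub_rpow (inv_nonneg.2 hr0.le) (inv_le_one_of_one_le₀ hr) hm hm1 hms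
  have h_one : 1 ≤ r ^ s := Real.one_le_rpow hr (hm.le.trans hms)
  calc m * (r - 1) = r * (m * (1 - r⁻¹)) := by field_simp
    _ ≤ r * (r ^ s - 1) := by
        gcongr r * ?_
        exact h_inv.trans (one_sub_inv_le_sub_one h_one)
    _ ≤ R * (r ^ s - 1) := mul_le_mul_of_nonneg_right hrR (sub_nonneg.2 h_one)

theorem exists_abs_sq_sub_one_le_mul_abs_rpow_sub_one {s R : ℝ} (hs : 0 < s) (hR : 1 ≤ R) :
    ∃ C, 0 < C ∧ ∀ r : ℝ, 0 ≤ r → r ≤ R → |r ^ 2 - 1| ≤ C * |r ^ s - 1| := by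
  have hm : 0 < min s 1 := lt_min hs one_pos
  refine ⟨(1 + R) * R / min s 1, by positivity, fun r hr hrR => ?_⟩
  rw [div_mul_eq_mul_div, le_div_iff₀ hm, mul_assoc]
  rcases le_total r 1 with hr1 | hr1
  · have h_one : 0 ≤ 1 - r ^ s := sub_nonneg.2 (Real.rpow_le_one hr hr1 hs.le)
    have h_key := mul_one_sub_le_one_sub_rpow hr hr1 hm (min_le_right _ _) (min_le_left _ _)
    rw [abs_sub_comm, abs_sub_comm (r ^ s), abs_of_nonneg (by nlinarith), abs_of_nonneg h_one]
    calc (1 - r ^ 2) * min s 1 = (1 + r) * (min s 1 * (1 - r)) := by ring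
      _ ≤ (1 + R) * (R * (1 - r ^ s)) :=
          mul_le_mul (by gcongr) (h_key.trans (le_mul_of_one_le_left h_one hR))
            (mul_nonneg hm.le (sub_nonneg.2 hr1)) (by positivity)
  · have h_one : 0 ≤ r ^ s - 1 := sub_nonneg.2 (Real.one_le_rpow hr1 hs.le)
    have h_key :=
      mul_sub_one_le_mul_rpow_sub_one hr1 hrR hm (min_le_right _ _) (min_le_left _ _)
    rw [abs_of_nonneg (by nlinarith), abs_of_nonneg h_one]
    calc (r ^ 2 - 1) * min s 1 = (1 + r) * (min s 1 * (r - 1)) := by ring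
      _ ≤ (1 + R) * (R * (r ^ s - 1)) :=
          mul_le_mul (by gcongr) h_key (mul_nonneg hm.le (sub_nonneg.2 hr1)) (by positivity)

theorem exists_rpow_le_mul_abs_rpow_sub_one {s R : ℝ} (hs : 0 < s) (hR : 1 < R) :
    ∃ C, 0 < C ∧ ∀ r : ℝ, R ≤ r → r ^ s ≤ C * |r ^ s - 1| := by
  have hRs : 1 < R ^ s := Real.one_lt_rpow hR hs
  refine ⟨R ^ s / (R ^ s - 1), div_pos (by linarith) (by linarith), fun r hr => ?_⟩
  have hRr : R ^ s ≤ r ^ s := Real.rpow_le_rpow (by linarith) hr hs.le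
  rw [abs_of_nonneg (by linarith), div_mul_eq_mul_div, le_div_iff₀ (by linarith)]
  nlinarith

end SymbolComparison

section Sufficiency
open Set
open scoped FourierTransform NNReal ENNReal

variable {E : Type*} [NormedAddCommGroup E] [InnerProductSpace ℝ E] [FiniteDimensional ℝ E]
  [MeasurableSpace E] [BorelSpace E]

local notation "L²" => Lp ℂ 2 (volume : Measure E)
local notation "dimE" => (Module.finrank ℝ E : ℝ)

theorem inv_ofReal_eq_add_of_inv_eq_add {p q r θ : ℝ} (hθ : θ ∈ Icc 0 1) (hp : 0 < p) (hq : 0 < q)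
    (hr : 0 < r) (h : r⁻¹ = θ * p⁻¹ + (1 - θ) * q⁻¹) :
    (ENNReal.ofReal r)⁻¹ = ENNReal.ofReal θ * (ENNReal.ofReal p)⁻¹ +
      ENNReal.ofReal (1 - θ) * (ENNReal.ofReal q)⁻¹ := by
  have hθ' : 0 ≤ 1 - θ := sub_nonneg.2 hθ.2
  rw [← ENNReal.ofReal_inv_of_pos hp, ← ENNReal.ofReal_inv_of_pos hq,
    ← ENNReal.ofReal_inv_of_pos hr, ← ENNReal.ofReal_mul hθ.1, ← ENNReal.ofReal_mul hθ',
    ← ENNReal.ofReal_add (mul_nonneg hθ.1 (by positivity)) (by positivity), h]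

theorem exists_eLpNorm_le_of_le_critical (hE : 1 < Module.finrank ℝ E) {p γ : ℝ} (hp : 0 < p)
    (hγ : γ ∈ Icc 0 (1 / 2)) (hγp : γ = (dimE + 1) / 2 * (1 / 2 - 1 / p)) :
    ∃ C : ℝ≥0, ∀ v : L², eLpNorm v (ENNReal.ofReal p) volume ≤
      C * (eLpNorm (fun ξ => (helmholtzSymbol ξ : ℂ) * (𝓕 v : L²) ξ) 2 volume ^ γ *
        eLpNorm (𝓕 v : L²) 2 volume ^ (1 - γ)) := by
  obtain ⟨C, h_crit⟩ := exists_eLpNorm_le_rpow_eLpNorm_helmholtzSymbol_mul hE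
  have hd : 0 < dimE - 1 := sub_pos.2 (by exact_mod_cast hE)
  have hγ2 : 2 * γ ∈ Icc 0 1 := ⟨by linarith [hγ.1], by linarith [hγ.2]⟩
  refine ⟨C ^ (2 * γ), fun v => ?_⟩
  set X := eLpNorm (fun ξ => (helmholtzSymbol ξ : ℂ) * (𝓕 v : L²) ξ) 2 volume
  set H := eLpNorm (𝓕 v : L²) 2 volume
  have h_exp := inv_ofReal_eq_add_of_inv_eq_add (r := p) hγ2
    (by positivity : 0 < 2 * (dimE + 1) / (dimE - 1)) two_pos hp (by
      rw [hγp]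
      field_simp
      ring)
  calc eLpNorm v (ENNReal.ofReal p) volume
      ≤ eLpNorm v (ENNReal.ofReal (2 * (dimE + 1) / (dimE - 1))) volume ^ (2 * γ) *
          eLpNorm v (ENNReal.ofReal 2) volume ^ (1 - 2 * γ) :=
        eLpNorm_le_eLpNorm_rpow_mul_eLpNorm_rpow hγ2 (Lp.aestronglyMeasurable v) h_exp
    _ ≤ (C * (X * H) ^ (1 / 2 : ℝ)) ^ (2 * γ) * H ^ (1 - 2 * γ) := by
        rw [ENNReal.ofReal_ofNat, ← eLpNorm_two_fourier_Lp v]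
        gcongr
        · exact hγ2.1
        · exact h_crit v
    _ = C ^ (2 * γ) * (X ^ γ * (H ^ γ * H ^ (1 - 2 * γ))) := by
        rw [ENNReal.mul_rpow_of_nonneg _ _ hγ2.1, ← ENNReal.rpow_mul,
          show 1 / 2 * (2 * γ) = γ by ring, ENNReal.mul_rpow_of_nonneg _ _ hγ.1, mul_assoc,
          mul_assoc]
    _ = (C ^ (2 * γ) : ℝ≥0) * (X ^ γ * H ^ (1 - γ)) := by
        rw [← ENNReal.rpow_add_of_nonneg _ _ hγ.1 (sub_nonneg.2 hγ2.2),
          ← ENNReal.coe_rpow_of_nonneg _ hγ2.1]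
        ring_nf

theorem exists_eLpNorm_top_le_of_bandlimited [Nontrivial E] (R : ℝ) :
    ∃ C : ℝ≥0, ∀ v : L², (∀ᵐ ξ, R < ‖ξ‖ → (𝓕 v : L²) ξ = 0) → eLpNorm v ⊤ volume ≤
      C * (eLpNorm (fun ξ => (helmholtzSymbol ξ : ℂ) * (𝓕 v : L²) ξ) 2 volume *
        eLpNorm (𝓕 v : L²) 2 volume) ^ (1 / 2 : ℝ) := by
  obtain ⟨C, h_bound⟩ := exists_eLpNorm_one_le_rpow_eLpNorm_helmholtzSymbol_mul (E := E) R
  refine ⟨C, fun v hv => ?_⟩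
  set g := (Metric.closedBall (0 : E) R).indicator (𝓕 v : L²)
  have hg : (𝓕 v : L²) =ᵐ[volume] g := by
    filter_upwards [hv] with ξ hξ
    by_cases h : ξ ∈ Metric.closedBall 0 R
    · exact (indicator_of_mem h _).symm
    · exact (hξ (by simpa using h)).trans (indicator_of_notMem h _).symm
  have hXg : (fun ξ => (helmholtzSymbol ξ : ℂ) * (𝓕 v : L²) ξ) =ᵐ[volume]
      fun ξ => (helmholtzSymbol ξ : ℂ) * g ξ := hg.mono fun ξ hξ => congrArg _ hξ
  have h_g := h_bound g ((Lp.memLp _).indicator measurableSet_closedBall) support_indicator_subset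
  rw [← eLpNorm_congr_ae hXg, ← eLpNorm_congr_ae hg, ← eLpNorm_congr_ae hg] at h_g
  exact (eLpNorm_top_le_eLpNorm_one_fourier v).trans h_g

theorem exists_eLpNorm_le_of_critical_le (hE : 1 < Module.finrank ℝ E) {p : ℝ}
    (hp : 2 * (dimE + 1) / (dimE - 1) ≤ p) (R : ℝ) :
    ∃ C : ℝ≥0, ∀ v : L², (∀ᵐ ξ, R < ‖ξ‖ → (𝓕 v : L²) ξ = 0) →
      eLpNorm v (ENNReal.ofReal p) volume ≤
        C * (eLpNorm (fun ξ => (helmholtzSymbol ξ : ℂ) * (𝓕 v : L²) ξ) 2 volume *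
          eLpNorm (𝓕 v : L²) 2 volume) ^ (1 / 2 : ℝ) := by
  have : Nontrivial E := Module.nontrivial_of_finrank_pos (one_pos.trans hE)
  obtain ⟨C₁, h_crit⟩ := exists_eLpNorm_le_rpow_eLpNorm_helmholtzSymbol_mul hE
  obtain ⟨C₂, h_top⟩ := exists_eLpNorm_top_le_of_bandlimited (E := E) R
  set q := 2 * (dimE + 1) / (dimE - 1)
  have hd : 0 < dimE - 1 := sub_pos.2 (by exact_mod_cast hE)
  have hq : 0 < q := by positivity
  have hp0 : 0 < p := hq.trans_le hp
  have hθ : q / p ∈ Icc 0 1 := ⟨by positivity, (div_le_one hp0).2 hp⟩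
  have hθ' : 0 ≤ 1 - q / p := sub_nonneg.2 hθ.2
  refine ⟨C₁ ^ (q / p) * C₂ ^ (1 - q / p), fun v hv => ?_⟩
  set M := (eLpNorm (fun ξ => (helmholtzSymbol ξ : ℂ) * (𝓕 v : L²) ξ) 2 volume *
    eLpNorm (𝓕 v : L²) 2 volume) ^ (1 / 2 : ℝ)
  have h_exp : (ENNReal.ofReal p)⁻¹ = ENNReal.ofReal (q / p) * (ENNReal.ofReal q)⁻¹ +
      ENNReal.ofReal (1 - q / p) * ⊤⁻¹ := by
    rw [ENNReal.inv_top, mul_zero, add_zero, ← ENNReal.ofReal_inv_of_pos hq,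
      ← ENNReal.ofReal_inv_of_pos hp0, ← ENNReal.ofReal_mul hθ.1]
    field_simp
  calc eLpNorm v (ENNReal.ofReal p) volume
      ≤ eLpNorm v (ENNReal.ofReal q) volume ^ (q / p) * eLpNorm v ⊤ volume ^ (1 - q / p) :=
        eLpNorm_le_eLpNorm_rpow_mul_eLpNorm_rpow hθ (Lp.aestronglyMeasurable v) h_exp
    _ ≤ (C₁ * M) ^ (q / p) * (C₂ * M) ^ (1 - q / p) := by
        gcongr
        · exact h_crit v
        · exact h_top v hv
    _ = (C₁ ^ (q / p) * C₂ ^ (1 - q / p)) * (M ^ (q / p) * M ^ (1 - q / p)) := by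
        rw [ENNReal.mul_rpow_of_nonneg _ _ hθ.1, ENNReal.mul_rpow_of_nonneg _ _ hθ']
        ring
    _ = (C₁ ^ (q / p) * C₂ ^ (1 - q / p) : ℝ≥0) * M := by
        rw [← ENNReal.rpow_add_of_nonneg _ _ hθ.1 hθ', add_sub_cancel, ENNReal.rpow_one,
          ENNReal.coe_mul, ENNReal.coe_rpow_of_nonneg _ hθ.1, ENNReal.coe_rpow_of_nonneg _ hθ']

theorem eLpNorm_helmholtzSymbol_mul_le {g : E → ℂ} {R : ℝ} (hR : 0 ≤ R)
    (hg : ∀ᵐ ξ, R < ‖ξ‖ → g ξ = 0) :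
    eLpNorm (fun ξ => (helmholtzSymbol ξ : ℂ) * g ξ) 2 volume ≤
      ENNReal.ofReal (4 * Real.pi ^ 2 * (R ^ 2 + 1)) * eLpNorm g 2 volume := by
  refine eLpNorm_le_mul_eLpNorm_of_ae_le_mul ?_ 2
  filter_upwards [hg] with ξ hξ
  rcases le_or_gt ‖ξ‖ R with h | h
  · rw [norm_mul, Complex.norm_real, helmholtzSymbol, norm_mul,
      Real.norm_of_nonneg (by positivity : (0 : ℝ) ≤ 4 * Real.pi ^ 2)]
    gcongr
    rw [Real.norm_eq_abs, abs_le]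
    constructor <;> nlinarith [norm_nonneg ξ]
  · simp [hξ h]

theorem rpow_mul_rpow_one_sub_le {X H A : ℝ≥0∞} {θ γ : ℝ} (hθ : 0 ≤ θ) (hθγ : θ ≤ γ) (hγ : γ ≤ 1)
    (hX : X ≤ A * H) : X ^ γ * H ^ (1 - γ) ≤ A ^ (γ - θ) * (X ^ θ * H ^ (1 - θ)) := by
  have hγθ : 0 ≤ γ - θ := sub_nonneg.2 hθγ
  calc X ^ γ * H ^ (1 - γ) = X ^ θ * X ^ (γ - θ) * H ^ (1 - γ) := by
        rw [← ENNReal.rpow_add_of_nonneg _ _ hθ hγθ, add_sub_cancel]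
    _ ≤ X ^ θ * (A * H) ^ (γ - θ) * H ^ (1 - γ) := by gcongr
    _ = A ^ (γ - θ) * (X ^ θ * (H ^ (γ - θ) * H ^ (1 - γ))) := by
        rw [ENNReal.mul_rpow_of_nonneg _ _ hγθ]
        ring
    _ = A ^ (γ - θ) * (X ^ θ * H ^ (1 - θ)) := by
        rw [← ENNReal.rpow_add_of_nonneg _ _ hγθ (sub_nonneg.2 hγ)]
        ring_nf

theorem exists_eLpNorm_le_of_bandlimited (hE : 1 < Module.finrank ℝ E) {p θ : ℝ} (hp : 2 < p)
    (hθ0 : 0 ≤ θ) (hθ : θ ≤ 1 / 2) (hθp : θ ≤ (dimE + 1) / 2 * (1 / 2 - 1 / p)) {R : ℝ}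
    (hR : 0 ≤ R) :
    ∃ C : ℝ≥0, ∀ v : L², (∀ᵐ ξ, R < ‖ξ‖ → (𝓕 v : L²) ξ = 0) →
      eLpNorm v (ENNReal.ofReal p) volume ≤
        C * (eLpNorm (fun ξ => (helmholtzSymbol ξ : ℂ) * (𝓕 v : L²) ξ) 2 volume ^ θ *
          eLpNorm (𝓕 v : L²) 2 volume ^ (1 - θ)) := by
  obtain ⟨γ, hγ, hθγ, C, h_bound⟩ : ∃ γ : ℝ, γ ≤ 1 / 2 ∧ θ ≤ γ ∧ ∃ C : ℝ≥0, ∀ v : L²,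
      (∀ᵐ ξ, R < ‖ξ‖ → (𝓕 v : L²) ξ = 0) → eLpNorm v (ENNReal.ofReal p) volume ≤
        C * (eLpNorm (fun ξ => (helmholtzSymbol ξ : ℂ) * (𝓕 v : L²) ξ) 2 volume ^ γ *
          eLpNorm (𝓕 v : L²) 2 volume ^ (1 - γ)) := by
    rcases le_total ((dimE + 1) / 2 * (1 / 2 - 1 / p)) (1 / 2) with h | h
    · obtain ⟨C, h_bound⟩ := exists_eLpNorm_le_of_le_critical hE (by linarith : 0 < p)
        ⟨hθ0.trans hθp, h⟩ rfl
      exact ⟨_, h, hθp, C, fun v _ => h_bound v⟩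
    · have hd : 0 < dimE - 1 := sub_pos.2 (by exact_mod_cast hE)
      have hp_crit : 2 * (dimE + 1) / (dimE - 1) ≤ p := by
        rw [div_le_iff₀ hd]
        field_simp at h
        linarith
      obtain ⟨C, h_bound⟩ := exists_eLpNorm_le_of_critical_le hE hp_crit R
      refine ⟨1 / 2, le_rfl, hθ, C, fun v hv => (h_bound v hv).trans_eq ?_⟩
      rw [ENNReal.mul_rpow_of_nonneg _ _ one_half_pos.le, sub_half]
  have hγθ : 0 ≤ γ - θ := sub_nonneg.2 hθγ
  refine ⟨C * (4 * Real.pi ^ 2 * (R ^ 2 + 1)).toNNReal ^ (γ - θ), fun v hv => ?_⟩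
  refine (h_bound v hv).trans ?_
  rw [ENNReal.coe_mul, ENNReal.coe_rpow_of_nonneg _ hγθ, mul_assoc]
  gcongr _ * ?_
  exact rpow_mul_rpow_one_sub_le hθ0 hθγ (by linarith) (eLpNorm_helmholtzSymbol_mul_le hR hv)

end Sufficiency

section FrequencySplitting
open Set
open scoped FourierTransform NNReal ENNReal

variable {E : Type*} [NormedAddCommGroup E] [InnerProductSpace ℝ E] [FiniteDimensional ℝ E]
  [MeasurableSpace E] [BorelSpace E]

local notation "L²" => Lp ℂ 2 (volume : Measure E)
local notation "dimE" => (Module.finrank ℝ E : ℝ)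

theorem exists_eLpNorm_le_rpow_mul_rpow_of_low_frequency (hE : 1 < Module.finrank ℝ E)
    {p s θ R : ℝ} (hp : 2 < p) (hs : 0 < s) (hθ0 : 0 ≤ θ) (hθ : θ ≤ 1 / 2)
    (hθp : θ ≤ (dimE + 1) / 2 * (1 / 2 - 1 / p)) (hR : 1 ≤ R) :
    ∃ C : ℝ≥0, ∀ v : L², (∀ᵐ ξ, R < ‖ξ‖ → (𝓕 v : L²) ξ = 0) →
      eLpNorm v (ENNReal.ofReal p) volume ≤
        C * (eLpNorm (fun ξ => ((‖ξ‖ ^ s - 1 : ℝ) : ℂ) * (𝓕 v : L²) ξ) 2 volume ^ θ *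
          eLpNorm (𝓕 v : L²) 2 volume ^ (1 - θ)) := by
  obtain ⟨C₁, h_bound⟩ := exists_eLpNorm_le_of_bandlimited hE hp hθ0 hθ hθp (by linarith : 0 ≤ R)
  obtain ⟨C₂, -, h_symbol⟩ := exists_abs_sq_sub_one_le_mul_abs_rpow_sub_one hs hR
  set A : ℝ := 4 * Real.pi ^ 2 * C₂
  refine ⟨C₁ * A.toNNReal ^ θ, fun v hv => (h_bound v hv).trans ?_⟩
  have h_le : eLpNorm (fun ξ => (helmholtzSymbol ξ : ℂ) * (𝓕 v : L²) ξ) 2 volume ≤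
      ENNReal.ofReal A * eLpNorm (fun ξ => ((‖ξ‖ ^ s - 1 : ℝ) : ℂ) * (𝓕 v : L²) ξ) 2 volume := by
    refine eLpNorm_le_mul_eLpNorm_of_ae_le_mul ?_ 2
    filter_upwards [hv] with ξ hξ
    rcases le_or_gt ‖ξ‖ R with h | h
    · rw [norm_mul, norm_mul, Complex.norm_real, Complex.norm_real, helmholtzSymbol, norm_mul,
        Real.norm_of_nonneg (by positivity : (0 : ℝ) ≤ 4 * Real.pi ^ 2), ← mul_assoc,
        mul_assoc (4 * Real.pi ^ 2) C₂]
      gcongr _ * ?_ * _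
      exact h_symbol _ (norm_nonneg _) h
    · simp [hξ h]
  calc _ ≤ (C₁ : ℝ≥0∞) * ((ENNReal.ofReal A *
          eLpNorm (fun ξ => ((‖ξ‖ ^ s - 1 : ℝ) : ℂ) * (𝓕 v : L²) ξ) 2 volume) ^ θ *
            eLpNorm (𝓕 v : L²) 2 volume ^ (1 - θ)) := by gcongr
    _ = _ := by
        rw [ENNReal.mul_rpow_of_nonneg _ _ hθ0, ENNReal.coe_mul, ENNReal.coe_rpow_of_nonneg _ hθ0,
          ENNReal.ofReal]
        ring

theorem exists_eLpNorm_le_rpow_mul_rpow_of_high_frequency [Nontrivial E] {p s θ R : ℝ} (hp : 2 < p)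
    (hs : 0 < s) (hθ : θ ∈ Icc 0 1) (hθp : dimE * (1 / 2 - 1 / p) ≤ s * θ) (hR : 1 < R) :
    ∃ C : ℝ≥0, ∀ v : L², (∀ᵐ ξ, ‖ξ‖ ≤ R → (𝓕 v : L²) ξ = 0) →
      eLpNorm v (ENNReal.ofReal p) volume ≤
        C * (eLpNorm (fun ξ => ((‖ξ‖ ^ s - 1 : ℝ) : ℂ) * (𝓕 v : L²) ξ) 2 volume ^ θ *
          eLpNorm (𝓕 v : L²) 2 volume ^ (1 - θ)) := by
  obtain ⟨C₁, h_sobolev⟩ := exists_eLpNorm_le_eLpNorm_norm_rpow_mul (E := E) hp rfl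
  obtain ⟨C₂, hC₂, h_symbol⟩ := exists_rpow_le_mul_abs_rpow_sub_one hs hR
  lift C₂ to ℝ≥0 using hC₂.le
  set σ := dimE * (1 / 2 - 1 / p)
  refine ⟨C₁ * C₂ ^ θ, fun v hv => (h_sobolev v).trans ?_⟩
  set D := eLpNorm (fun ξ => ((‖ξ‖ ^ s - 1 : ℝ) : ℂ) * (𝓕 v : L²) ξ) 2 volume with hD
  have h_holder : eLpNorm (fun ξ => ((‖ξ‖ ^ σ : ℝ) : ℂ) * (𝓕 v : L²) ξ) 2 volume ≤
      eLpNorm (fun ξ => ((C₂ * (‖ξ‖ ^ s - 1) : ℝ) : ℂ) * (𝓕 v : L²) ξ) 2 volume ^ θ *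
        eLpNorm (𝓕 v : L²) 2 volume ^ (1 - θ) := by
    have h_meas : Measurable fun ξ : E => ((C₂ * (‖ξ‖ ^ s - 1) : ℝ) : ℂ) := by fun_prop
    refine eLpNorm_mul_le_rpow_mul_rpow hθ (by fun_prop) h_meas.aestronglyMeasurable ?_
    filter_upwards [hv] with ξ hξ hξ0
    have h : R < ‖ξ‖ := not_le.1 fun h => hξ0 (hξ h)
    rw [Complex.norm_real, Complex.norm_real, Real.norm_of_nonneg (by positivity), norm_mul,
      Real.norm_of_nonneg C₂.coe_nonneg, Real.norm_eq_abs]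
    calc ‖ξ‖ ^ σ ≤ (‖ξ‖ ^ s) ^ θ := by
          rw [← Real.rpow_mul (norm_nonneg _)]
          exact Real.rpow_le_rpow_of_exponent_le (hR.trans h).le hθp
      _ ≤ (C₂ * |‖ξ‖ ^ s - 1|) ^ θ := Real.rpow_le_rpow (by positivity) (h_symbol _ h.le) hθ.1
  have h_scale : eLpNorm (fun ξ => ((C₂ * (‖ξ‖ ^ s - 1) : ℝ) : ℂ) * (𝓕 v : L²) ξ) 2 volume =
      C₂ * D := by
    simp_rw [Complex.ofReal_mul, mul_assoc]
    exact (eLpNorm_const_smul ((C₂ : ℝ) : ℂ) _ 2 volume).trans (by simp [hD, enorm_eq_nnnorm])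
  rw [h_scale, ENNReal.mul_rpow_of_nonneg _ _ hθ.1] at h_holder
  rw [ENNReal.coe_mul, ENNReal.coe_rpow_of_nonneg _ hθ.1, mul_assoc, ← mul_assoc (_ ^ θ)]
  gcongr

theorem eLpNorm_mul_le_of_ae_eq_indicator {α : Type*} [MeasurableSpace α] {μ : Measure α}
    {f g : α → ℂ} {S : Set α} (h : f =ᵐ[μ] S.indicator g) (m : α → ℂ) (p : ℝ≥0∞) :
    eLpNorm (fun x => m x * f x) p μ ≤ eLpNorm (fun x => m x * g x) p μ := by
  refine eLpNorm_mono_ae (h.mono fun x hx => ?_)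
  rw [hx, norm_mul, norm_mul]
  gcongr
  exact norm_indicator_le_norm_self _ _

theorem exists_eLpNorm_le_rpow_mul_rpow (hE : 1 < Module.finrank ℝ E) {p s θ : ℝ} (hp : 2 < p)
    (hs : 0 < s) (hθ0 : 0 ≤ θ) (hθ : θ ≤ 1 / 2) (hθ_low : θ ≤ (dimE + 1) / 2 * (1 / 2 - 1 / p))
    (hθ_high : dimE * (1 / 2 - 1 / p) ≤ s * θ) :
    ∃ C : ℝ≥0, ∀ v : L², eLpNorm v (ENNReal.ofReal p) volume ≤
      C * (eLpNorm (fun ξ => ((‖ξ‖ ^ s - 1 : ℝ) : ℂ) * (𝓕 v : L²) ξ) 2 volume ^ θ *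
        eLpNorm (𝓕 v : L²) 2 volume ^ (1 - θ)) := by
  have : Nontrivial E := Module.nontrivial_of_finrank_pos (one_pos.trans hE)
  have hθ1 : 0 ≤ 1 - θ := by linarith
  obtain ⟨C₁, h_low⟩ :=
    exists_eLpNorm_le_rpow_mul_rpow_of_low_frequency hE hp hs hθ0 hθ hθ_low one_le_two
  obtain ⟨C₂, h_high⟩ := exists_eLpNorm_le_rpow_mul_rpow_of_high_frequency (E := E) hp hs
    ⟨hθ0, by linarith⟩ hθ_high one_lt_two
  refine ⟨C₁ + C₂, fun v => ?_⟩
  obtain ⟨v₁, v₂, h_add, hv₁, hv₂⟩ := exists_add_eq_fourier_ae_eq_indicator v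
    (measurableSet_closedBall (x := (0 : E)) (ε := 2))
  have h_zero₁ : ∀ᵐ ξ, 2 < ‖ξ‖ → (𝓕 v₁ : L²) ξ = 0 := by
    filter_upwards [hv₁] with ξ hξ h
    rw [hξ, indicator_of_notMem (by simpa using h)]
  have h_zero₂ : ∀ᵐ ξ, ‖ξ‖ ≤ 2 → (𝓕 v₂ : L²) ξ = 0 := by
    filter_upwards [hv₂] with ξ hξ h
    rw [hξ, indicator_of_notMem (by simpa using h)]
  calc eLpNorm v (ENNReal.ofReal p) volume
      = eLpNorm ((v₁ : E → ℂ) + (v₂ : E → ℂ)) (ENNReal.ofReal p) volume := by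
        rw [← h_add, eLpNorm_congr_ae (Lp.coeFn_add v₁ v₂)]
    _ ≤ eLpNorm v₁ (ENNReal.ofReal p) volume + eLpNorm v₂ (ENNReal.ofReal p) volume :=
        eLpNorm_add_le (Lp.aestronglyMeasurable _) (Lp.aestronglyMeasurable _)
          (by rw [ENNReal.one_le_ofReal]; linarith)
    _ ≤ _ := by
        rw [ENNReal.coe_add, add_mul]
        gcongr
        · refine (h_low v₁ h_zero₁).trans ?_
          gcongr _ * (?_ ^ θ * ?_ ^ (1 - θ))
          exacts [eLpNorm_mul_le_of_ae_eq_indicator hv₁ _ 2,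
            (eLpNorm_congr_ae hv₁).trans_le (eLpNorm_indicator_le _)]
        · refine (h_high v₂ h_zero₂).trans ?_
          gcongr _ * (?_ ^ θ * ?_ ^ (1 - θ))
          exacts [eLpNorm_mul_le_of_ae_eq_indicator hv₂ _ 2,
            (eLpNorm_congr_ae hv₂).trans_le (eLpNorm_indicator_le _)]

end FrequencySplitting

section SobolevSpace
open scoped FourierTransform

variable {N : ℕ} {s : ℝ}

theorem one_le_rpow_one_add_norm_sq {E : Type*} [NormedAddCommGroup E] (hs : 0 ≤ s) (ξ : E) :
    1 ≤ (1 + ‖ξ‖ ^ 2) ^ (s / 2) :=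
  Real.one_le_rpow (le_add_of_nonneg_right (sq_nonneg _)) (by positivity)

theorem Hs.aestronglyMeasurable_hat (U : Hs N s) : AEStronglyMeasurable U.hat volume := by
  have h_weight : Measurable fun ξ : Esp N => (((1 + ‖ξ‖ ^ 2) ^ (s / 2) : ℝ) : ℂ)⁻¹ := by fun_prop
  refine (h_weight.aestronglyMeasurable.mul U.hat_mem.1).congr (ae_of_all _ fun ξ => ?_)
  have h_pos : 0 < (1 + ‖ξ‖ ^ 2) ^ (s / 2) := by positivity
  exact inv_mul_cancel_left₀ (Complex.ofReal_ne_zero.2 h_pos.ne') _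

theorem Hs.memLp_hat (hs : 0 ≤ s) (U : Hs N s) : MemLp U.hat 2 := by
  refine U.hat_mem.of_le U.aestronglyMeasurable_hat (ae_of_all _ fun ξ => ?_)
  rw [norm_mul, Complex.norm_real]
  exact le_mul_of_one_le_left (norm_nonneg _)
    ((one_le_rpow_one_add_norm_sq hs ξ).trans (Real.le_norm_self _))

theorem Hs.fourier_toLp_ae_eq_hat (hs : 0 ≤ s) (U : Hs N s) :
    (𝓕 (U.u_mem.toLp U.u) : Lp ℂ 2 (volume : Measure (Esp N))) =ᵐ[volume] U.hat :=
  fourier_toLp_ae_eq_of_integral_mul_eq U.u_mem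
    ((U.memLp_hat hs).locallyIntegrable one_le_two) U.fourier_spec

theorem Hs.eLpNorm_u_eq_eLpNorm_hat (hs : 0 ≤ s) (U : Hs N s) :
    eLpNorm U.u 2 volume = eLpNorm U.hat 2 volume := by
  rw [← eLpNorm_congr_ae (U.fourier_toLp_ae_eq_hat hs), eLpNorm_two_fourier_Lp,
    eLpNorm_congr_ae U.u_mem.coeFn_toLp]

theorem exists_Qquot_le (hN : 2 ≤ N) {p κ : ℝ} (hp : 2 < p) (hs : 0 < s) (hκ : 1 / 2 ≤ κ)
    (hκ1 : κ ≤ 1) (hκ_high : N / s * (1 / 2 - 1 / p) ≤ 1 - κ)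
    (hκ_low : 1 - κ ≤ ((N : ℝ) + 1) / 2 * (1 / 2 - 1 / p)) :
    ∃ C : ℝ, ∀ U : Hs N s, Qquot p κ U ≤ ENNReal.ofReal C := by
  have h_dim : Module.finrank ℝ (Esp N) = N := by simp
  obtain ⟨C, h_bound⟩ := exists_eLpNorm_le_rpow_mul_rpow (E := Esp N) (by omega) hp hs
    (sub_nonneg.2 hκ1) (by linarith) (by rwa [h_dim])
    (by rwa [h_dim, ← div_le_iff₀' hs, mul_div_right_comm])
  refine ⟨C, fun U => ENNReal.div_le_of_le_mul ?_⟩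
  have h_hat := U.fourier_toLp_ae_eq_hat hs.le
  have h := h_bound (U.u_mem.toLp U.u)
  rw [eLpNorm_congr_ae U.u_mem.coeFn_toLp, eLpNorm_congr_ae h_hat,
    eLpNorm_congr_ae (h_hat.mono fun ξ hξ => congrArg _ hξ), sub_sub_cancel,
    ← U.eLpNorm_u_eq_eLpNorm_hat hs.le, mul_comm (_ ^ (1 - κ))] at h
  rwa [ENNReal.ofReal_coe_nnreal]

end SobolevSpace

/-! ### Test functions with prescribed Fourier support -/

section TestFunctions
open Set
open scoped FourierTransform NNReal ENNReal

theorem le_of_eventually_mul_rpow_le_mul_rpow {c C a b : ℝ} (hc : 0 < c)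
    (h : ∀ᶠ δ : ℝ in 𝓝[>] 0, c * δ ^ a ≤ C * δ ^ b) : b ≤ a := by
  by_contra! hab
  have h_lim : Tendsto (fun δ : ℝ => C * δ ^ (b - a)) (𝓝[>] 0) (𝓝 0) := by
    have h_cont := Real.continuousAt_rpow_const 0 (b - a) (Or.inr (sub_pos.2 hab).le)
    simpa [Real.zero_rpow (sub_pos.2 hab).ne'] using
      (h_cont.tendsto.mono_left nhdsWithin_le_nhds).const_mul C
  refine hc.not_ge (ge_of_tendsto h_lim ?_)
  filter_upwards [h, self_mem_nhdsWithin] with δ hδ (hδ0 : 0 < δ)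
  refine le_of_mul_le_mul_right (hδ.trans_eq ?_) (Real.rpow_pos_of_pos hδ0 a)
  rw [mul_assoc, ← Real.rpow_add hδ0, sub_add_cancel]

variable {E : Type*} [NormedAddCommGroup E] [InnerProductSpace ℝ E] [FiniteDimensional ℝ E]
  [MeasurableSpace E] [BorelSpace E]

-- After modulating by `ξ₀`, every phase in the defining integral lies within `1` of `0`.
theorem cos_one_mul_le_norm_fourierInv_indicator {S : Set E} (hS : MeasurableSet S)
    (hS_top : volume S ≠ ⊤) {ξ₀ x : E} (h : ∀ ξ ∈ S, |2 * Real.pi * inner ℝ x (ξ - ξ₀)| ≤ 1) :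
    Real.cos 1 * volume.real S ≤ ‖𝓕⁻ (S.indicator fun _ => (1 : ℂ)) x‖ := by
  set phase : E → ℂ := fun ξ =>
    Complex.exp ((2 * Real.pi * inner ℝ x (ξ - ξ₀) : ℝ) * Complex.I) with h_phase
  set w : ℂ := Complex.exp ((-(2 * Real.pi * inner ℝ ξ₀ x) : ℝ) * Complex.I) with hw
  have h_modulated : w * 𝓕⁻ (S.indicator fun _ => (1 : ℂ)) x = ∫ ξ in S, phase ξ := by
    rw [Real.fourierInv_eq', ← integral_const_mul, ← integral_indicator hS]
    congr 1 with ξ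
    by_cases hξ : ξ ∈ S
    · rw [indicator_of_mem hξ, indicator_of_mem hξ, smul_eq_mul, mul_one, hw, ← Complex.exp_add]
      simp only [h_phase, inner_sub_right, real_inner_comm x ξ, real_inner_comm x ξ₀]
      congr 1
      push_cast
      ring
    · simp [hξ]
  have h_int : IntegrableOn phase S := by
    have h_cont : Continuous phase := by fun_prop
    exact (integrableOn_const hS_top (C := (1 : ℝ))).mono' h_cont.aestronglyMeasurable
      (ae_of_all _ fun ξ => (Complex.norm_exp_ofReal_mul_I _).le)
  calc Real.cos 1 * volume.real S = ∫ _ in S, Real.cos 1 := by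
        rw [setIntegral_const, smul_eq_mul, mul_comm]
    _ ≤ ∫ ξ in S, (phase ξ).re := by
        refine setIntegral_mono_on (integrableOn_const hS_top) h_int.re hS fun ξ hξ => ?_
        rw [h_phase, Complex.exp_ofReal_mul_I_re, ← Real.cos_abs (2 * _ * _)]
        exact Real.cos_le_cos_of_nonneg_of_le_pi (abs_nonneg _) (by linarith [Real.pi_gt_three])
          (h ξ hξ)
    _ = (∫ ξ in S, phase ξ).re := integral_re h_int
    _ ≤ ‖w * 𝓕⁻ (S.indicator fun _ => (1 : ℂ)) x‖ := h_modulated ▸ Complex.re_le_norm _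
    _ = ‖𝓕⁻ (S.indicator fun _ => (1 : ℂ)) x‖ := by
        rw [norm_mul, hw, Complex.norm_exp_ofReal_mul_I, one_mul]

variable {N : ℕ} {s p κ : ℝ} {S : Set (Esp N)}

theorem memLp_rpow_one_add_norm_sq_mul_indicator (hS : MeasurableSet S)
    (hS_bdd : Bornology.IsBounded S) :
    MemLp (fun ξ => (((1 + ‖ξ‖ ^ 2) ^ (s / 2) : ℝ) : ℂ) * S.indicator (fun _ => 1) ξ) 2 := by
  have h_cont : Continuous fun ξ : Esp N => (((1 + ‖ξ‖ ^ 2) ^ (s / 2) : ℝ) : ℂ) :=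
    Complex.continuous_ofReal.comp
      (Continuous.rpow_const (by fun_prop) fun ξ => Or.inl (by positivity))
  obtain ⟨R, hR⟩ := hS_bdd.subset_closedBall 0
  obtain ⟨K, hK⟩ := (isCompact_closedBall (0 : Esp N) R).exists_bound_of_continuousOn
    h_cont.continuousOn
  refine (memLp_indicator_const 2 hS K (Or.inr hS_bdd.measure_lt_top.ne)).of_le
    (h_cont.aestronglyMeasurable.mul (by fun_prop (disch := assumption))) (ae_of_all _ fun ξ => ?_)
  by_cases hξ : ξ ∈ S
  · rw [indicator_of_mem hξ, indicator_of_mem hξ, mul_one]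
    exact (hK ξ (hR hξ)).trans (Real.le_norm_self K)
  · simp [hξ]

/-- The element of `H^s` whose Fourier transform is the indicator function of the bounded measurable
set `S`. Quotients of such elements give the lower bounds for `sup Q_κ`. -/
def Hs.ofFourierSupport (s : ℝ) (hS : MeasurableSet S) (hS_bdd : Bornology.IsBounded S) :
    Hs N s where
  u := 𝓕⁻ (S.indicator fun _ => (1 : ℂ))
  hat := S.indicator fun _ => 1
  u_mem := memLp_two_fourierInv
    ((integrable_indicator_iff hS).2 (integrableOn_const hS_bdd.measure_lt_top.ne))
    (memLp_indicator_const 2 hS 1 (Or.inr hS_bdd.measure_lt_top.ne))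
  hat_mem := memLp_rpow_one_add_norm_sq_mul_indicator hS hS_bdd
  fourier_spec := integral_fourierInv_mul_fourier_schwartz
    ((integrable_indicator_iff hS).2 (integrableOn_const hS_bdd.measure_lt_top.ne))

theorem Hs.eLpNorm_u_ofFourierSupport (hs : 0 ≤ s) (hS : MeasurableSet S)
    (hS_bdd : Bornology.IsBounded S) :
    eLpNorm (Hs.ofFourierSupport s hS hS_bdd).u 2 volume = volume S ^ (1 / 2 : ℝ) := by
  rw [Hs.eLpNorm_u_eq_eLpNorm_hat hs]
  change eLpNorm (S.indicator fun _ => (1 : ℂ)) 2 volume = _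
  simp [eLpNorm_indicator_const hS]

theorem Hs.nontriv_ofFourierSupport (hs : 0 ≤ s) (hS : MeasurableSet S)
    (hS_bdd : Bornology.IsBounded S) (hS0 : volume S ≠ 0) :
    (Hs.ofFourierSupport s hS hS_bdd).Nontriv := by
  intro h
  have h_norm := Hs.eLpNorm_u_ofFourierSupport hs hS hS_bdd
  rw [eLpNorm_congr_ae h, eLpNorm_zero, eq_comm, ENNReal.rpow_eq_zero_iff_of_pos one_half_pos]
    at h_norm
  exact hS0 h_norm

theorem dNorm_ofFourierSupport_le (hS : MeasurableSet S) (hS_bdd : Bornology.IsBounded S) {D : ℝ}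
    (hD : ∀ ξ ∈ S, |‖ξ‖ ^ s - 1| ≤ D) :
    dNorm (Hs.ofFourierSupport s hS hS_bdd) ≤ ENNReal.ofReal D * volume S ^ (1 / 2 : ℝ) := by
  have h_le : dNorm (Hs.ofFourierSupport s hS hS_bdd) ≤
      ENNReal.ofReal D * eLpNorm (S.indicator fun _ => (1 : ℂ)) 2 volume := by
    refine eLpNorm_le_mul_eLpNorm_of_ae_le_mul (ae_of_all _ fun ξ => ?_) 2
    change ‖((‖ξ‖ ^ s - 1 : ℝ) : ℂ) * S.indicator (fun _ => (1 : ℂ)) ξ‖ ≤ _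
    by_cases hξ : ξ ∈ S
    · simpa [hξ, ← Complex.ofReal_one, ← Complex.ofReal_sub, -Complex.ofReal_one,
        -Complex.ofReal_sub] using hD ξ hξ
    · simp [hξ]
  simpa [eLpNorm_indicator_const hS] using h_le

theorem mul_measure_rpow_le_eLpNorm_ofFourierSupport (hp : 0 < p) (hS : MeasurableSet S)
    (hS_bdd : Bornology.IsBounded S) {X : Set (Esp N)} (hX : MeasurableSet X) {ξ₀ : Esp N}
    (h : ∀ ξ ∈ S, ∀ x ∈ X, |2 * Real.pi * inner ℝ x (ξ - ξ₀)| ≤ 1) :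
    ENNReal.ofReal (Real.cos 1) * volume S * volume X ^ (1 / p) ≤
      eLpNorm (Hs.ofFourierSupport s hS hS_bdd).u (ENNReal.ofReal p) volume := by
  have hS_top : volume S ≠ ⊤ := hS_bdd.measure_lt_top.ne
  have h_nonneg : 0 ≤ Real.cos 1 * volume.real S :=
    mul_nonneg Real.cos_one_pos.le measureReal_nonneg
  calc ENNReal.ofReal (Real.cos 1) * volume S * volume X ^ (1 / p)
      = eLpNorm (X.indicator fun _ => Real.cos 1 * volume.real S) (ENNReal.ofReal p) volume := by
        rw [eLpNorm_indicator_const hX (by simpa using hp) ENNReal.ofReal_ne_top, ← ofReal_norm,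
          Real.norm_of_nonneg h_nonneg, ENNReal.ofReal_mul Real.cos_one_pos.le,
          ofReal_measureReal hS_top, ENNReal.toReal_ofReal hp.le]
    _ ≤ eLpNorm (Hs.ofFourierSupport s hS hS_bdd).u (ENNReal.ofReal p) volume := by
        refine eLpNorm_mono fun x => ?_
        by_cases hx : x ∈ X
        · rw [indicator_of_mem hx, Real.norm_of_nonneg h_nonneg]
          exact cos_one_mul_le_norm_fourierInv_indicator hS hS_top fun ξ hξ => h ξ hξ x hx
        · simp [hx]

theorem rpow_mul_dNorm_rpow_ofFourierSupport_le (hs : 0 ≤ s) (hκ : κ ≤ 1) (hS : MeasurableSet S)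
    (hS_bdd : Bornology.IsBounded S) (hS0 : volume S ≠ 0) {D : ℝ}
    (hD : ∀ ξ ∈ S, |‖ξ‖ ^ s - 1| ≤ D) :
    eLpNorm (Hs.ofFourierSupport s hS hS_bdd).u 2 volume ^ κ *
        dNorm (Hs.ofFourierSupport s hS hS_bdd) ^ (1 - κ) ≤
      ENNReal.ofReal D ^ (1 - κ) * volume S ^ (1 / 2 : ℝ) := by
  set m := volume S ^ (1 / 2 : ℝ)
  have hκ' : 0 ≤ 1 - κ := sub_nonneg.2 hκ
  have hm0 : m ≠ 0 := by simp [m, hS0]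
  have hS_top : volume S ≠ ⊤ := hS_bdd.measure_lt_top.ne
  have hm_top : m ≠ ⊤ := by finiteness
  rw [Hs.eLpNorm_u_ofFourierSupport hs]
  calc m ^ κ * dNorm (Hs.ofFourierSupport s hS hS_bdd) ^ (1 - κ)
      ≤ m ^ κ * (ENNReal.ofReal D * m) ^ (1 - κ) := by
        gcongr
        exact dNorm_ofFourierSupport_le hS hS_bdd hD
    _ = ENNReal.ofReal D ^ (1 - κ) * (m ^ κ * m ^ (1 - κ)) := by
        rw [ENNReal.mul_rpow_of_nonneg _ _ hκ', mul_left_comm]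
    _ = ENNReal.ofReal D ^ (1 - κ) * m := by
        rw [← ENNReal.rpow_add _ _ hm0 hm_top, add_sub_cancel, ENNReal.rpow_one]

theorem cos_one_mul_measureReal_rpow_le_of_Qquot_le (hs : 0 ≤ s) (hp : 0 < p) (hκ : κ ≤ 1)
    {M : ℝ≥0} (hM : ∀ U : Hs N s, U.Nontriv → Qquot p κ U ≤ M) (hS : MeasurableSet S)
    (hS_bdd : Bornology.IsBounded S) (hS0 : volume S ≠ 0) {X : Set (Esp N)} (hX : MeasurableSet X)
    {ξ₀ : Esp N} (h : ∀ ξ ∈ S, ∀ x ∈ X, |2 * Real.pi * inner ℝ x (ξ - ξ₀)| ≤ 1) {D : ℝ}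
    (hD0 : 0 ≤ D) (hD : ∀ ξ ∈ S, |‖ξ‖ ^ s - 1| ≤ D) :
    Real.cos 1 * volume.real S ^ (1 / 2 : ℝ) * volume.real X ^ (1 / p) ≤ M * D ^ (1 - κ) := by
  set U := Hs.ofFourierSupport s hS hS_bdd
  set m := volume S ^ (1 / 2 : ℝ)
  have hS_top : volume S ≠ ⊤ := hS_bdd.measure_lt_top.ne
  have hm0 : m ≠ 0 := by simp [m, hS0]
  have hm_top : m ≠ ⊤ := by finiteness
  have h_denom := rpow_mul_dNorm_rpow_ofFourierSupport_le hs hκ hS hS_bdd hS0 hD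
  have h_num := hM U (Hs.nontriv_ofFourierSupport hs hS hS_bdd hS0)
  rw [Qquot, ENNReal.div_le_iff_le_mul (Or.inr ENNReal.coe_ne_top)
    (Or.inl (ne_top_of_le_ne_top (by finiteness) h_denom))] at h_num
  have h_le : ENNReal.ofReal (Real.cos 1) * m * volume X ^ (1 / p) ≤
      M * ENNReal.ofReal D ^ (1 - κ) := by
    refine (ENNReal.mul_le_mul_iff_left hm0 hm_top).1 ?_
    calc ENNReal.ofReal (Real.cos 1) * m * volume X ^ (1 / p) * m
        = ENNReal.ofReal (Real.cos 1) * volume S * volume X ^ (1 / p) := by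
          rw [mul_right_comm, mul_assoc _ m m, ← ENNReal.rpow_add _ _ hS0 hS_top, add_halves,
            ENNReal.rpow_one]
      _ ≤ M * (ENNReal.ofReal D ^ (1 - κ) * m) :=
          (mul_measure_rpow_le_eLpNorm_ofFourierSupport hp hS hS_bdd hX h).trans
            (h_num.trans (by gcongr))
      _ = M * ENNReal.ofReal D ^ (1 - κ) * m := (mul_assoc _ _ _).symm
  have h_real := ENNReal.toReal_mono (by finiteness) h_le
  simpa [m, Measure.real, ← ENNReal.toReal_rpow, Real.cos_one_pos.le, hD0] using h_real

end TestFunctions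

/-! ### Necessity of the conditions -/

section CoordinateBoxes
open Set

variable {ι : Type*}

/-- The open box in `ℝ^ι` with centre `c` and half-widths `b`. Such boxes serve both as Fourier
supports and, with the half-widths inverted, as the sets where the test functions are large. -/
def coordBox (c : EuclideanSpace ℝ ι) (b : ι → ℝ) : Set (EuclideanSpace ℝ ι) :=
  {ξ | ∀ i, |ξ i - c i| < b i}

theorem coordBox_eq_preimage (c : EuclideanSpace ℝ ι) (b : ι → ℝ) :
    coordBox c b = WithLp.ofLp ⁻¹' univ.pi fun i => Ioo (c i - b i) (c i + b i) := by
  ext ξ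
  simp only [coordBox, abs_sub_lt_iff, mem_ofPred, mem_preimage, mem_univ_pi, mem_Ioo]
  exact forall_congr' fun i => ⟨fun h => ⟨by linarith, by linarith⟩,
    fun h => ⟨by linarith, by linarith⟩⟩

theorem measurableSet_coordBox [Countable ι] (c : EuclideanSpace ℝ ι) (b : ι → ℝ) :
    MeasurableSet (coordBox c b) := by
  rw [coordBox_eq_preimage]
  exact (WithLp.measurable_ofLp 2 _) (MeasurableSet.univ_pi fun _ => measurableSet_Ioo)

variable [Fintype ι]

theorem volume_real_coordBox (c : EuclideanSpace ℝ ι) {b : ι → ℝ} (hb : ∀ i, 0 ≤ b i) :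
    volume.real (coordBox c b) = ∏ i, (2 * b i) := by
  rw [Measure.real, coordBox_eq_preimage, (PiLp.volume_preserving_ofLp ι).measure_preimage
    (MeasurableSet.univ_pi fun _ => measurableSet_Ioo).nullMeasurableSet,
    Real.volume_pi_Ioo_toReal fun i => by linarith [hb i]]
  exact Finset.prod_congr rfl fun i _ => by ring

theorem coordBox_subset_closedBall (c : EuclideanSpace ℝ ι) (b : ι → ℝ) :
    coordBox c b ⊆ Metric.closedBall c (∑ i, b i) := by
  intro ξ hξ
  have hb : ∀ i, |(ξ - c) i| ≤ b i := fun i => (hξ i).le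
  have hb0 : ∀ i, 0 ≤ b i := fun i => (abs_nonneg _).trans (hb i)
  rw [mem_closedBall_iff_norm, EuclideanSpace.norm_eq,
    Real.sqrt_le_left (Finset.sum_nonneg fun i _ => hb0 i)]
  calc ∑ i, ‖(ξ - c) i‖ ^ 2 ≤ ∑ i, b i ^ 2 := by
        gcongr with i
        exact hb i
    _ ≤ (∑ i, b i) ^ 2 := Finset.sum_sq_le_sq_sum_of_nonneg fun i _ => hb0 i

theorem abs_inner_sub_le_of_mem_coordBox {c ξ x : EuclideanSpace ℝ ι} {b : ι → ℝ} {a : ℝ}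
    (hξ : ξ ∈ coordBox c b) (hx : x ∈ coordBox 0 fun i => a / b i) :
    |inner ℝ x (ξ - c)| ≤ Fintype.card ι * a := by
  have h_term (i : ι) : |inner ℝ (x i) ((ξ - c) i)| ≤ a := by
    have hb : 0 < b i := (abs_nonneg _).trans_lt (hξ i)
    have hxi : |x i| ≤ a / b i := by simpa using (hx i).le
    calc |inner ℝ (x i) ((ξ - c) i)| = |x i| * |ξ i - c i| := by
          rw [Real.inner_apply, abs_mul, PiLp.sub_apply]
      _ ≤ a / b i * b i := mul_le_mul hxi (hξ i).le (abs_nonneg _) ((abs_nonneg _).trans hxi)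
      _ = a := div_mul_cancel₀ a hb.ne'
  rw [PiLp.inner_apply]
  calc |∑ i, inner ℝ (x i) ((ξ - c) i)| ≤ ∑ i, |inner ℝ (x i) ((ξ - c) i)| :=
        Finset.abs_sum_le_sum_abs _ _
    _ ≤ ∑ _ : ι, a := Finset.sum_le_sum fun i _ => h_term i
    _ = Fintype.card ι * a := by simp

end CoordinateBoxes

section Necessity
open Set
open scoped NNReal

variable {N : ℕ} {s p κ : ℝ} {M : ℝ≥0}

theorem exists_mul_prod_rpow_le_of_Qquot_le (hN : 0 < N) (hs : 0 ≤ s) (hp : 0 < p) (hκ : κ ≤ 1)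
    (hM : ∀ U : Hs N s, U.Nontriv → Qquot p κ U ≤ M) :
    ∃ A : ℝ, 0 < A ∧ ∀ (c : Esp N) (b : Fin N → ℝ) (D : ℝ), (∀ i, 0 < b i) → 0 ≤ D →
      (∀ ξ ∈ coordBox c b, |‖ξ‖ ^ s - 1| ≤ D) →
        A * (∏ i, b i) ^ (1 / 2 - 1 / p) ≤ M * D ^ (1 - κ) := by
  set a : ℝ := 1 / (2 * Real.pi * N) with ha
  have ha0 : 0 < a := by positivity
  refine ⟨Real.cos 1 * (2 ^ N) ^ (1 / 2 : ℝ) * ((2 * a) ^ N) ^ (1 / p),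
    by have := Real.cos_one_pos; positivity, fun c b D hb hD0 hD => ?_⟩
  have h_prod : 0 < ∏ i, b i := Finset.prod_pos fun i _ => hb i
  have h_phase : ∀ ξ ∈ coordBox c b, ∀ x ∈ coordBox 0 fun i => a / b i,
      |2 * Real.pi * inner ℝ x (ξ - c)| ≤ 1 := by
    intro ξ hξ x hx
    rw [abs_mul, abs_of_pos Real.two_pi_pos]
    calc 2 * Real.pi * |inner ℝ x (ξ - c)| ≤ 2 * Real.pi * (N * a) := by
          gcongr
          simpa using abs_inner_sub_le_of_mem_coordBox hξ hx
      _ = 1 := by rw [ha]; field_simp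
  have h_vol : volume.real (coordBox c b) = 2 ^ N * ∏ i, b i := by
    rw [volume_real_coordBox c fun i => (hb i).le, Finset.prod_mul_distrib]
    simp
  have h_vol_dual : volume.real (coordBox (0 : Esp N) fun i => a / b i) =
      (2 * a) ^ N / ∏ i, b i := by
    rw [volume_real_coordBox 0 fun i => (div_pos ha0 (hb i)).le]
    simp [mul_div_assoc', Finset.prod_div_distrib]
  have h_vol_ne : volume (coordBox c b) ≠ 0 := fun h => by
    rw [Measure.real, h, ENNReal.toReal_zero] at h_vol
    exact (by positivity : (2 : ℝ) ^ N * ∏ i, b i ≠ 0) h_vol.symm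
  refine (le_of_eq ?_).trans (cos_one_mul_measureReal_rpow_le_of_Qquot_le hs hp hκ hM
    (measurableSet_coordBox c b)
    (Metric.isBounded_closedBall.subset (coordBox_subset_closedBall c b)) h_vol_ne
    (measurableSet_coordBox 0 _) h_phase hD0 hD)
  rw [h_vol, h_vol_dual, Real.mul_rpow (by positivity) h_prod.le,
    Real.div_rpow (by positivity) h_prod.le, Real.rpow_sub h_prod]
  ring

theorem mul_le_one_sub_of_Qquot_le (hN : 0 < N) (hs : 0 < s) (hp : 0 < p) (hκ : κ ≤ 1)
    (hM : ∀ U : Hs N s, U.Nontriv → Qquot p κ U ≤ M) :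
    N / s * (1 / 2 - 1 / p) ≤ 1 - κ := by
  obtain ⟨A, hA, h_box⟩ := exists_mul_prod_rpow_le_of_Qquot_le hN hs.le hp hκ hM
  set K : ℝ := N ^ s + 1
  suffices h : -(s * (1 - κ)) ≤ -(N * (1 / 2 - 1 / p)) by
    rw [div_mul_eq_mul_div, div_le_iff₀ hs]
    linarith
  refine le_of_eventually_mul_rpow_le_mul_rpow (C := M * K ^ (1 - κ)) hA ?_
  filter_upwards [Ioo_mem_nhdsGT one_pos] with δ ⟨hδ0, hδ1⟩
  have h_symbol : ∀ ξ ∈ coordBox (0 : Esp N) fun _ => δ⁻¹, |‖ξ‖ ^ s - 1| ≤ K * δ ^ (-s) := by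
    intro ξ hξ
    have h_norm : ‖ξ‖ ≤ N * δ⁻¹ := by simpa using coordBox_subset_closedBall _ _ hξ
    have h_rpow : ‖ξ‖ ^ s ≤ N ^ s * δ ^ (-s) := by
      rw [Real.rpow_neg_eq_inv_rpow, ← Real.mul_rpow (by positivity) (by positivity)]
      gcongr
    have h_one : 1 ≤ δ ^ (-s) :=
      Real.one_le_rpow_of_pos_of_le_one_of_nonpos hδ0 hδ1.le (neg_nonpos.2 hs.le)
    have h_nonneg : 0 ≤ ‖ξ‖ ^ s := by positivity
    rw [abs_le, add_mul, one_mul]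
    constructor <;> linarith
  have h := h_box 0 (fun _ => δ⁻¹) (K * δ ^ (-s)) (fun _ => by positivity) (by positivity) h_symbol
  rwa [Finset.prod_const, Finset.card_univ, Fintype.card_fin, ← Real.rpow_natCast,
    ← Real.rpow_mul (by positivity), ← Real.rpow_neg_eq_inv_rpow,
    Real.mul_rpow (by positivity) (by positivity), ← Real.rpow_mul hδ0.le, neg_mul, ← mul_assoc]
    at h

theorem exists_abs_rpow_sub_one_le_mul_abs_sub_one (a : ℝ) :
    ∃ C ε : ℝ, 0 < C ∧ 0 < ε ∧ ∀ t : ℝ, |t - 1| < ε → |t ^ a - 1| ≤ C * |t - 1| := by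
  obtain ⟨C, hC, h⟩ :=
    (Real.hasDerivAt_rpow_const (x := 1) (p := a) (Or.inl one_ne_zero)).isBigO_sub.exists_pos
  obtain ⟨ε, hε, h_ball⟩ := Metric.eventually_nhds_iff.1 h.bound
  exact ⟨C, ε, hC, hε, fun t ht => by simpa using h_ball (y := t) ht⟩

/-- The half-widths of the Knapp box: `δ` in the direction `i₀` and `√δ` in the other directions.
Centred at the `i₀`-th unit vector, the box stays within `O(δ)` of the unit sphere. -/
def knappWidth {ι : Type*} [DecidableEq ι] (i₀ : ι) (δ : ℝ) : ι → ℝ :=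
  Function.update (fun _ => √δ) i₀ δ

theorem knappWidth_pos {ι : Type*} [DecidableEq ι] (i₀ : ι) {δ : ℝ} (hδ : 0 < δ) (i : ι) :
    0 < knappWidth i₀ δ i := by
  rcases eq_or_ne i i₀ with rfl | hi
  · simpa [knappWidth] using hδ
  · simpa [knappWidth, hi] using hδ

theorem prod_knappWidth {ι : Type*} [Fintype ι] [DecidableEq ι] (i₀ : ι) {δ : ℝ} (hδ : 0 < δ) :
    ∏ i, knappWidth i₀ δ i = δ ^ (((Fintype.card ι : ℝ) + 1) / 2) := by
  have h_card : 0 < Fintype.card ι := Fintype.card_pos_iff.2 ⟨i₀⟩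
  simp only [knappWidth]
  rw [Finset.prod_update_of_mem (Finset.mem_univ _), Finset.prod_const, Finset.card_univ_sdiff,
    Finset.card_singleton, Real.sqrt_eq_rpow, ← Real.rpow_natCast, ← Real.rpow_mul hδ.le,
    ← Real.rpow_one_add' hδ.le, Nat.cast_pred h_card]
  · congr 1
    ring
  · positivity

theorem abs_norm_sq_sub_one_le_of_mem_knappBox {ι : Type*} [Fintype ι] [DecidableEq ι] {i₀ : ι}
    {δ : ℝ} (hδ0 : 0 ≤ δ) (hδ1 : δ ≤ 1) {ξ : EuclideanSpace ℝ ι}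
    (hξ : ξ ∈ coordBox (EuclideanSpace.single i₀ 1) (knappWidth i₀ δ)) :
    |‖ξ‖ ^ 2 - 1| ≤ (Fintype.card ι + 3) * δ := by
  have h_term (i : ι) : |ξ i ^ 2 - if i = i₀ then 1 else 0| ≤ δ + if i = i₀ then 3 * δ else 0 := by
    have h := hξ i
    rcases eq_or_ne i i₀ with rfl | hi
    · simp only [knappWidth, Function.update_self, PiLp.single_apply, if_true, abs_lt] at h ⊢
      rw [abs_le]
      constructor <;> nlinarith
    · simp only [knappWidth, Function.update_of_ne hi, PiLp.single_apply, if_neg hi, sub_zero,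
        add_zero] at h ⊢
      rw [abs_of_nonneg (sq_nonneg _), ← sq_abs, ← Real.sq_sqrt hδ0]
      gcongr
  calc |‖ξ‖ ^ 2 - 1| = |∑ i, (ξ i ^ 2 - if i = i₀ then 1 else 0)| := by
        rw [EuclideanSpace.norm_sq_eq, Finset.sum_sub_distrib]
        simp
    _ ≤ ∑ i, |ξ i ^ 2 - if i = i₀ then 1 else 0| := Finset.abs_sum_le_sum_abs _ _
    _ ≤ ∑ i, (δ + if i = i₀ then 3 * δ else 0) := Finset.sum_le_sum fun i _ => h_term i
    _ = (Fintype.card ι + 3) * δ := by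
        rw [Finset.sum_add_distrib]
        simp [add_mul]

theorem one_sub_le_mul_of_Qquot_le (hN : 0 < N) (hs : 0 ≤ s) (hp : 0 < p) (hκ : κ ≤ 1)
    (hM : ∀ U : Hs N s, U.Nontriv → Qquot p κ U ≤ M) :
    1 - κ ≤ ((N : ℝ) + 1) / 2 * (1 / 2 - 1 / p) := by
  obtain ⟨A, hA, h_box⟩ := exists_mul_prod_rpow_le_of_Qquot_le hN hs hp hκ hM
  obtain ⟨C, ε, hC, hε, h_rpow⟩ := exists_abs_rpow_sub_one_le_mul_abs_sub_one (s / 2)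
  let i₀ : Fin N := ⟨0, hN⟩
  refine le_of_eventually_mul_rpow_le_mul_rpow (C := M * (C * (N + 3)) ^ (1 - κ)) hA ?_
  filter_upwards [Ioo_mem_nhdsGT (show (0 : ℝ) < min 1 (ε / (N + 3)) by positivity)]
    with δ ⟨hδ0, hδ⟩
  obtain ⟨hδ1, hδε⟩ := lt_min_iff.1 hδ
  rw [lt_div_iff₀' (by positivity)] at hδε
  have h_symbol : ∀ ξ ∈ coordBox (EuclideanSpace.single i₀ 1) (knappWidth i₀ δ),
      |‖ξ‖ ^ s - 1| ≤ C * (N + 3) * δ := by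
    intro ξ hξ
    have h_sq : |‖ξ‖ ^ 2 - 1| ≤ (N + 3) * δ := by
      simpa using abs_norm_sq_sub_one_le_of_mem_knappBox hδ0.le hδ1.le hξ
    calc |‖ξ‖ ^ s - 1| = |(‖ξ‖ ^ 2) ^ (s / 2) - 1| := by
          rw [← Real.rpow_natCast_mul (norm_nonneg _), Nat.cast_ofNat,
            mul_div_cancel₀ s two_ne_zero]
      _ ≤ C * |‖ξ‖ ^ 2 - 1| := h_rpow _ (h_sq.trans_lt hδε)
      _ ≤ C * (N + 3) * δ := by
          rw [mul_assoc]
          gcongr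
  have h := h_box _ _ _ (knappWidth_pos i₀ hδ0) (by positivity) h_symbol
  rwa [prod_knappWidth i₀ hδ0, Fintype.card_fin, ← Real.rpow_mul hδ0.le,
    Real.mul_rpow (by positivity) hδ0.le, ← mul_assoc] at h

theorem mul_le_measureReal_shell {E : Type*} [NormedAddCommGroup E] [NormedSpace ℝ E]
    [FiniteDimensional ℝ E] [MeasurableSpace E] [BorelSpace E] [Nontrivial E] (μ : Measure E)
    [μ.IsAddHaarMeasure] {δ : ℝ} (hδ : 0 < δ) :
    μ.real (Metric.ball 0 1) * δ ≤
      μ.real (Metric.ball 0 (1 + δ) \ Metric.closedBall 0 1) := by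
  have h_dim : (1 : ℝ) ≤ Module.finrank ℝ E := by exact_mod_cast Module.finrank_pos
  have h_ball : μ.real (Metric.ball (0 : E) (1 + δ)) =
      (1 + δ) ^ Module.finrank ℝ E * μ.real (Metric.ball 0 1) := by
    rw [Measure.real, Measure.addHaar_ball _ _ (by positivity), ENNReal.toReal_mul,
      ENNReal.toReal_ofReal (by positivity), Measure.real]
  rw [measureReal_sdiff (Metric.closedBall_subset_ball (by linarith)) measurableSet_closedBall,
    Measure.addHaar_real_closedBall_eq_addHaar_real_ball, h_ball]
  have h_bernoulli := one_add_mul_le_pow (by linarith : (-2 : ℝ) ≤ δ) (Module.finrank ℝ E)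
  have h_mass : 0 ≤ μ.real (Metric.ball (0 : E) 1) := measureReal_nonneg
  nlinarith [mul_le_mul_of_nonneg_right h_dim hδ.le]

theorem exists_mul_rpow_half_le_of_Qquot_le (hN : 0 < N) (hs : 0 ≤ s) (hp : 0 < p) (hκ : κ ≤ 1)
    (hM : ∀ U : Hs N s, U.Nontriv → Qquot p κ U ≤ M) :
    ∃ A : ℝ, 0 < A ∧ ∀ δ D : ℝ, 0 < δ → δ < 1 → 0 ≤ D →
      (∀ ξ ∈ Metric.ball (0 : Esp N) (1 + δ) \ Metric.closedBall 0 1, |‖ξ‖ ^ s - 1| ≤ D) →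
        A * δ ^ (1 / 2 : ℝ) ≤ M * D ^ (1 - κ) := by
  have : NeZero N := ⟨hN.ne'⟩
  have h_cos := Real.cos_one_pos
  set r : ℝ := 1 / (4 * Real.pi) with hr
  have h_ball {ρ : ℝ} (hρ : 0 < ρ) : 0 < volume.real (Metric.ball (0 : Esp N) ρ) :=
    ENNReal.toReal_pos (Metric.measure_ball_pos volume _ hρ).ne' measure_ball_lt_top.ne
  have hω : 0 < volume.real (Metric.ball (0 : Esp N) 1) := h_ball one_pos
  have hω' : 0 < volume.real (Metric.ball (0 : Esp N) r) := h_ball (by positivity)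
  set ω := volume.real (Metric.ball (0 : Esp N) 1)
  refine ⟨Real.cos 1 * ω ^ (1 / 2 : ℝ) * volume.real (Metric.ball (0 : Esp N) r) ^ (1 / p),
    by positivity, fun δ D hδ0 hδ1 hD0 hD => ?_⟩
  set S : Set (Esp N) := Metric.ball 0 (1 + δ) \ Metric.closedBall 0 1
  have hS_vol : ω * δ ≤ volume.real S := mul_le_measureReal_shell volume hδ0
  have hS0 : volume S ≠ 0 := fun h => by
    rw [Measure.real, h, ENNReal.toReal_zero] at hS_vol
    exact hS_vol.not_gt (by positivity)
  have h_phase : ∀ ξ ∈ S, ∀ x ∈ Metric.ball (0 : Esp N) r,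
      |2 * Real.pi * inner ℝ x (ξ - 0)| ≤ 1 := by
    intro ξ hξ x hx
    have hξ2 : ‖ξ‖ ≤ 2 := by linarith [mem_ball_zero_iff.1 hξ.1]
    rw [abs_mul, abs_of_pos Real.two_pi_pos, sub_zero]
    calc 2 * Real.pi * |inner ℝ x ξ| ≤ 2 * Real.pi * (r * 2) := by
          gcongr
          exact (abs_real_inner_le_norm _ _).trans
            (mul_le_mul (mem_ball_zero_iff.1 hx).le hξ2 (norm_nonneg _) (by positivity))
      _ = 1 := by
          rw [hr]
          field_simp
          norm_num
  refine le_trans ?_ (cos_one_mul_measureReal_rpow_le_of_Qquot_le hs hp hκ hM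
    (measurableSet_ball.diff measurableSet_closedBall) (Metric.isBounded_ball.subset sdiff_subset)
    hS0 measurableSet_ball h_phase hD0 hD)
  rw [mul_right_comm, mul_assoc (Real.cos 1), ← Real.mul_rpow hω.le hδ0.le]
  gcongr

theorem half_le_of_Qquot_le (hN : 0 < N) (hs : 0 ≤ s) (hp : 0 < p) (hκ : κ ≤ 1)
    (hM : ∀ U : Hs N s, U.Nontriv → Qquot p κ U ≤ M) : 1 / 2 ≤ κ := by
  obtain ⟨A, hA, h_shell⟩ := exists_mul_rpow_half_le_of_Qquot_le hN hs hp hκ hM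
  obtain ⟨C, ε, hC, hε, h_rpow⟩ := exists_abs_rpow_sub_one_le_mul_abs_sub_one s
  suffices h : 1 - κ ≤ 1 / 2 by linarith
  refine le_of_eventually_mul_rpow_le_mul_rpow (C := M * C ^ (1 - κ)) hA ?_
  filter_upwards [Ioo_mem_nhdsGT (show (0 : ℝ) < min 1 ε by positivity)] with δ ⟨hδ0, hδ⟩
  obtain ⟨hδ1, hδε⟩ := lt_min_iff.1 hδ
  rw [mul_assoc, ← Real.mul_rpow hC.le hδ0.le]
  refine h_shell δ (C * δ) hδ0 hδ1 (by positivity) fun ξ hξ => ?_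
  have h_pos : 0 < ‖ξ‖ - 1 := sub_pos.2 (by simpa using hξ.2)
  have h_near : |‖ξ‖ - 1| < δ := by
    rw [abs_of_pos h_pos]
    linarith [mem_ball_zero_iff.1 hξ.1]
  exact (h_rpow _ (h_near.trans hδε)).trans (by gcongr)

end Necessity

/-- For `N ≥ 2`, `Q_κ` is bounded on `H^s(ℝ^N) \ {0}` if and only if
`κ ≥ 1/2` and `(N/s)(1/2 - 1/p) ≤ 1 - κ ≤ ((N+1)/2)(1/2 - 1/p)`. -/
theorem stmt2 (N : ℕ) (hN : 2 ≤ N) (s p κ : ℝ) (hs : 0 < s) (hp : 2 < p)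
    (hκ0 : 0 < κ) (hκ1 : κ < 1) :
    (⨆ (U : Hs N s) (_ : U.Nontriv), Qquot p κ U) < ⊤ ↔
      (1 / 2 ≤ κ ∧ ((N : ℝ) / s) * (1 / 2 - 1 / p) ≤ 1 - κ ∧
        1 - κ ≤ (((N : ℝ) + 1) / 2) * (1 / 2 - 1 / p)) := by
  constructor
  · intro h_bdd
    have hN0 : 0 < N := by omega
    have hp0 : 0 < p := by linarith
    lift (⨆ (U : Hs N s) (_ : U.Nontriv), Qquot p κ U) to NNReal using h_bdd.ne with M hM
    have h_le (U : Hs N s) (hU : U.Nontriv) : Qquot p κ U ≤ M :=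
      hM ▸ le_iSup₂ (f := fun (U : Hs N s) (_ : U.Nontriv) => Qquot p κ U) U hU
    exact ⟨half_le_of_Qquot_le hN0 hs.le hp0 hκ1.le h_le,
      mul_le_one_sub_of_Qquot_le hN0 hs hp0 hκ1.le h_le,
      one_sub_le_mul_of_Qquot_le hN0 hs.le hp0 hκ1.le h_le⟩
  · rintro ⟨hκ, hκ_high, hκ_low⟩
    obtain ⟨C, h_le⟩ := exists_Qquot_le hN hp hs hκ hκ1.le hκ_high hκ_low
    exact (iSup₂_le fun U _ => h_le U).trans_lt ENNReal.ofReal_lt_top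

end
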